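/- arXiv:1712.10208 — 2 statements merged into one kernel-verified Lean document; each statement's English description precedes it below -/
import Mathlib

section
/- Let d ≥ 1 be an integer, p > max{1, 2d/(d+2)}, and let q, m be reals with 0 ≤ q < σ − 1 and q < m < σ, where σ = ((p−1)d + p)/(d − p) if p < d and σ = +∞ if p ≥ d. Set γ = [p(m+1)(q+1) + (p/2 − 1)d(m+q) − dqm + (p−1)d] / (d(m−q)). For a function u : ℝ^d → ℝ define J(u) = (∫_{ℝ^d}|u|^{q+1} dx)^{(γ−p/2)/(q+1)} · (∫_{ℝ^d}‖∇u(x)‖^p dx) / (∫_{ℝ^d}|u|^{m+1} dx)^{(γ+p/2)/(m+1)}. Let 𝒜 be the class of continuously differentiable functions u : ℝ^d → ℝ of the form u(x) = f(‖x‖) with f : [0,∞) → [0,∞) nonincreasing, such that 0 < ∫|u|^{q+1} dx < ∞, 0 < ∫|u|^{m+1} dx < ∞, and ∫‖∇u(x)‖^p dx < ∞. Then there exists u₀ ∈ 𝒜 with ∫_{ℝ^d}|u₀|^{q+1} dx = ∫_{ℝ^d}|u₀|^{m+1} dx = 1, J(u₀) = ∫_{ℝ^d}‖∇u₀(x)‖^p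 dx, and J(u₀) ≤ J(u) for every u ∈ 𝒜. -/
open Filter Set Topology MeasureTheory

/-- The scaling-invariant Gagliardo-Nirenberg quotient `J(u)`. -/
noncomputable def GNquot (d : ℕ) (p q m γ : ℝ) (u : EuclideanSpace ℝ (Fin d) → ℝ) : ℝ :=
  (∫ x, |u x| ^ (q + 1)) ^ ((γ - p / 2) / (q + 1)) * (∫ x, ‖fderiv ℝ u x‖ ^ p) /
    (∫ x, |u x| ^ (m + 1)) ^ ((γ + p / 2) / (m + 1))

/-- The class `𝒜` of continuously differentiable, radially nonincreasing,
nonnegative functions with the relevant finite and positive integrals. -/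
def RadialClass (d : ℕ) (p q m : ℝ) (u : EuclideanSpace ℝ (Fin d) → ℝ) : Prop :=
  ContDiff ℝ 1 u ∧
  (∃ f : ℝ → ℝ, (∀ r, 0 ≤ r → 0 ≤ f r) ∧ AntitoneOn f (Set.Ici 0) ∧ ∀ x, u x = f ‖x‖) ∧
  (0 < ∫ x, |u x| ^ (q + 1)) ∧ MeasureTheory.Integrable (fun x => |u x| ^ (q + 1)) ∧
  (0 < ∫ x, |u x| ^ (m + 1)) ∧ MeasureTheory.Integrable (fun x => |u x| ^ (m + 1)) ∧
  MeasureTheory.Integrable (fun x => ‖fderiv ℝ u x‖ ^ p)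

noncomputable def nu (c D : ℝ) : Measure ℝ :=
  (volume.restrict (Ioi 0)).withDensity (fun r => ENNReal.ofReal (c * r ^ (D - 1)))

lemma nu_meas (c D : ℝ) : Measurable (fun r : ℝ => ENNReal.ofReal (c * r ^ (D - 1))) := by
  fun_prop

lemma integral_nu {c D : ℝ} (hc : 0 < c) (F : ℝ → ℝ) :
    ∫ r, F r ∂(nu c D) = ∫ r in Ioi (0:ℝ), c * r ^ (D - 1) * F r := by
  rw [nu, integral_withDensity_eq_integral_toReal_smul (nu_meas c D) (by simp)]
  refine setIntegral_congr_fun measurableSet_Ioi fun r hr => ?_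
  have hr : 0 < r := hr
  simp only [smul_eq_mul]
  rw [ENNReal.toReal_ofReal (by positivity)]

lemma integrable_nu {c D : ℝ} (hc : 0 < c) {F : ℝ → ℝ} :
    Integrable F (nu c D) ↔ IntegrableOn (fun r => c * r ^ (D - 1) * F r) (Ioi 0) := by
  rw [nu, integrable_withDensity_iff_integrable_smul' (nu_meas c D) (by simp)]
  refine integrableOn_congr_fun (fun r hr => ?_) measurableSet_Ioi
  have hr : 0 < r := hr
  simp only [smul_eq_mul]
  rw [ENNReal.toReal_ofReal (by positivity)]

lemma ae_nu {c D : ℝ} (hc : 0 < c) {P : ℝ → Prop} :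
    (∀ᵐ r ∂(nu c D), P r) ↔ ∀ᵐ r ∂(volume.restrict (Ioi (0:ℝ))), P r := by
  rw [nu, ae_withDensity_iff (nu_meas c D), ae_restrict_iff' measurableSet_Ioi,
    ae_restrict_iff' measurableSet_Ioi]
  refine eventually_congr (Eventually.of_forall fun r => ?_)
  refine forall_congr' fun hr => ?_
  have hr : 0 < r := hr
  have : ENNReal.ofReal (c * r ^ (D - 1)) ≠ 0 := by
    rw [Ne, ENNReal.ofReal_eq_zero, not_le]; positivity
  simp [this]

lemma ae_nu_of_pos {c D : ℝ} (hc : 0 < c) {P : ℝ → Prop} (h : ∀ r, 0 < r → P r) :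
    ∀ᵐ r ∂(nu c D), P r :=
  (ae_nu hc).2 ((ae_restrict_iff' measurableSet_Ioi).2 (Eventually.of_forall fun r hr => h r hr))

lemma nu_ac (c D : ℝ) : nu c D ≪ volume.restrict (Ioi 0) := withDensity_absolutelyContinuous _ _

lemma ac_nu {c D : ℝ} (hc : 0 < c) : volume.restrict (Ioi 0) ≪ nu c D := by
  refine Measure.AbsolutelyContinuous.mk fun s _ h => ?_
  have h1 : ∀ᵐ r ∂(nu c D), r ∉ s := by simpa [ae_iff] using h
  exact measure_eq_zero_iff_ae_notMem.2 ((ae_nu hc).1 h1)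

lemma nu_scale_int {c D : ℝ} (hc : 0 < c) (F : ℝ → ℝ) {μ : ℝ} (hμ : 0 < μ) :
    ∫ r, F (μ * r) ∂(nu c D) = μ ^ (-D) * ∫ r, F r ∂(nu c D) := by
  rw [integral_nu hc, integral_nu hc]
  have h := integral_comp_mul_left_Ioi (fun r => c * r ^ (D - 1) * F r) 0 hμ
  rw [mul_zero] at h
  have e : ∀ r ∈ Ioi (0:ℝ), c * r ^ (D-1) * F (μ * r) =
      μ ^ (1 - D) * (c * (μ * r) ^ (D - 1) * F (μ * r)) := by
    intro r hr
    have hr : 0 < r := hr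
    rw [Real.mul_rpow hμ.le hr.le]
    have : μ ^ (1 - D) * μ ^ (D - 1) = 1 := by
      rw [← Real.rpow_add hμ]; simp
    linear_combination (-(c * r ^ (D-1) * F (μ * r))) * this
  rw [setIntegral_congr_fun measurableSet_Ioi e, integral_const_mul, h, smul_eq_mul, ← mul_assoc]
  congr 1
  rw [← Real.rpow_neg_one, ← Real.rpow_add hμ]; congr 1; ring

lemma nu_scale_integrable {c D : ℝ} (hc : 0 < c) {F : ℝ → ℝ} {μ : ℝ} (hμ : 0 < μ)
    (h : Integrable F (nu c D)) : Integrable (fun r => F (μ * r)) (nu c D) := by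
  rw [integrable_nu hc] at h ⊢
  have h1 := (integrableOn_Ioi_comp_mul_left_iff (fun r => c * r ^ (D - 1) * F r) 0 hμ).2
    (by simpa using h)
  refine (h1.const_mul (μ ^ (1 - D))).congr ?_
  refine (ae_restrict_iff' measurableSet_Ioi).2 (Eventually.of_forall fun r hr => ?_)
  have hr : 0 < r := hr
  simp only
  rw [Real.mul_rpow hμ.le hr.le]
  have : μ ^ (1 - D) * μ ^ (D - 1) = 1 := by
    rw [← Real.rpow_add hμ]; simp
  linear_combination ((c * r ^ (D-1) * F (μ * r))) * this

/-- indicator of powers near zero -/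
lemma nu_pow_zero {c D s R : ℝ} (hc : 0 < c) (hR : 0 < R) (hs : s < D) :
    Integrable ((Ioc 0 R).indicator (fun r => r ^ (-s))) (nu c D) := by
  rw [integrable_nu hc]
  have h0 : IntegrableOn (fun r : ℝ => r ^ (D - 1 - s)) (Ioc 0 R) := by
    have := intervalIntegral.intervalIntegrable_rpow' (a := 0) (b := R) (r := D - 1 - s) (by linarith)
    exact (intervalIntegrable_iff_integrableOn_Ioc_of_le hR.le).1 this
  have h1 : IntegrableOn (fun r : ℝ => c * r ^ (D - 1) * r ^ (-s)) (Ioc 0 R) := by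
    refine IntegrableOn.congr_fun (h0.const_mul c) (fun r hr => ?_) measurableSet_Ioc
    rw [mul_assoc, ← Real.rpow_add hr.1]; ring_nf
  have h2 : Integrable ((Ioc 0 R).indicator (fun r : ℝ => c * r ^ (D - 1) * r ^ (-s))) :=
    h1.integrable_indicator measurableSet_Ioc
  refine h2.integrableOn.congr_fun (fun r _ => ?_) measurableSet_Ioi
  by_cases h : r ∈ Ioc 0 R <;> simp [h]

lemma nu_pow_inf {c D s R : ℝ} (hc : 0 < c) (hR : 0 < R) (hs : D < s) :
    Integrable ((Ioi R).indicator (fun r => r ^ (-s))) (nu c D) := by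
  rw [integrable_nu hc]
  have h0 : IntegrableOn (fun r : ℝ => r ^ (D - 1 - s)) (Ioi R) :=
    (integrableOn_Ioi_rpow_iff hR).2 (by linarith)
  have h1 : IntegrableOn (fun r : ℝ => c * r ^ (D - 1) * r ^ (-s)) (Ioi R) := by
    refine IntegrableOn.congr_fun (h0.const_mul c) (fun r hr => ?_) measurableSet_Ioi
    rw [mul_assoc, ← Real.rpow_add (hR.trans hr)]; ring_nf
  have h2 : Integrable ((Ioi R).indicator (fun r : ℝ => c * r ^ (D - 1) * r ^ (-s))) :=
    h1.integrable_indicator measurableSet_Ioi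
  refine h2.integrableOn.congr_fun (fun r _ => ?_) measurableSet_Ioi
  by_cases h : r ∈ Ioi R <;> simp [h]

lemma nu_const_zero {c D K R : ℝ} (hc : 0 < c) (hD : 1 ≤ D) (hR : 0 < R) :
    Integrable ((Ioc 0 R).indicator (fun _ => K)) (nu c D) := by
  have := (nu_pow_zero (c := c) (D := D) (s := 0) hc hR (by linarith)).const_mul K
  refine this.congr (Eventually.of_forall fun r => ?_)
  by_cases h : r ∈ Ioc 0 R <;> simp [h]

structure Par (c D p q m a b : ℝ) : Prop where
  hc : 0 < c
  hD : 1 ≤ D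
  hp : 1 < p
  hq : 0 ≤ q
  hm : q < m
  ha : 0 < a
  hb : 0 < b
  s1 : a * (q + 1) + p = b * (m + 1)
  s2 : D * b + p = D * a + D

/-- The exponent used near zero. -/
structure Alp (D p m al : ℝ) : Prop where
  pos : 0 < al
  h1 : D ≤ (1 + al) * p
  h2 : (m + 1) * al < D
  h3 : (m - p + 1) * al < p

structure Adm (c D p q m : ℝ) (f g : ℝ → ℝ) : Prop where
  fnn : ∀ r, 0 < r → 0 ≤ f r
  gnn : ∀ r, 0 ≤ g r
  gm : Measurable g
  gi : ∀ r s, 0 < r → r ≤ s → IntegrableOn g (Ioc r s)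
  eq : ∀ r s, 0 < r → r ≤ s → f r - f s = ∫ t in Ioc r s, g t
  iq : Integrable (fun r => f r ^ (q + 1)) (nu c D)
  im : Integrable (fun r => f r ^ (m + 1)) (nu c D)
  ip : Integrable (fun r => g r ^ p) (nu c D)

noncomputable def In (c D : ℝ) (f : ℝ → ℝ) (n : ℝ) : ℝ := ∫ r, f r ^ n ∂(nu c D)

noncomputable def JJ (c D p q m a b : ℝ) (f g : ℝ → ℝ) : ℝ :=
  In c D f (q + 1) ^ a * In c D g p / In c D f (m + 1) ^ b

lemma In_nonneg {c D : ℝ} (hc : 0 < c) {f : ℝ → ℝ} (hf : ∀ r, 0 < r → 0 ≤ f r) (n : ℝ) :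
    0 ≤ In c D f n :=
  integral_nonneg_of_ae (ae_nu_of_pos hc fun r hr => Real.rpow_nonneg (hf r hr) _)

section
variable {c D p q m : ℝ} {f g : ℝ → ℝ}

lemma Adm.anti (h : Adm c D p q m f g) : AntitoneOn f (Ioi 0) := by
  intro r hr s hs hrs
  have := h.eq r s hr hrs
  have h2 : 0 ≤ ∫ t in Ioc r s, g t := integral_nonneg h.gnn
  linarith

lemma meas_of_anti (hf : AntitoneOn f (Ioi 0)) : AEMeasurable f (nu c D) :=
  (aemeasurable_restrict_of_antitoneOn measurableSet_Ioi hf).mono_ac (nu_ac c D)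

lemma Adm.fm (h : Adm c D p q m f g) : AEMeasurable f (nu c D) := meas_of_anti h.anti

end

section
variable {c D p q m : ℝ} {f g : ℝ → ℝ}

lemma conv_pow {x y t n : ℝ} (hx : 0 ≤ x) (hy : 0 ≤ y) (ht : 0 ≤ t) (ht1 : t ≤ 1) (hn : 1 ≤ n) :
    ((1 - t) * x + t * y) ^ n ≤ (1 - t) * x ^ n + t * y ^ n := by
  have := (convexOn_rpow hn).2 (show x ∈ Ici 0 from hx) (show y ∈ Ici 0 from hy)
    (show 0 ≤ 1 - t by linarith) ht (by ring)
  simpa using this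

lemma dich {x K p : ℝ} (hx : 0 ≤ x) (hK : 0 < K) (hp : 1 < p) :
    x ≤ K + K ^ (1 - p) * x ^ p := by
  rcases le_total x K with h | h
  · have : 0 ≤ K ^ (1 - p) * x ^ p := by positivity
    linarith
  · have hx0 : 0 < x := hK.trans_le h
    have h1 : K ^ (p - 1) ≤ x ^ (p - 1) := Real.rpow_le_rpow hK.le h (by linarith)
    have h2 : K ^ (1 - p) * K ^ (p - 1) = 1 := by rw [← Real.rpow_add hK]; simp
    have h3 : x ^ p = x ^ (p - 1) * x := by
      rw [← Real.rpow_add_one hx0.ne']; ring_nf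
    have h4 : 0 < K ^ (1 - p) := by positivity
    have h5 : 1 ≤ K ^ (1 - p) * x ^ (p - 1) := by
      calc (1:ℝ) = K ^ (1 - p) * K ^ (p - 1) := h2.symm
        _ ≤ _ := by gcongr
    rw [h3, ← mul_assoc]
    nlinarith

lemma nu_ball_int (hc : 0 < c) (hD : 1 ≤ D) {r : ℝ} (hr : 0 < r) (K : ℝ) :
    ∫ t, (Ioc 0 r).indicator (fun _ => K) t ∂(nu c D) = K * (c * r ^ D / D) := by
  rw [integral_nu hc]
  have e : ∀ t ∈ Ioi (0:ℝ), c * t ^ (D - 1) * (Ioc 0 r).indicator (fun _ => K) t =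
      (Ioc 0 r).indicator (fun t => K * c * t ^ (D - 1)) t := by
    intro t _
    by_cases h : t ∈ Ioc 0 r <;> simp [h]; ring
  rw [setIntegral_congr_fun measurableSet_Ioi e, setIntegral_indicator measurableSet_Ioc,
    inter_eq_right.2 (fun t ht => ht.1), integral_const_mul,
    ← intervalIntegral.integral_of_le hr.le, integral_rpow (Or.inl (by linarith))]
  rw [Real.zero_rpow (by linarith)]
  simp; ring

lemma Adm.bound_inf (h : Adm c D p q m f g) (hc : 0 < c) (hD : 1 ≤ D) (hq : 0 ≤ q) {r : ℝ}
    (hr : 0 < r) : f r ^ (q + 1) * (c * r ^ D / D) ≤ In c D f (q + 1) := by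
  rw [← nu_ball_int hc hD hr, In]
  refine integral_mono_ae (nu_const_zero hc hD hr) h.iq (ae_nu_of_pos hc fun t ht => ?_)
  have := h.fnn t ht
  by_cases h1 : t ∈ Ioc 0 r
  · simp only [h1, indicator_of_mem]
    exact Real.rpow_le_rpow (h.fnn r hr) (h.anti ht hr h1.2) (by linarith)
  · simp only [h1, not_false_eq_true, indicator_of_notMem]
    positivity

lemma loc_p (hc : 0 < c) (hD : 1 ≤ D) {G : ℝ → ℝ} (hG : ∀ r, 0 ≤ G r)
    (hi : Integrable (fun r => G r ^ p) (nu c D)) {r s : ℝ} (hr : 0 < r) :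
    IntegrableOn (fun t => G t ^ p) (Ioc r s) ∧
    ∫ t in Ioc r s, G t ^ p ≤ In c D G p / (c * r ^ (D - 1)) := by
  have hi' := hi
  rw [integrable_nu hc] at hi
  have hsub : Ioc r s ⊆ Ioi 0 := fun t ht => hr.trans ht.1
  have hk : 0 < c * r ^ (D - 1) := by positivity
  have hle : ∀ t ∈ Ioc r s, G t ^ p ≤ (c * r ^ (D - 1))⁻¹ * (c * t ^ (D - 1) * G t ^ p) := by
    intro t ht
    have h1 : r ^ (D - 1) ≤ t ^ (D - 1) := Real.rpow_le_rpow hr.le ht.1.le (by linarith)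
    have h2 := Real.rpow_nonneg (hG t) p
    rw [inv_mul_eq_div, le_div_iff₀ hk]
    have : c * r ^ (D - 1) ≤ c * t ^ (D - 1) := by gcongr
    nlinarith
  have hI : IntegrableOn (fun t => (c * r ^ (D - 1))⁻¹ * (c * t ^ (D - 1) * G t ^ p)) (Ioi 0) :=
    hi.const_mul _
  have hm : AEStronglyMeasurable (fun t => G t ^ p) (volume.restrict (Ioc r s)) :=
    (hi'.1.mono_ac (ac_nu hc)).mono_measure (Measure.restrict_mono hsub le_rfl)
  have h1 : IntegrableOn (fun t => G t ^ p) (Ioc r s) := by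
    refine Integrable.mono' (hI.mono_set hsub) hm ?_
    refine (ae_restrict_iff' measurableSet_Ioc).2 (Eventually.of_forall fun t ht => ?_)
    rw [Real.norm_of_nonneg (Real.rpow_nonneg (hG t) p)]
    exact hle t ht
  refine ⟨h1, ?_⟩
  calc ∫ t in Ioc r s, G t ^ p ≤ ∫ t in Ioc r s, (c * r ^ (D - 1))⁻¹ * (c * t ^ (D - 1) * G t ^ p) :=
        setIntegral_mono_on h1 (hI.mono_set hsub) measurableSet_Ioc hle
    _ ≤ ∫ t in Ioi 0, (c * r ^ (D - 1))⁻¹ * (c * t ^ (D - 1) * G t ^ p) := by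
        refine setIntegral_mono_set hI ?_ hsub.eventuallyLE
        refine (ae_restrict_iff' measurableSet_Ioi).2 (Eventually.of_forall fun t ht => ?_)
        have ht : 0 < t := ht
        have h2 := Real.rpow_nonneg (hG t) p
        simp only [Pi.zero_apply]; positivity
    _ = In c D G p / (c * r ^ (D - 1)) := by
        rw [integral_const_mul, In, integral_nu hc]; ring

lemma loc_1 (hc : 0 < c) (hD : 1 ≤ D) (hp : 1 < p) {G : ℝ → ℝ} (hG : ∀ r, 0 ≤ G r)
    (hm : Measurable G)
    (hi : Integrable (fun r => G r ^ p) (nu c D)) {r s : ℝ} (hr : 0 < r) (hrs : r ≤ s) :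
    IntegrableOn G (Ioc r s) ∧ ∀ K, 0 < K →
    ∫ t in Ioc r s, G t ≤ K * (s - r) + K ^ (1 - p) * (In c D G p / (c * r ^ (D - 1))) := by
  obtain ⟨h1, h2⟩ := loc_p hc hD hG hi (s := s) hr
  have hI : ∀ K : ℝ, IntegrableOn (fun t => K + K ^ (1 - p) * G t ^ p) (Ioc r s) := fun K =>
    Integrable.add (by simp) (h1.const_mul _)
  have h3 : IntegrableOn G (Ioc r s) := by
    refine Integrable.mono' (hI 1) hm.aestronglyMeasurable (Eventually.of_forall fun t => ?_)
    rw [Real.norm_of_nonneg (hG t)]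
    exact dich (hG t) one_pos hp
  refine ⟨h3, fun K hK => ?_⟩
  calc ∫ t in Ioc r s, G t ≤ ∫ t in Ioc r s, (K + K ^ (1 - p) * G t ^ p) :=
        integral_mono h3 (hI K) fun t => dich (hG t) hK hp
    _ = K * (s - r) + K ^ (1 - p) * ∫ t in Ioc r s, G t ^ p := by
        rw [integral_add (by simp) (h1.const_mul _), integral_const_mul]
        simp [hrs, mul_comm]
    _ ≤ _ := by gcongr

lemma int_pow_le {al r K : ℝ} (hal : 0 < al) (hr : 0 < r) (hr1 : r ≤ 1) (hK : 0 ≤ K) :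
    IntegrableOn (fun t : ℝ => K * t ^ (-1 - al)) (Ioc r 1) ∧
    ∫ t in Ioc r 1, K * t ^ (-1 - al) ≤ K / al * r ^ (-al) := by
  have h0 : (0:ℝ) ∉ uIcc r 1 := by
    rw [uIcc_of_le hr1]; intro h; exact absurd h.1 (not_le.2 hr)
  have hi : IntervalIntegrable (fun t : ℝ => t ^ (-1 - al)) volume r 1 :=
    intervalIntegral.intervalIntegrable_rpow (Or.inr h0)
  refine ⟨((intervalIntegrable_iff_integrableOn_Ioc_of_le hr1).1 hi).const_mul K, ?_⟩
  rw [integral_const_mul, ← intervalIntegral.integral_of_le hr1,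
    integral_rpow (Or.inr ⟨by linarith, h0⟩)]
  have : (-1 - al + 1) = -al := by ring
  rw [this, Real.one_rpow, div_neg, ← neg_div, neg_sub]
  rw [div_mul_eq_mul_div, mul_div_assoc]
  gcongr
  linarith

lemma Adm.bound_zero' (h : Adm c D p q m f g) {al K : ℝ} (hal : 0 < al) (hK : 0 ≤ K)
    (hg : ∀ s, 0 < s → s ≤ 1 → g s ≤ K * s ^ (-1 - al)) {r : ℝ} (hr : 0 < r) (hr1 : r ≤ 1) :
    f r ≤ (f 1 + K / al) * r ^ (-al) := by
  have h1 := h.eq r 1 hr hr1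
  obtain ⟨h2, h3⟩ := int_pow_le hal hr hr1 hK
  have h4 : ∫ t in Ioc r 1, g t ≤ ∫ t in Ioc r 1, K * t ^ (-1 - al) :=
    setIntegral_mono_on (h.gi r 1 hr hr1) h2 measurableSet_Ioc
      fun t ht => hg t (hr.trans ht.1) ht.2
  have h5 : 1 ≤ r ^ (-al) := Real.one_le_rpow_of_pos_of_le_one_of_nonpos hr hr1 (by linarith)
  have := h.fnn 1 one_pos
  nlinarith

lemma Adm.bound_zero (h : Adm c D p q m f g) (hc : 0 < c) (hD : 1 ≤ D) (hp : 1 < p)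
    {al : ℝ} (ha : Alp D p m al) {r : ℝ} (hr : 0 < r) (hr1 : r ≤ 1) :
    f r ≤ (f 1 + 1 / al + In c D g p / c) * r ^ (-al) := by
  have hal := ha.pos
  have h1 := h.eq r 1 hr hr1
  obtain ⟨h2, h3⟩ := int_pow_le hal hr hr1 zero_le_one
  have hip := (integrable_nu hc).1 h.ip
  have hsub : Ioc r 1 ⊆ Ioi 0 := fun t ht => hr.trans ht.1
  have hI : IntegrableOn (fun t => (r ^ (-al) / c) * (c * t ^ (D - 1) * g t ^ p)) (Ioi 0) :=
    hip.const_mul _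
  have h4 : ∫ t in Ioc r 1, g t ≤ ∫ t in Ioc r 1, (1 * t ^ (-1 - al) +
      (r ^ (-al) / c) * (c * t ^ (D - 1) * g t ^ p)) := by
    refine setIntegral_mono_on (h.gi r 1 hr hr1) (h2.add (hI.mono_set hsub)) measurableSet_Ioc
      fun t ht => ?_
    have ht0 : 0 < t := hr.trans ht.1
    have hd := dich (h.gnn t) (Real.rpow_pos_of_pos ht0 (-1 - al)) hp
    rw [← Real.rpow_mul ht0.le] at hd
    have e1 : t ^ ((-1 - al) * (1 - p)) ≤ t ^ (D - 1 - al) :=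
      Real.rpow_le_rpow_of_exponent_ge ht0 ht.2 (by nlinarith [ha.h1])
    have e2 : t ^ (D - 1 - al) ≤ t ^ (D - 1) * r ^ (-al) := by
      rw [sub_eq_add_neg (D - 1), Real.rpow_add ht0]
      exact mul_le_mul_of_nonneg_left
        (Real.rpow_le_rpow_of_nonpos hr ht.1.le (neg_nonpos.2 hal.le)) (by positivity)
    have e3 : (r ^ (-al) / c) * (c * t ^ (D - 1) * g t ^ p) = t ^ (D - 1) * r ^ (-al) * g t ^ p := by
      field_simp
    rw [e3, one_mul]
    have := Real.rpow_nonneg (h.gnn t) p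
    have : t ^ ((-1 - al) * (1 - p)) * g t ^ p ≤ t ^ (D - 1) * r ^ (-al) * g t ^ p := by
      gcongr; linarith
    linarith
  rw [integral_add h2 (hI.mono_set hsub)] at h4
  have h6 : ∫ t in Ioc r 1, (r ^ (-al) / c) * (c * t ^ (D - 1) * g t ^ p) ≤
      r ^ (-al) / c * In c D g p := by
    rw [In, integral_nu hc, ← integral_const_mul]
    refine setIntegral_mono_set hI ?_ hsub.eventuallyLE
    refine (ae_restrict_iff' measurableSet_Ioi).2 (Eventually.of_forall fun t ht => ?_)
    have ht : 0 < t := ht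
    have h2 := Real.rpow_nonneg (h.gnn t) p
    simp only [Pi.zero_apply]; positivity
  have h5 : 1 ≤ r ^ (-al) := Real.one_le_rpow_of_pos_of_le_one_of_nonpos hr hr1 (by linarith)
  have := h.fnn 1 one_pos
  have e : r ^ (-al) / c * In c D g p = In c D g p / c * r ^ (-al) := by ring
  nlinarith

lemma pow_conv_int (hc : 0 < c) {n t : ℝ} (hn : 1 ≤ n) {X Y : ℝ → ℝ} (hX : ∀ r, 0 < r → 0 ≤ X r)
    (hY : ∀ r, 0 < r → 0 ≤ Y r) (mX : AEMeasurable X (nu c D)) (mY : AEMeasurable Y (nu c D))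
    (iX : Integrable (fun r => X r ^ n) (nu c D)) (iY : Integrable (fun r => Y r ^ n) (nu c D))
    (ht : 0 ≤ t) (ht1 : t ≤ 1) :
    Integrable (fun r => ((1 - t) * X r + t * Y r) ^ n) (nu c D) := by
  refine Integrable.mono' ((iX.const_mul (1 - t)).add (iY.const_mul t)) ?_
    (ae_nu_of_pos hc fun r hr => ?_)
  · exact (((mX.const_mul _).add (mY.const_mul _)).pow_const n).aestronglyMeasurable
  · have h1 := hX r hr
    have h2 := hY r hr
    have : 0 ≤ (1 - t) * X r + t * Y r := by
      have : 0 ≤ 1 - t := by linarith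
      positivity
    rw [Real.norm_of_nonneg (by positivity)]
    exact conv_pow h1 h2 ht ht1 hn

lemma Adm.conv {f1 g1 : ℝ → ℝ} (h : Adm c D p q m f g) (h1 : Adm c D p q m f1 g1) (hc : 0 < c)
    (hp : 1 < p) (hq : 0 ≤ q) (hm : q < m) {t : ℝ} (ht : 0 ≤ t) (ht1 : t ≤ 1) :
    Adm c D p q m (fun r => (1 - t) * f r + t * f1 r) (fun r => (1 - t) * g r + t * g1 r) where
  fnn r hr := by
    have := h.fnn r hr
    have := h1.fnn r hr
    have : 0 ≤ 1 - t := by linarith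
    positivity
  gnn r := by
    have := h.gnn r
    have := h1.gnn r
    have : 0 ≤ 1 - t := by linarith
    positivity
  gm := (h.gm.const_mul _).add (h1.gm.const_mul _)
  gi r s hr hrs := ((h.gi r s hr hrs).const_mul _).add ((h1.gi r s hr hrs).const_mul _)
  eq r s hr hrs := by
    rw [integral_add ((h.gi r s hr hrs).const_mul _) ((h1.gi r s hr hrs).const_mul _),
      integral_const_mul, integral_const_mul, ← h.eq r s hr hrs, ← h1.eq r s hr hrs]
    ring
  iq := pow_conv_int hc (by linarith) h.fnn h1.fnn h.fm h1.fm h.iq h1.iq ht ht1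
  im := pow_conv_int hc (by linarith) h.fnn h1.fnn h.fm h1.fm h.im h1.im ht ht1
  ip := pow_conv_int hc (by linarith) (fun r _ => h.gnn r) (fun r _ => h1.gnn r)
    h.gm.aemeasurable h1.gm.aemeasurable h.ip h1.ip ht ht1

lemma In_scale (hc : 0 < c) (hf : ∀ r, 0 < r → 0 ≤ f r) {l u n : ℝ} (hl : 0 < l) (hu : 0 < u) :
    In c D (fun r => l * f (u * r)) n = l ^ n * u ^ (-D) * In c D f n := by
  rw [In, In, mul_assoc, ← nu_scale_int hc (fun r => f r ^ n) hu, ← integral_const_mul]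
  refine integral_congr_ae (ae_nu_of_pos hc fun r hr => ?_)
  exact Real.mul_rpow hl.le (hf _ (by positivity))

lemma int_scale (hc : 0 < c) (hf : ∀ r, 0 < r → 0 ≤ f r) {l u n : ℝ} (hl : 0 < l) (hu : 0 < u)
    (h : Integrable (fun r => f r ^ n) (nu c D)) :
    Integrable (fun r => (l * f (u * r)) ^ n) (nu c D) := by
  refine ((nu_scale_integrable hc hu h).const_mul (l ^ n)).congr (ae_nu_of_pos hc fun r hr => ?_)
  exact (Real.mul_rpow hl.le (hf _ (by positivity))).symm

lemma Adm.scale (h : Adm c D p q m f g) (hc : 0 < c) {l u : ℝ} (hl : 0 < l) (hu : 0 < u) :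
    Adm c D p q m (fun r => l * f (u * r)) (fun r => (l * u) * g (u * r)) where
  fnn r hr := mul_nonneg hl.le (h.fnn _ (by positivity))
  gnn r := mul_nonneg (by positivity) (h.gnn _)
  gm := (h.gm.comp (measurable_const_mul u)).const_mul _
  gi r s hr hrs := by
    have h1 := h.gi (u * r) (u * s) (by positivity) (by gcongr)
    rw [← intervalIntegrable_iff_integrableOn_Ioc_of_le (by gcongr)] at h1
    have h2 := (h1.comp_mul_left (c := u))
    rw [mul_div_cancel_left₀ _ hu.ne', mul_div_cancel_left₀ _ hu.ne',
      intervalIntegrable_iff_integrableOn_Ioc_of_le hrs] at h2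
    exact h2.const_mul _
  eq r s hr hrs := by
    have h1 := h.eq (u * r) (u * s) (by positivity) (by gcongr)
    rw [integral_const_mul, ← intervalIntegral.integral_of_le hrs,
      intervalIntegral.integral_comp_mul_left _ hu.ne', ← mul_sub, h1,
      ← intervalIntegral.integral_of_le (by gcongr), smul_eq_mul]
    field_simp
  iq := int_scale hc h.fnn hl hu h.iq
  im := int_scale hc h.fnn hl hu h.im
  ip := int_scale hc (fun r _ => h.gnn r) (mul_pos hl hu) hu h.ip

lemma In_pos_of {n k : ℝ} (hc : 0 < c) (hk : 0 < k) (hf : ∀ r, 0 < r → 0 ≤ f r)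
    (hi : Integrable (fun r => f r ^ n) (nu c D)) (hn : 0 < n)
    (h : 0 < In c D f k) : 0 < In c D f n := by
  rcases (In_nonneg hc hf n (D := D)).eq_or_lt with h0 | h0
  · exfalso
    have h1 : (fun r => f r ^ n) =ᵐ[nu c D] 0 :=
      (integral_eq_zero_iff_of_nonneg_ae
        (ae_nu_of_pos hc fun r hr => Real.rpow_nonneg (hf r hr) _) hi).1 h0.symm
    have h2 : In c D f k = 0 := by
      refine integral_eq_zero_of_ae ?_
      filter_upwards [h1, ae_nu_of_pos hc hf] with r hr hr2
      have : f r = 0 := by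
        simpa [Real.rpow_eq_zero hr2 hn.ne'] using hr
      simp [this, hk.ne']
    linarith
  · exact h0

lemma Adm.posP (h : Adm c D p q m f g) (hc : 0 < c) (hD : 1 ≤ D) (hp : 1 < p) (hq : 0 ≤ q)
    (hm : q < m) (hM : 0 < In c D f (m + 1)) : 0 < In c D g p := by
  rcases (In_nonneg hc (fun r _ => h.gnn r) p (D := D)).eq_or_lt with h0 | h0
  swap
  · exact h0
  exfalso
  have h1 : (fun r => g r ^ p) =ᵐ[nu c D] 0 :=
    (integral_eq_zero_iff_of_nonneg_ae
      (ae_nu_of_pos hc fun r hr => Real.rpow_nonneg (h.gnn r) _) h.ip).1 h0.symm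
  have h2 : ∀ᵐ r ∂(volume.restrict (Ioi (0:ℝ))), g r = 0 := by
    refine (ae_nu hc (D := D)).1 ?_
    filter_upwards [h1] with r hr
    simpa [Real.rpow_eq_zero (h.gnn r) (by linarith : p ≠ 0)] using hr
  have h3 : ∀ r s, 0 < r → r ≤ s → f r = f s := by
    intro r s hr hrs
    have := h.eq r s hr hrs
    rw [integral_eq_zero_of_ae] at this
    · linarith
    · exact ae_mono (Measure.restrict_mono (fun t ht => hr.trans ht.1) le_rfl) h2
  have h4 : ∀ r, 0 < r → f r = 0 := by
    intro r hr
    by_contra hne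
    have hpos : 0 < f r := lt_of_le_of_ne (h.fnn r hr) (Ne.symm hne)
    have hk : 0 < f r ^ (q + 1) * c / D := by positivity
    have ht : Tendsto (fun s : ℝ => f r ^ (q + 1) * c / D * s ^ D) atTop atTop :=
      (tendsto_rpow_atTop (by linarith)).const_mul_atTop hk
    obtain ⟨s, hs1, hs2⟩ := ((ht.eventually_gt_atTop (In c D f (q + 1))).and
      (eventually_ge_atTop r)).exists
    have := h.bound_inf hc hD hq (hr.trans_le hs2)
    rw [← h3 r s hr hs2] at this
    have e : f r ^ (q + 1) * (c * s ^ D / D) = f r ^ (q + 1) * c / D * s ^ D := by ring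
    linarith
  have : In c D f (m + 1) = 0 := by
    refine integral_eq_zero_of_ae (ae_nu_of_pos hc fun r hr => ?_)
    simp [h4 r hr, (by linarith : m + 1 ≠ 0)]
  linarith

variable {a b : ℝ}

lemma Adm.normalize (P : Par c D p q m a b) (h : Adm c D p q m f g) (hM : 0 < In c D f (m + 1)) :
    ∃ f1 g1, Adm c D p q m f1 g1 ∧ In c D f1 (q + 1) = 1 ∧ In c D f1 (m + 1) = 1 ∧
      In c D g1 p = JJ c D p q m a b f g := by
  have hc := P.hc
  have hq := P.hq
  have hm := P.hm
  have hD := P.hD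
  have hQ : 0 < In c D f (q + 1) := In_pos_of hc (by linarith) h.fnn h.iq (by linarith) hM
  set Q := In c D f (q + 1) with hQd
  set M := In c D f (m + 1) with hMd
  set l : ℝ := (Q / M) ^ (1 / (m - q)) with hl
  have hl0 : 0 < l := by positivity
  set u : ℝ := (l ^ (q + 1) * Q) ^ (1 / D) with hu
  have hu0 : 0 < u := by positivity
  have e1 : u ^ D = l ^ (q + 1) * Q := by
    rw [hu, ← Real.rpow_mul (by positivity)]
    rw [one_div_mul_cancel (by linarith), Real.rpow_one]
  have e2 : l ^ (m - q) = Q / M := by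
    rw [hl, ← Real.rpow_mul (by positivity)]
    rw [one_div_mul_cancel (by linarith), Real.rpow_one]
  have e3 : l ^ (m + 1) * M = l ^ (q + 1) * Q := by
    have : m + 1 = (q + 1) + (m - q) := by ring
    rw [this, Real.rpow_add hl0, e2]; field_simp
  have e4 : u ^ (-D) * u ^ D = 1 := by rw [← Real.rpow_add hu0]; simp
  refine ⟨_, _, h.scale hc hl0 hu0, ?_, ?_, ?_⟩
  · rw [In_scale hc h.fnn hl0 hu0, ← hQd]
    linear_combination e4 - u ^ (-D) * e1
  · rw [In_scale hc h.fnn hl0 hu0, ← hMd]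
    linear_combination e4 - u ^ (-D) * e1 + u ^ (-D) * e3
  · rw [In_scale hc (fun r _ => h.gnn r) (mul_pos hl0 hu0) hu0, JJ, ← hQd, ← hMd]
    have q1 : Q = l ^ (-(q + 1)) * u ^ D := by
      rw [e1, Real.rpow_neg hl0.le]; field_simp
    have m1 : M = l ^ (-(m + 1)) * u ^ D := by
      rw [e1, ← e3, Real.rpow_neg hl0.le]; field_simp
    have q2 : Q ^ a = l ^ (-(q + 1) * a) * u ^ (D * a) := by
      rw [q1, Real.mul_rpow (by positivity) (by positivity), ← Real.rpow_mul hl0.le,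
        ← Real.rpow_mul hu0.le]
    have m2 : M ^ b = l ^ (-(m + 1) * b) * u ^ (D * b) := by
      rw [m1, Real.mul_rpow (by positivity) (by positivity), ← Real.rpow_mul hl0.le,
        ← Real.rpow_mul hu0.le]
    rw [eq_div_iff (by positivity), q2, m2, Real.mul_rpow hl0.le hu0.le]
    have a1 : l ^ p * l ^ (-(m + 1) * b) = l ^ (-(q + 1) * a) := by
      rw [← Real.rpow_add hl0]; congr 1; linarith [P.s1]
    have a2 : u ^ p * u ^ (-D) * u ^ (D * b) = u ^ (D * a) := by
      rw [← Real.rpow_add hu0, ← Real.rpow_add hu0]; congr 1; linarith [P.s2]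
    rw [← a1, ← a2]; ring

end

lemma clarkson_t {p e : ℝ} (hp : 1 < p) (he : 0 < e) : ∃ C : ℝ, 0 ≤ C ∧ ∀ t ∈ Icc (-1:ℝ) 1,
    |2 * t| ^ p ≤ e * ((1 + t) ^ p + (1 - t) ^ p) + C * (((1 + t) ^ p + (1 - t) ^ p) / 2 - 1) := by
  have hp0 : 0 ≤ p := by linarith
  have hcont : Continuous fun t : ℝ => ((1 + t) ^ p + (1 - t) ^ p) / 2 - 1 := by
    refine Continuous.sub (Continuous.div_const (Continuous.add ?_ ?_) _) continuous_const
    · exact Continuous.rpow_const (by fun_prop) (fun _ => Or.inr hp0)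
    · exact Continuous.rpow_const (by fun_prop) (fun _ => Or.inr hp0)
  have hc2 : Continuous fun t : ℝ => |2 * t| ^ p :=
    Continuous.rpow_const (by fun_prop) (fun _ => Or.inr hp0)
  have hnn : ∀ t ∈ Icc (-1:ℝ) 1, 0 ≤ ((1 + t) ^ p + (1 - t) ^ p) / 2 - 1 := by
    intro t ht
    have := conv_pow (x := 1 + t) (y := 1 - t) (t := 1/2) (n := p) (by linarith [ht.1])
      (by linarith [ht.2]) (by norm_num) (by norm_num) hp.le
    have e1 : (1 - 1/2) * (1 + t) + 1/2 * (1 - t) = 1 := by ring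
    rw [e1, Real.one_rpow] at this
    linarith
  have hpos : ∀ t ∈ Icc (-1:ℝ) 1, t ≠ 0 → 0 < ((1 + t) ^ p + (1 - t) ^ p) / 2 - 1 := by
    intro t ht h0
    have := (strictConvexOn_rpow hp).2 (show 1 + t ∈ Ici 0 by simp; linarith [ht.1])
      (show 1 - t ∈ Ici 0 by simp; linarith [ht.2]) (by intro h; apply h0; linarith)
      (show (0:ℝ) < 1/2 by norm_num) (show (0:ℝ) < 1/2 by norm_num) (by norm_num)
    simp only [smul_eq_mul] at this
    have e1 : 1/2 * (1 + t) + 1/2 * (1 - t) = 1 := by ring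
    rw [e1, Real.one_rpow] at this
    linarith
  set T : Set ℝ := Icc (-1) 1 ∩ {t | 2 * e ≤ |2 * t| ^ p} with hT
  have hTc : IsCompact T := isCompact_Icc.inter_right (isClosed_le continuous_const hc2)
  have key : ∃ δ > 0, ∀ t ∈ T, δ ≤ ((1 + t) ^ p + (1 - t) ^ p) / 2 - 1 := by
    rcases T.eq_empty_or_nonempty with h | h
    · exact ⟨1, one_pos, by simp [h]⟩
    · obtain ⟨t0, ht0, hmin⟩ := hTc.exists_isMinOn h hcont.continuousOn
      refine ⟨_, hpos t0 ht0.1 ?_, fun t ht => hmin ht⟩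
      rintro rfl
      have := ht0.2
      simp [Real.zero_rpow (by linarith : p ≠ 0)] at this
      linarith
  obtain ⟨δ, hδ, hmin⟩ := key
  refine ⟨2 ^ p / δ, by positivity, fun t ht => ?_⟩
  have h1 := hnn t ht
  by_cases h : 2 * e ≤ |2 * t| ^ p
  · have h2 := hmin t ⟨ht, h⟩
    have h3 : |2 * t| ^ p ≤ 2 ^ p := by
      refine Real.rpow_le_rpow (abs_nonneg _) ?_ hp0
      rw [abs_le]; constructor <;> linarith [ht.1, ht.2]
    have h4 : 2 ^ p ≤ 2 ^ p / δ * (((1 + t) ^ p + (1 - t) ^ p) / 2 - 1) := by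
      rw [div_mul_eq_mul_div, le_div_iff₀ hδ]; gcongr
    have h5 : 0 ≤ e * ((1 + t) ^ p + (1 - t) ^ p) := by
      apply mul_nonneg he.le; linarith
    linarith
  · push Not at h
    have h5 : e * 2 ≤ e * ((1 + t) ^ p + (1 - t) ^ p) := by
      gcongr; linarith
    have : 0 ≤ 2 ^ p / δ * (((1 + t) ^ p + (1 - t) ^ p) / 2 - 1) := by positivity
    linarith

lemma clarkson {p e : ℝ} (hp : 1 < p) (he : 0 < e) : ∃ C : ℝ, 0 ≤ C ∧ ∀ x y : ℝ, 0 ≤ x → 0 ≤ y →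
    |x - y| ^ p ≤ e * (x ^ p + y ^ p) +
      C * ((x ^ p + y ^ p) / 2 - ((1 - 1/2) * x + 1/2 * y) ^ p) := by
  obtain ⟨C, hC, h⟩ := clarkson_t hp he
  refine ⟨C, hC, fun x y hx hy => ?_⟩
  have hp0 : p ≠ 0 := by linarith
  rcases (add_nonneg hx hy).eq_or_lt with h0 | h0
  · have hx0 : x = 0 := by linarith
    have hy0 : y = 0 := by linarith
    subst hx0; subst hy0
    simp [Real.zero_rpow hp0]
  · set s := (x + y) / 2 with hs
    have hs0 : 0 < s := by positivity
    set t := (x - y) / (x + y) with ht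
    have hx1 : x = s * (1 + t) := by rw [hs, ht]; field_simp; ring
    have hy1 : y = s * (1 - t) := by rw [hs, ht]; field_simp; ring
    have ht1 : t ∈ Icc (-1:ℝ) 1 := by
      constructor
      · rw [ht, le_div_iff₀ h0]; linarith
      · rw [ht, div_le_iff₀ h0]; linarith
    have hk := h t ht1
    have d1 : |x - y| ^ p = s ^ p * |2 * t| ^ p := by
      rw [← Real.mul_rpow hs0.le (abs_nonneg _)]
      congr 1
      rw [← abs_of_pos hs0, ← abs_mul]
      congr 1; linear_combination hx1 - hy1
    have d2 : x ^ p = s ^ p * (1 + t) ^ p := by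
      conv_lhs => rw [hx1]
      exact Real.mul_rpow hs0.le (by linarith [ht1.1])
    have d3 : y ^ p = s ^ p * (1 - t) ^ p := by
      conv_lhs => rw [hy1]
      exact Real.mul_rpow hs0.le (by linarith [ht1.2])
    have d4 : (1 - 1/2) * x + 1/2 * y = s := by rw [hs]; ring
    rw [d1, d2, d3, d4]
    have := mul_le_mul_of_nonneg_left hk (Real.rpow_nonneg hs0.le p)
    linarith

lemma fatou_real {μ : Measure ℝ} {X : ℕ → ℝ → ℝ} {Y : ℝ → ℝ} {B : ℝ}
    (h0 : ∀ k, 0 ≤ᵐ[μ] X k) (hi : ∀ k, Integrable (X k) μ)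
    (hlim : ∀ᵐ r ∂μ, Tendsto (fun k => X k r) atTop (𝓝 (Y r))) (hB : ∀ k, ∫ r, X k r ∂μ ≤ B) :
    Integrable Y μ ∧ ∫ r, Y r ∂μ ≤ B := by
  have hB0 : 0 ≤ B := (integral_nonneg_of_ae (h0 0)).trans (hB 0)
  have hY0 : 0 ≤ᵐ[μ] Y := by
    filter_upwards [hlim, ae_all_iff.2 h0] with r hr h
    exact ge_of_tendsto' hr h
  have hYm : AEStronglyMeasurable Y μ := aestronglyMeasurable_of_tendsto_ae atTop
    (fun k => (hi k).1) hlim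
  have h1 : ∫⁻ r, ENNReal.ofReal (Y r) ∂μ ≤ ENNReal.ofReal B := by
    calc ∫⁻ r, ENNReal.ofReal (Y r) ∂μ
        = ∫⁻ r, liminf (fun k => ENNReal.ofReal (X k r)) atTop ∂μ := by
          refine lintegral_congr_ae ?_
          filter_upwards [hlim] with r hr
          exact ((ENNReal.continuous_ofReal.tendsto _).comp hr).liminf_eq.symm
      _ ≤ liminf (fun k => ∫⁻ r, ENNReal.ofReal (X k r) ∂μ) atTop :=
          lintegral_liminf_le' fun k => (hi k).1.aemeasurable.ennreal_ofReal
      _ ≤ ENNReal.ofReal B := by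
          refine liminf_le_of_le (by isBoundedDefault) fun b hb => ?_
          obtain ⟨k, hk⟩ := hb.exists
          refine hk.trans ?_
          rw [← ofReal_integral_eq_lintegral_ofReal (hi k) (h0 k)]
          exact ENNReal.ofReal_le_ofReal (hB k)
  have hint : Integrable Y μ := by
    refine ⟨hYm, ?_⟩
    rw [hasFiniteIntegral_iff_ofReal hY0]
    exact h1.trans_lt ENNReal.ofReal_lt_top
  refine ⟨hint, ?_⟩
  rw [← ofReal_integral_eq_lintegral_ofReal hint hY0] at h1
  exact (ENNReal.ofReal_le_ofReal_iff hB0).1 h1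

lemma Lp_complete {μ : Measure ℝ} {p : ℝ} (hp : 1 < p) {g : ℕ → ℝ → ℝ} (h0 : ∀ k r, 0 ≤ g k r)
    (hm : ∀ k, Measurable (g k)) (hi : ∀ k, Integrable (fun r => g k r ^ p) μ)
    (hC : Tendsto (fun z : ℕ × ℕ => ∫ r, |g z.1 r - g z.2 r| ^ p ∂μ) atTop (𝓝 0)) :
    ∃ G : ℝ → ℝ, Measurable G ∧ (∀ r, 0 ≤ G r) ∧ Integrable (fun r => G r ^ p) μ ∧
      (∀ k, Integrable (fun r => |g k r - G r| ^ p) μ) ∧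
      Tendsto (fun k => ∫ r, |g k r - G r| ^ p ∂μ) atTop (𝓝 0) ∧
      ∀ B, Tendsto (fun k => ∫ r, g k r ^ p ∂μ) atTop (𝓝 B) → ∫ r, G r ^ p ∂μ ≤ B := by
  have hp0 : 0 < p := by linarith
  set P : ENNReal := ENNReal.ofReal p with hP
  have hPr : P.toReal = p := ENNReal.toReal_ofReal hp0.le
  have hP0 : P ≠ 0 := by simp [hP, hp0]
  have hPt : P ≠ ⊤ := by simp [hP]
  have : Fact (1 ≤ P) := ⟨by rw [hP]; simpa using hp.le⟩
  have hmem : ∀ k, MemLp (g k) P μ := by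
    intro k
    rw [← integrable_norm_rpow_iff (hm k).aestronglyMeasurable hP0 hPt, hPr]
    refine (hi k).congr (Eventually.of_forall fun r => ?_)
    simp only [Real.norm_of_nonneg (h0 k r)]
  have hnorm : ∀ X : Lp ℝ P μ, ‖X‖ = (∫ r, ‖X r‖ ^ p ∂μ) ^ (1 / p) := by
    intro X
    rw [Lp.norm_def, (Lp.memLp X).eLpNorm_eq_integral_rpow_norm hP0 hPt, hPr,
      ENNReal.toReal_ofReal (by positivity), one_div]
  set L : ℕ → Lp ℝ P μ := fun k => (hmem k).toLp (g k) with hL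
  have hcoe : ∀ k, (L k : ℝ → ℝ) =ᵐ[μ] g k := fun k => (hmem k).coeFn_toLp
  have hcauchy : CauchySeq L := by
    rw [cauchySeq_iff_tendsto_dist_atTop_0]
    have e : ∀ z : ℕ × ℕ, dist (L z.1) (L z.2) = (∫ r, |g z.1 r - g z.2 r| ^ p ∂μ) ^ (1 / p) := by
      intro z
      rw [dist_eq_norm, hnorm]
      congr 1
      refine integral_congr_ae ?_
      filter_upwards [Lp.coeFn_sub (L z.1) (L z.2), hcoe z.1, hcoe z.2] with r h1 h2 h3
      rw [h1, Pi.sub_apply, h2, h3, Real.norm_eq_abs]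
    simp_rw [e]
    have := hC.rpow_const (p := 1 / p) (Or.inr (by positivity))
    rwa [Real.zero_rpow (by positivity)] at this
  obtain ⟨G, hG⟩ := cauchySeq_tendsto_of_complete hcauchy
  have hGi : Integrable (fun r => ‖G r‖ ^ p) μ := by
    have := (Lp.memLp G).integrable_norm_rpow hP0 hPt
    rwa [hPr] at this
  have hGm : Measurable (G : ℝ → ℝ) := (Lp.stronglyMeasurable G).measurable
  have hDi : ∀ k, Integrable (fun r => ‖(L k - G : Lp ℝ P μ) r‖ ^ p) μ := by
    intro k
    have := (Lp.memLp (L k - G)).integrable_norm_rpow hP0 hPt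
    rwa [hPr] at this
  have hle : ∀ k, ∀ᵐ r ∂μ, |g k r - max (G r) 0| ^ p ≤ ‖(L k - G : Lp ℝ P μ) r‖ ^ p := by
    intro k
    filter_upwards [Lp.coeFn_sub (L k) G, hcoe k] with r h1 h2
    rw [h1, Pi.sub_apply, h2, Real.norm_eq_abs]
    refine Real.rpow_le_rpow (abs_nonneg _) ?_ hp0.le
    have := abs_max_sub_max_le_abs (g k r) (G r) 0
    rwa [max_eq_left (h0 k r)] at this
  have hmeas : ∀ k, AEStronglyMeasurable (fun r => |g k r - max (G r) 0| ^ p) μ := by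
    intro k
    have := hm k
    exact Measurable.aestronglyMeasurable (by fun_prop)
  have hmi : ∀ k, Integrable (fun r => |g k r - max (G r) 0| ^ p) μ := by
    intro k
    refine Integrable.mono' (hDi k) (hmeas k) ?_
    filter_upwards [hle k] with r hr
    rwa [Real.norm_of_nonneg (by positivity)]
  have hlim : Tendsto (fun k => ∫ r, ‖(L k - G : Lp ℝ P μ) r‖ ^ p ∂μ) atTop (𝓝 0) := by
    have h1 : Tendsto (fun k => ‖L k - G‖ ^ p) atTop (𝓝 0) := by
      have := (tendsto_iff_norm_sub_tendsto_zero.1 hG).rpow_const (p := p) (Or.inr hp0.le)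
      rwa [Real.zero_rpow hp0.ne'] at this
    refine h1.congr fun k => ?_
    rw [hnorm, ← Real.rpow_mul (by positivity), one_div_mul_cancel hp0.ne', Real.rpow_one]
  have hposi : Integrable (fun r => max (G r) 0 ^ p) μ := by
    refine Integrable.mono' hGi (Measurable.aestronglyMeasurable (by fun_prop))
      (Eventually.of_forall fun r => ?_)
    rw [Real.norm_of_nonneg (by positivity)]
    refine Real.rpow_le_rpow (by positivity) (max_le (Real.le_norm_self _) (norm_nonneg _)) hp0.le
  refine ⟨fun r => max (G r) 0, by fun_prop, fun r => le_max_right _ _, hposi, hmi, ?_, ?_⟩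
  · refine squeeze_zero (fun k => by positivity) (fun k => ?_) hlim
    exact integral_mono_ae (hmi k) (hDi k) (hle k)
  · intro B hB
    have h1 : Tendsto (fun k => ‖L k‖ ^ p) atTop (𝓝 (‖G‖ ^ p)) :=
      hG.norm.rpow_const (Or.inr hp0.le)
    have h2 : ∀ X : Lp ℝ P μ, ‖X‖ ^ p = ∫ r, ‖X r‖ ^ p ∂μ := by
      intro X
      rw [hnorm, ← Real.rpow_mul (by positivity), one_div_mul_cancel hp0.ne', Real.rpow_one]
    have h3 : Tendsto (fun k => ∫ r, g k r ^ p ∂μ) atTop (𝓝 (‖G‖ ^ p)) := by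
      refine h1.congr fun k => ?_
      rw [h2]
      refine integral_congr_ae ?_
      filter_upwards [hcoe k] with r hr
      rw [hr, Real.norm_of_nonneg (h0 k r)]
    rw [tendsto_nhds_unique hB h3, h2]
    refine integral_mono hposi hGi fun r => ?_
    exact Real.rpow_le_rpow (by positivity) (max_le (Real.le_norm_self _) (norm_nonneg _)) hp0.le

section
variable {c D p q m a b : ℝ}

lemma test_int (hc : 0 < c) (hD : 1 ≤ D) {n : ℝ} (hn : 0 < n) :
    Integrable (fun r => (max (1 - r) 0 : ℝ) ^ n) (nu c D) := by
  refine Integrable.mono' (nu_const_zero (K := 1) (R := 1) hc hD one_pos)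
    (Measurable.aestronglyMeasurable (by fun_prop)) (ae_nu_of_pos hc fun r hr => ?_)
  rw [Real.norm_of_nonneg (by positivity)]
  by_cases h : r ≤ 1
  · rw [indicator_of_mem (show r ∈ Ioc 0 1 from ⟨hr, h⟩)]
    exact Real.rpow_le_one (by positivity) (max_le (by linarith) zero_le_one) hn.le
  · push Not at h
    rw [indicator_of_notMem (fun h1 => absurd h1.2 (not_le.2 h)), max_eq_right (by linarith),
      Real.zero_rpow hn.ne']

lemma test_adm (P : Par c D p q m a b) :
    Adm c D p q m (fun r => max (1 - r) 0) ((Ioc 0 1).indicator (fun _ => 1)) where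
  fnn r _ := le_max_right _ _
  gnn r := indicator_nonneg (fun _ _ => zero_le_one) r
  gm := measurable_const.indicator measurableSet_Ioc
  gi r s _ _ := by
    refine IntegrableOn.indicator ?_ measurableSet_Ioc
    simp
  eq r s hr hrs := by
    rw [setIntegral_indicator measurableSet_Ioc, Ioc_inter_Ioc]
    simp only [integral_const, smul_eq_mul, mul_one, MeasurableSet.univ, measureReal_restrict_apply,
      univ_inter, Real.volume_real_Ioc]
    rw [max_eq_left hr.le]
    rcases le_total s 1 with h | h
    · rw [min_eq_left h, max_eq_left, max_eq_left, max_eq_left] <;> linarith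
    · rw [min_eq_right h, max_eq_right (a := 1 - s)] <;> linarith
  iq := test_int P.hc P.hD (by linarith [P.hq])
  im := test_int P.hc P.hD (by linarith [P.hq, P.hm])
  ip := by
    refine (nu_const_zero (K := 1) (R := 1) P.hc P.hD one_pos).congr (Eventually.of_forall fun r => ?_)
    have := P.hp
    by_cases h : r ∈ Ioc (0:ℝ) 1 <;> simp [h, Real.zero_rpow (by linarith : p ≠ 0)]

lemma test_pos (P : Par c D p q m a b) : 0 < In c D (fun r => max (1 - r) 0) (m + 1) := by
  have hc := P.hc
  have hD := P.hD
  have h := nu_ball_int hc hD (show (0:ℝ) < 1/2 by norm_num) ((1/2) ^ (m + 1))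
  have h2 : 0 < (1/2 : ℝ) ^ (m + 1) * (c * (1/2) ^ D / D) := by positivity
  rw [← h] at h2
  refine h2.trans_le (integral_mono_ae (nu_const_zero hc hD (by norm_num)) (test_adm P).im
    (ae_nu_of_pos hc fun r hr => ?_))
  by_cases h : r ∈ Ioc (0:ℝ) (1/2)
  · rw [indicator_of_mem h]
    refine Real.rpow_le_rpow (by norm_num) ?_ (by linarith [P.hq, P.hm])
    exact le_max_of_le_left (by linarith [h.2])
  · rw [indicator_of_notMem h]; positivity

/-- minimizing sequence -/
lemma exists_seq (P : Par c D p q m a b) : ∃ (β B : ℝ) (f g : ℕ → ℝ → ℝ),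
    (∀ k, Adm c D p q m (f k) (g k)) ∧ (∀ k, In c D (f k) (q + 1) = 1) ∧
    (∀ k, In c D (f k) (m + 1) = 1) ∧ (∀ k, In c D (g k) p ≤ B) ∧
    Tendsto (fun k => In c D (g k) p) atTop (𝓝 β) ∧ 0 ≤ β ∧
    ∀ f1 g1, Adm c D p q m f1 g1 →
      β * In c D f1 (m + 1) ^ b ≤ In c D f1 (q + 1) ^ a * In c D g1 p := by
  have hc := P.hc
  set S : Set ℝ := {x | ∃ f g, Adm c D p q m f g ∧ In c D f (q + 1) = 1 ∧ In c D f (m + 1) = 1 ∧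
      In c D g p = x} with hS
  have hne : S.Nonempty := by
    obtain ⟨f1, g1, h1, h2, h3, h4⟩ := (test_adm P).normalize P (test_pos P)
    exact ⟨_, f1, g1, h1, h2, h3, rfl⟩
  have h0 : ∀ x ∈ S, 0 ≤ x := by
    rintro x ⟨f, g, h, -, -, rfl⟩
    exact In_nonneg hc (fun r _ => h.gnn r) p
  have hbdd : BddBelow S := ⟨0, h0⟩
  obtain ⟨x, hx1, hx2, hx3⟩ := exists_seq_tendsto_sInf hne hbdd
  choose f g h1 h2 h3 h4 using hx3
  refine ⟨sInf S, x 0, f, g, h1, h2, h3, ?_, ?_, le_csInf hne h0, ?_⟩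
  · intro k; rw [h4]; exact hx1 (Nat.zero_le k)
  · simpa only [h4] using hx2
  · intro f1 g1 hA
    have hQ := In_nonneg hc hA.fnn (q + 1) (D := D)
    have hP := In_nonneg hc (fun r _ => hA.gnn r) p (D := D)
    rcases (In_nonneg hc hA.fnn (m + 1) (D := D)).eq_or_lt with hM | hM
    · rw [← hM, Real.zero_rpow P.hb.ne', mul_zero]; positivity
    · obtain ⟨f2, g2, k1, k2, k3, k4⟩ := hA.normalize P hM
      have : sInf S ≤ JJ c D p q m a b f1 g1 := csInf_le hbdd ⟨f2, g2, k1, k2, k3, k4⟩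
      rw [JJ, le_div_iff₀ (by positivity)] at this
      exact this

/-- the dominating function -/
noncomputable def Dom (D q al K1 K2 : ℝ) (r : ℝ) : ℝ :=
  if r ≤ 1 then K2 * r ^ (-al) else K1 * r ^ (-(D / (q + 1)))

lemma Dom_int (P : Par c D p q m a b) {al : ℝ} (ha : Alp D p m al) {K1 K2 : ℝ} (h1 : 0 ≤ K1)
    (h2 : 0 ≤ K2) : Integrable (fun r => Dom D q al K1 K2 r ^ (m + 1)) (nu c D) := by
  have hc := P.hc
  have hq := P.hq
  have hm := P.hm
  have hD := P.hD
  have i1 := (nu_pow_zero (c := c) (s := (m + 1) * al) hc one_pos ha.h2).const_mul (K2 ^ (m + 1))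
  have i2 := (nu_pow_inf (c := c) (D := D) (s := D / (q + 1) * (m + 1)) hc one_pos (by
    rw [div_mul_eq_mul_div, lt_div_iff₀ (by linarith)]
    nlinarith)).const_mul (K1 ^ (m + 1))
  refine (i1.add i2).congr (ae_nu_of_pos hc fun r hr => ?_)
  simp only [Dom, Pi.add_apply]
  by_cases h : r ≤ 1
  · have : r ∉ Ioi (1:ℝ) := not_lt.2 h
    rw [if_pos h, indicator_of_mem (show r ∈ Ioc (0:ℝ) 1 from ⟨hr, h⟩), indicator_of_notMem this,
      Real.mul_rpow h2 (by positivity), ← Real.rpow_mul hr.le]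
    ring_nf
  · have h' : r ∈ Ioi (1:ℝ) := not_le.1 h
    rw [if_neg h, indicator_of_notMem (fun h1 => h h1.2), indicator_of_mem h',
      Real.mul_rpow h1 (by positivity), ← Real.rpow_mul hr.le]
    ring_nf

lemma Adm.dom (P : Par c D p q m a b) {al : ℝ} (ha : Alp D p m al) {f g : ℝ → ℝ}
    (h : Adm c D p q m f g) (hQ : In c D f (q + 1) = 1) {B : ℝ} (hB : In c D g p ≤ B) {r : ℝ}
    (hr : 0 < r) :
    f r ≤ Dom D q al ((D / c) ^ (1 / (q + 1))) ((D / c) ^ (1 / (q + 1)) + 1 / al + B / c) r := by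
  have hc := P.hc
  have hq := P.hq
  have hD := P.hD
  have h1 : ∀ s, 0 < s → f s ≤ (D / c) ^ (1 / (q + 1)) * s ^ (-(D / (q + 1))) := by
    intro s hs
    have h1 := h.bound_inf hc hD hq hs
    rw [hQ] at h1
    have h2 : f s ^ (q + 1) ≤ D / c * s ^ (-D) := by
      rw [Real.rpow_neg hs.le]
      have : 0 < c * s ^ D / D := by positivity
      rw [← le_div_iff₀ this] at h1
      refine h1.trans (le_of_eq ?_)
      field_simp
    have h3 := Real.rpow_le_rpow (Real.rpow_nonneg (h.fnn s hs) _) h2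
      (show 0 ≤ 1 / (q + 1) by positivity)
    rw [← Real.rpow_mul (h.fnn s hs), mul_one_div_cancel (by linarith), Real.rpow_one,
      Real.mul_rpow (by positivity) (by positivity), ← Real.rpow_mul hs.le] at h3
    convert h3 using 3
    ring
  rw [Dom]
  split_ifs with h2
  · refine (h.bound_zero hc hD P.hp ha hr h2).trans ?_
    have := h1 1 one_pos
    rw [Real.one_rpow, mul_one] at this
    gcongr
  · exact h1 r hr

lemma subseq_conv (P : Par c D p q m a b) {B : ℝ} {f g : ℕ → ℝ → ℝ} {W : ℝ → ℝ}
    (hA : ∀ k, Adm c D p q m (f k) (g k)) (hB : ∀ k, In c D (g k) p ≤ B)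
    (hW : ∀ k r, 0 < r → f k r ≤ W r) :
    ∃ φ : ℕ → ℕ, StrictMono φ ∧ ∃ F : ℝ → ℝ, ∀ r, 0 < r →
      Tendsto (fun k => f (φ k) r) atTop (𝓝 (F r)) := by
  have hc := P.hc
  have hD := P.hD
  have hp := P.hp
  have hcomp : IsCompact (pi univ fun x : {x : ℚ // 0 < x} => Icc (0:ℝ) (W ((x : ℚ) : ℝ))) :=
    isCompact_univ_pi fun x => isCompact_Icc
  obtain ⟨F0, -, φ, hφ, hlim⟩ := hcomp.tendsto_subseq
    (x := fun k (x : {x : ℚ // 0 < x}) => f k ((x : ℚ) : ℝ)) (by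
      intro k x _
      have hx : (0:ℝ) < ((x : ℚ) : ℝ) := by exact_mod_cast x.2
      exact ⟨(hA k).fnn _ hx, hW k _ hx⟩)
  rw [tendsto_pi_nhds] at hlim
  have hB0 : 0 ≤ B := (In_nonneg hc (fun r _ => (hA 0).gnn r) p).trans (hB 0)
  have key : ∀ r, 0 < r → CauchySeq (fun k => f (φ k) r) := by
    intro r hr
    rw [Metric.cauchySeq_iff']
    intro ε hε
    obtain ⟨K, hK0, hK⟩ : ∃ K : ℝ, 0 < K ∧ K ^ (1 - p) * (B / (c * r ^ (D - 1))) < ε / 6 := by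
      have ht : Tendsto (fun K : ℝ => K ^ (-(p - 1)) * (B / (c * r ^ (D - 1)))) atTop
          (𝓝 (0 * (B / (c * r ^ (D - 1))))) :=
        (tendsto_rpow_neg_atTop (by linarith)).mul_const _
      rw [zero_mul] at ht
      obtain ⟨K, h1, h2⟩ := ((ht.eventually_lt_const (show 0 < ε / 6 by linarith)).and
        (eventually_gt_atTop 0)).exists
      exact ⟨K, h2, by rwa [neg_sub] at h1⟩
    obtain ⟨x, hx1, hx2⟩ := exists_rat_btwn (show r < r + ε / 6 / K by
      have : 0 < ε / 6 / K := by positivity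
      linarith)
    have hx0 : 0 < x := by exact_mod_cast hr.trans hx1
    have hmod : ∀ k, 0 ≤ f (φ k) r - f (φ k) x ∧ f (φ k) r - f (φ k) x < ε / 3 := by
      intro k
      rw [(hA _).eq r x hr hx1.le]
      refine ⟨integral_nonneg (hA _).gnn, ?_⟩
      have h1 := (loc_1 hc hD hp (hA (φ k)).gnn (hA (φ k)).gm (hA (φ k)).ip hr hx1.le).2 K hK0
      have h2 : K * (x - r) < ε / 6 := by
        have : (x : ℝ) - r < ε / 6 / K := by linarith
        rwa [lt_div_iff₀' hK0] at this
      have h3 : K ^ (1 - p) * (In c D (g (φ k)) p / (c * r ^ (D - 1))) ≤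
          K ^ (1 - p) * (B / (c * r ^ (D - 1))) := by
        gcongr
        exact hB _
      linarith
    obtain ⟨N, hN⟩ := Metric.cauchySeq_iff'.1 (hlim ⟨x, hx0⟩).cauchySeq (ε / 3) (by linarith)
    refine ⟨N, fun n hn => ?_⟩
    have h1 := hN n hn
    rw [Real.dist_eq, abs_lt] at h1 ⊢
    simp only [Function.comp] at h1
    have h2 := hmod n
    have h3 := hmod N
    constructor <;> linarith
  have h' : ∀ r : ℝ, ∃ y, 0 < r → Tendsto (fun k => f (φ k) r) atTop (𝓝 y) := fun r => by
    by_cases hr : 0 < r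
    · obtain ⟨y, hy⟩ := cauchySeq_tendsto_of_complete (key r hr)
      exact ⟨y, fun _ => hy⟩
    · exact ⟨0, fun h => absurd h hr⟩
  choose F hF using h'
  exact ⟨φ, hφ, F, hF⟩

end

section
variable {c D p q m a b : ℝ}

lemma exists_min (P : Par c D p q m a b) {al : ℝ} (hal : Alp D p m al) :
    ∃ f g : ℝ → ℝ, Adm c D p q m f g ∧ In c D f (q + 1) = 1 ∧ In c D f (m + 1) = 1 ∧
    0 < In c D g p ∧
    ∀ f1 g1, Adm c D p q m f1 g1 →
      In c D g p * In c D f1 (m + 1) ^ b ≤ In c D f1 (q + 1) ^ a * In c D g1 p := by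
  have hc := P.hc
  have hD := P.hD
  have hp := P.hp
  have hq := P.hq
  have hm := P.hm
  obtain ⟨β, B, f', g', hA', hQ', hM', hB', hlim', hβ, hmin⟩ := exists_seq P
  set K1 := (D / c) ^ (1 / (q + 1)) with hK1
  set K2 := K1 + 1 / al + B / c with hK2
  have hB0 : 0 ≤ B := (In_nonneg hc (fun r _ => (hA' 0).gnn r) p).trans (hB' 0)
  have hal0 := hal.pos
  have hK10 : 0 ≤ K1 := by positivity
  have hK20 : 0 ≤ K2 := by positivity
  obtain ⟨φ, hφ, F, hF⟩ := subseq_conv P hA' hB' (W := Dom D q al K1 K2)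
    (fun k r hr => (hA' k).dom P hal (hQ' k) (hB' k) hr)
  set f : ℕ → ℝ → ℝ := fun k => f' (φ k) with hf
  set g : ℕ → ℝ → ℝ := fun k => g' (φ k) with hg
  have hA : ∀ k, Adm c D p q m (f k) (g k) := fun k => hA' _
  have hQ : ∀ k, In c D (f k) (q + 1) = 1 := fun k => hQ' _
  have hM : ∀ k, In c D (f k) (m + 1) = 1 := fun k => hM' _
  have hB : ∀ k, In c D (g k) p ≤ B := fun k => hB' _
  have hlim : Tendsto (fun k => In c D (g k) p) atTop (𝓝 β) := hlim'.comp hφ.tendsto_atTop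
  have hdom : ∀ k r, 0 < r → f k r ≤ Dom D q al K1 K2 r :=
    fun k r hr => (hA k).dom P hal (hQ k) (hB k) hr
  have hDint := Dom_int P hal hK10 hK20
  have hm1 : 0 ≤ m + 1 := by linarith
  have hF0 : ∀ r, 0 < r → 0 ≤ F r := fun r hr => ge_of_tendsto' (hF r hr) fun k => (hA k).fnn r hr
  -- limit of M
  have hMF : Integrable (fun r => F r ^ (m + 1)) (nu c D) ∧ In c D F (m + 1) = 1 := by
    have hmeasF : AEStronglyMeasurable (fun r => F r ^ (m + 1)) (nu c D) := by
      refine aestronglyMeasurable_of_tendsto_ae atTop (fun k => (hA k).im.1)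
        (ae_nu_of_pos hc fun r hr => (hF r hr).rpow_const (Or.inr hm1))
    constructor
    · refine Integrable.mono' hDint hmeasF (ae_nu_of_pos hc fun r hr => ?_)
      rw [Real.norm_of_nonneg (Real.rpow_nonneg (hF0 r hr) _)]
      exact Real.rpow_le_rpow (hF0 r hr) (le_of_tendsto' (hF r hr) fun k => hdom k r hr) hm1
    · have h1 : Tendsto (fun k => In c D (f k) (m + 1)) atTop (𝓝 (In c D F (m + 1))) := by
        refine tendsto_integral_of_dominated_convergence _ (fun k => (hA k).im.1) hDint
          (fun k => ae_nu_of_pos hc fun r hr => ?_)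
          (ae_nu_of_pos hc fun r hr => (hF r hr).rpow_const (Or.inr hm1))
        rw [Real.norm_of_nonneg (Real.rpow_nonneg ((hA k).fnn r hr) _)]
        exact Real.rpow_le_rpow ((hA k).fnn r hr) (hdom k r hr) hm1
      simp only [hM] at h1
      exact tendsto_nhds_unique h1 tendsto_const_nhds
  have hQF : Integrable (fun r => F r ^ (q + 1)) (nu c D) ∧ In c D F (q + 1) ≤ 1 :=
    fatou_real (X := fun k r => f k r ^ (q + 1))
      (fun k => ae_nu_of_pos hc fun r hr => Real.rpow_nonneg ((hA k).fnn r hr) _)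
      (fun k => (hA k).iq)
      (ae_nu_of_pos hc fun r hr => (hF r hr).rpow_const (Or.inr (by linarith)))
      (fun k => (hQ k).le)
  -- midpoints
  have hmid : ∀ z : ℕ × ℕ, Adm c D p q m (fun r => (1 - 1/2) * f z.1 r + 1/2 * f z.2 r)
      (fun r => (1 - 1/2) * g z.1 r + 1/2 * g z.2 r) := fun z =>
    (hA z.1).conv (hA z.2) hc hp hq hm (by norm_num) (by norm_num)
  have hmidM : Tendsto (fun z : ℕ × ℕ =>
      In c D (fun r => (1 - 1/2) * f z.1 r + 1/2 * f z.2 r) (m + 1)) atTop (𝓝 1) := by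
    have hMF2 := hMF.2
    suffices hs : Tendsto (fun z : ℕ × ℕ =>
      In c D (fun r => (1 - 1/2) * f z.1 r + 1/2 * f z.2 r) (m + 1)) atTop
        (𝓝 (In c D F (m + 1))) by rwa [hMF2] at hs
    refine tendsto_integral_filter_of_dominated_convergence _
      (Eventually.of_forall fun z => (hmid z).im.1)
      (Eventually.of_forall fun z => ae_nu_of_pos hc fun r hr => ?_) hDint
      (ae_nu_of_pos hc fun r hr => ?_)
    · have h1 := (hmid z).fnn r hr
      rw [Real.norm_of_nonneg (Real.rpow_nonneg h1 _)]
      refine Real.rpow_le_rpow h1 ?_ hm1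
      linarith [hdom z.1 r hr, hdom z.2 r hr]
    · have h1 : Tendsto (fun z : ℕ × ℕ => f z.1 r) atTop (𝓝 (F r)) := by
        rw [← prod_atTop_atTop_eq]; exact (hF r hr).comp tendsto_fst
      have h2 : Tendsto (fun z : ℕ × ℕ => f z.2 r) atTop (𝓝 (F r)) := by
        rw [← prod_atTop_atTop_eq]; exact (hF r hr).comp tendsto_snd
      have h3 := ((h1.const_mul (1 - 1/2)).add (h2.const_mul (1/2))).rpow_const
        (p := m + 1) (Or.inr hm1)
      convert h3 using 3
      ring
  have hmidP : ∀ z : ℕ × ℕ, β * In c D (fun r => (1 - 1/2) * f z.1 r + 1/2 * f z.2 r) (m + 1) ^ b ≤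
      In c D (fun r => (1 - 1/2) * g z.1 r + 1/2 * g z.2 r) p := by
    intro z
    refine (hmin _ _ (hmid z)).trans ?_
    have hP0 : 0 ≤ In c D (fun r => (1 - 1/2) * g z.1 r + 1/2 * g z.2 r) p :=
      In_nonneg hc (fun r _ => (hmid z).gnn r) p
    have hQ1 : In c D (fun r => (1 - 1/2) * f z.1 r + 1/2 * f z.2 r) (q + 1) ≤ 1 := by
      calc _ ≤ ∫ r, ((1 - 1/2) * f z.1 r ^ (q + 1) + 1/2 * f z.2 r ^ (q + 1)) ∂(nu c D) := by
            refine integral_mono_ae (hmid z).iq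
              (((hA z.1).iq.const_mul _).add ((hA z.2).iq.const_mul _))
              (ae_nu_of_pos hc fun r hr => ?_)
            exact conv_pow ((hA z.1).fnn r hr) ((hA z.2).fnn r hr) (by norm_num) (by norm_num)
              (by linarith)
        _ = (1 - 1/2) * In c D (f z.1) (q + 1) + 1/2 * In c D (f z.2) (q + 1) := by
            rw [integral_add ((hA z.1).iq.const_mul _) ((hA z.2).iq.const_mul _),
              integral_const_mul, integral_const_mul]; rfl
        _ = 1 := by rw [hQ, hQ]; norm_num
    have := Real.rpow_le_one (In_nonneg hc (hmid z).fnn (q + 1)) hQ1 P.ha.le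
    exact mul_le_of_le_one_left hP0 this
  have hdiffi : ∀ z : ℕ × ℕ, Integrable (fun r => |g z.1 r - g z.2 r| ^ p) (nu c D) := by
    intro z
    obtain ⟨C, hC, hcl⟩ := clarkson hp one_pos
    have m1 := (hA z.1).gm
    have m2 := (hA z.2).gm
    refine Integrable.mono' ((((hA z.1).ip.add (hA z.2).ip).const_mul 1).add
      (((((hA z.1).ip.add (hA z.2).ip).div_const 2).sub (hmid z).ip).const_mul C))
      (Measurable.aestronglyMeasurable (by fun_prop)) (Eventually.of_forall fun r => ?_)
    rw [Real.norm_of_nonneg (by positivity)]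
    exact hcl _ _ ((hA z.1).gnn r) ((hA z.2).gnn r)
  have hCauchy : Tendsto (fun z : ℕ × ℕ => ∫ r, |g z.1 r - g z.2 r| ^ p ∂(nu c D)) atTop (𝓝 0) := by
    have hd0 : Tendsto (fun z : ℕ × ℕ => (In c D (g z.1) p + In c D (g z.2) p) / 2 -
        β * In c D (fun r => (1 - 1/2) * f z.1 r + 1/2 * f z.2 r) (m + 1) ^ b) atTop (𝓝 0) := by
      have h1 : Tendsto (fun z : ℕ × ℕ => In c D (g z.1) p) atTop (𝓝 β) := by
        rw [← prod_atTop_atTop_eq]; exact hlim.comp tendsto_fst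
      have h2 : Tendsto (fun z : ℕ × ℕ => In c D (g z.2) p) atTop (𝓝 β) := by
        rw [← prod_atTop_atTop_eq]; exact hlim.comp tendsto_snd
      have h3 := ((h1.add h2).div_const 2).sub
        ((hmidM.rpow_const (p := b) (Or.inr P.hb.le)).const_mul β)
      convert h3 using 2
      rw [Real.one_rpow]; ring
    rw [Metric.tendsto_nhds]
    intro ε hε
    set e := ε / (4 * (B + 1)) with he
    have he0 : 0 < e := by positivity
    obtain ⟨C, hC, hcl⟩ := clarkson hp he0
    have hd1 := hd0.const_mul C
    rw [mul_zero] at hd1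
    filter_upwards [hd1.eventually_lt_const (show 0 < ε / 2 by linarith)] with z hz
    rw [Real.dist_eq, sub_zero, abs_of_nonneg (by positivity)]
    have i1 := ((hA z.1).ip.add (hA z.2).ip)
    have h1 : ∫ r, |g z.1 r - g z.2 r| ^ p ∂(nu c D) ≤
        e * (In c D (g z.1) p + In c D (g z.2) p) + C * ((In c D (g z.1) p + In c D (g z.2) p) / 2 -
          In c D (fun r => (1 - 1/2) * g z.1 r + 1/2 * g z.2 r) p) := by
      have h2 : ∫ r, |g z.1 r - g z.2 r| ^ p ∂(nu c D) ≤ ∫ r, (e * (g z.1 r ^ p + g z.2 r ^ p) +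
          C * ((g z.1 r ^ p + g z.2 r ^ p) / 2 - ((1 - 1/2) * g z.1 r + 1/2 * g z.2 r) ^ p))
          ∂(nu c D) := by
        refine integral_mono (hdiffi z) ((i1.const_mul e).add
          (((i1.div_const 2).sub (hmid z).ip).const_mul C)) fun r => ?_
        exact hcl _ _ ((hA z.1).gnn r) ((hA z.2).gnn r)
      refine h2.trans (le_of_eq ?_)
      have j1 : Integrable (fun r => g z.1 r ^ p + g z.2 r ^ p) (nu c D) := i1
      have j2 : Integrable (fun r => (g z.1 r ^ p + g z.2 r ^ p) / 2) (nu c D) := i1.div_const 2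
      have j3 : Integrable (fun r => (g z.1 r ^ p + g z.2 r ^ p) / 2 -
        ((1 - 1/2) * g z.1 r + 1/2 * g z.2 r) ^ p) (nu c D) := j2.sub (hmid z).ip
      rw [integral_add (j1.const_mul e) (j3.const_mul C), integral_const_mul, integral_const_mul,
        integral_sub j2 (hmid z).ip, integral_div, integral_add (hA z.1).ip (hA z.2).ip]
      rfl
    have h3 : C * ((In c D (g z.1) p + In c D (g z.2) p) / 2 -
          In c D (fun r => (1 - 1/2) * g z.1 r + 1/2 * g z.2 r) p) < ε / 2 := by
      refine lt_of_le_of_lt ?_ hz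
      gcongr
      exact hmidP z
    have h4 : e * (In c D (g z.1) p + In c D (g z.2) p) ≤ ε / 2 := by
      calc _ ≤ e * (2 * (B + 1)) := by
            gcongr; linarith [hB z.1, hB z.2]
        _ = ε / 2 := by rw [he]; field_simp; ring
    linarith
  obtain ⟨G, hGm, hG0, hGi, hGd, hGt, hGB⟩ := Lp_complete hp (fun k r => (hA k).gnn r)
    (fun k => (hA k).gm) (fun k => (hA k).ip) hCauchy
  have hPG : In c D G p ≤ β := hGB β hlim
  have hAF : Adm c D p q m F G := by
    refine ⟨hF0, hG0, hGm, fun r s hr hrs => (loc_1 hc hD hp hG0 hGm hGi hr hrs).1, ?_,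
      hQF.1, hMF.1, hGi⟩
    intro r s hr hrs
    have h1 : Tendsto (fun k => f k r - f k s) atTop (𝓝 (F r - F s)) :=
      (hF r hr).sub (hF s (hr.trans_le hrs))
    have hGloc := (loc_1 hc hD hp hG0 hGm hGi hr hrs).1
    have h2 : Tendsto (fun k => f k r - f k s) atTop (𝓝 (∫ t in Ioc r s, G t)) := by
      rw [tendsto_iff_dist_tendsto_zero, Metric.tendsto_nhds]
      intro ε hε
      set K := ε / (2 * (s - r + 1)) with hK
      have hsr : 0 < s - r + 1 := by linarith
      have hK0 : 0 < K := by positivity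
      have h3 := (hGt.div_const (c * r ^ (D - 1))).const_mul (K ^ (1 - p))
      rw [zero_div, mul_zero] at h3
      filter_upwards [h3.eventually_lt_const (show 0 < ε / 2 by linarith)] with k hk
      rw [Real.dist_eq, sub_zero, Real.dist_eq, abs_abs, (hA k).eq r s hr hrs,
        ← integral_sub ((hA k).gi r s hr hrs) hGloc]
      have h4 := (loc_1 hc hD hp (G := fun r => |g k r - G r|) (fun r => abs_nonneg _)
        (((hA k).gm.sub hGm).abs) (hGd k) hr hrs).2 K hK0
      have h5 : |∫ t in Ioc r s, (g k t - G t)| ≤ ∫ t in Ioc r s, |g k t - G t| :=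
        abs_integral_le_integral_abs
      have h6 : K * (s - r) ≤ ε / 2 := by
        calc K * (s - r) ≤ K * (s - r + 1) := by gcongr; linarith
          _ = ε / 2 := by rw [hK]; field_simp
      rw [In] at h4
      linarith
    exact tendsto_nhds_unique h1 h2
  have hPpos : 0 < In c D G p := hAF.posP hc hD hp hq hm (by rw [hMF.2]; exact one_pos)
  have hfin := hmin F G hAF
  rw [hMF.2, Real.one_rpow, mul_one] at hfin
  have hQ0 := In_nonneg hc hF0 (q + 1) (D := D)
  have hQa : In c D F (q + 1) ^ a ≤ 1 := Real.rpow_le_one hQ0 hQF.2 P.ha.le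
  have hQ1 : 1 ≤ In c D F (q + 1) := by
    by_contra hlt
    push Not at hlt
    have : In c D F (q + 1) ^ a < 1 := Real.rpow_lt_one hQ0 hlt P.ha
    have : In c D F (q + 1) ^ a * In c D G p < 1 * In c D G p :=
      mul_lt_mul_of_pos_right this hPpos
    linarith
  refine ⟨F, G, hAF, le_antisymm hQF.2 hQ1, hMF.2, hPpos, fun f1 g1 h1 => ?_⟩
  refine le_trans ?_ (hmin f1 g1 h1)
  have := In_nonneg hc h1.fnn (m + 1) (D := D)
  gcongr

end

section
variable {c D p q m a b : ℝ} {f g : ℝ → ℝ}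

lemma quot_bound {x y n e : ℝ} (hx : 0 ≤ x) (hy : 0 ≤ y) (hn : 1 ≤ n) (he : 0 < e) (he1 : e ≤ 1) :
    |e⁻¹ * (((1 - e) * x + e * y) ^ n - x ^ n)| ≤ y ^ n + n * x ^ n := by
  have h1 := conv_pow hx hy he.le he1 hn
  have h2 : (1 - n * e) * x ^ n ≤ ((1 - e) * x + e * y) ^ n := by
    have h3 := one_add_mul_self_le_rpow_one_add (s := -e) (by linarith) hn
    have h4 : ((1 - e) * x) ^ n ≤ ((1 - e) * x + e * y) ^ n := by
      refine Real.rpow_le_rpow (mul_nonneg (by linarith) hx) ?_ (by linarith)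
      have := mul_nonneg he.le hy
      linarith
    rw [Real.mul_rpow (by linarith) hx] at h4
    refine le_trans ?_ h4
    refine mul_le_mul_of_nonneg_right ?_ (by positivity)
    have e1 : (1 + -e) = 1 - e := by ring
    rw [e1] at h3
    linarith
  have hxn : 0 ≤ x ^ n := by positivity
  have hyn : 0 ≤ y ^ n := by positivity
  have hnx : 0 ≤ n * x ^ n := by positivity
  rw [inv_mul_eq_div, abs_le, le_div_iff₀ he, div_le_iff₀ he]
  constructor
  · nlinarith
  · nlinarith

lemma quot_lim {x y n : ℝ} (hn : 1 ≤ n) :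
    Tendsto (fun e : ℝ => e⁻¹ * (((1 - e) * x + e * y) ^ n - x ^ n)) (𝓝[>] 0)
      (𝓝 (n * (x ^ (n - 1) * (y - x)))) := by
  have h0 : HasDerivAt (fun e : ℝ => (1 - e) * x + e * y) (y - x) 0 := by
    have := (((hasDerivAt_id (0:ℝ)).const_sub 1).mul_const x).add ((hasDerivAt_id (0:ℝ)).mul_const y)
    refine this.congr_deriv ?_
    ring
  have h1 := h0.rpow_const (p := n) (Or.inr hn)
  have h2 := (hasDerivAt_iff_tendsto_slope_zero.1 h1).mono_left
    (nhdsWithin_mono 0 (show Ioi (0:ℝ) ⊆ {0}ᶜ from fun e he => ne_of_gt he))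
  simp only [zero_add, smul_eq_mul, sub_zero, one_mul, zero_mul, add_zero] at h2
  have e : n * (x ^ (n - 1) * (y - x)) = (y - x) * n * x ^ (n - 1) := by ring
  rw [e]
  exact h2

lemma varn (hc : 0 < c) {n : ℝ} (hn : 1 ≤ n) {X Y : ℝ → ℝ} (hX : ∀ r, 0 < r → 0 ≤ X r)
    (hY : ∀ r, 0 < r → 0 ≤ Y r) (mX : AEMeasurable X (nu c D)) (mY : AEMeasurable Y (nu c D))
    (iX : Integrable (fun r => X r ^ n) (nu c D)) (iY : Integrable (fun r => Y r ^ n) (nu c D)) :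
    Integrable (fun r => X r ^ (n - 1) * (Y r - X r)) (nu c D) ∧
    HasDerivWithinAt (fun e => In c D (fun r => (1 - e) * X r + e * Y r) n)
      (n * ∫ r, X r ^ (n - 1) * (Y r - X r) ∂(nu c D)) (Ioi 0) 0 := by
  have hB : Integrable (fun r => Y r ^ n + n * X r ^ n) (nu c D) := iY.add (iX.const_mul n)
  have hev : ∀ᶠ e : ℝ in 𝓝[>] 0, 0 < e ∧ e ≤ 1 :=
    (eventually_mem_nhdsWithin.and ((eventually_le_nhds one_pos).filter_mono nhdsWithin_le_nhds))
  constructor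
  · have h0 : n ≠ 0 := by linarith
    have : Integrable (fun r => n * (X r ^ (n - 1) * (Y r - X r))) (nu c D) := by
      refine Integrable.mono' hB ?_ (ae_nu_of_pos hc fun r hr => ?_)
      · exact (((mX.pow_const _).mul (mY.sub mX)).const_mul n).aestronglyMeasurable
      · refine le_of_tendsto (quot_lim (x := X r) (y := Y r) hn).norm ?_
        filter_upwards [hev] with e he
        exact quot_bound (hX r hr) (hY r hr) hn he.1 he.2
    have h1 := this.const_mul n⁻¹
    refine h1.congr (Eventually.of_forall fun r => ?_)
    simp only
    rw [← mul_assoc, inv_mul_cancel₀ h0, one_mul]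
  · rw [hasDerivWithinAt_iff_tendsto_slope' (by simp)]
    rw [← integral_const_mul]
    have h1 : Tendsto (fun e : ℝ => ∫ r, e⁻¹ * (((1 - e) * X r + e * Y r) ^ n - X r ^ n) ∂(nu c D))
        (𝓝[>] 0) (𝓝 (∫ r, n * (X r ^ (n - 1) * (Y r - X r)) ∂(nu c D))) := by
      refine tendsto_integral_filter_of_dominated_convergence _ ?_ ?_ hB ?_
      · refine Eventually.of_forall fun e => ?_
        exact (((((mX.const_mul _).add (mY.const_mul _)).pow_const n).sub
          (mX.pow_const n)).const_mul _).aestronglyMeasurable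
      · filter_upwards [hev] with e he
        exact ae_nu_of_pos hc fun r hr => quot_bound (hX r hr) (hY r hr) hn he.1 he.2
      · exact ae_nu_of_pos hc fun r hr => quot_lim hn
    refine h1.congr' ?_
    filter_upwards [hev] with e he
    rw [integral_const_mul, integral_sub (pow_conv_int hc hn hX hY mX mY iX iY he.1.le he.2) iX,
      slope_def_field, inv_mul_eq_div]
    simp [In]

lemma first_var (P : Par c D p q m a b) (h : Adm c D p q m f g) (hQ : In c D f (q + 1) = 1)
    (hM : In c D f (m + 1) = 1)
    (hmin : ∀ f1 g1, Adm c D p q m f1 g1 →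
      In c D g p * In c D f1 (m + 1) ^ b ≤ In c D f1 (q + 1) ^ a * In c D g1 p)
    {f1 g1 : ℝ → ℝ} (h1 : Adm c D p q m f1 g1) :
    Integrable (fun r => f r ^ m * (f1 r - f r)) (nu c D) ∧
    Integrable (fun r => f r ^ q * (f1 r - f r)) (nu c D) ∧
    Integrable (fun r => g r ^ (p - 1) * (g1 r - g r)) (nu c D) ∧
    In c D g p * b * (m + 1) * ∫ r, f r ^ m * (f1 r - f r) ∂(nu c D) -
      In c D g p * a * (q + 1) * ∫ r, f r ^ q * (f1 r - f r) ∂(nu c D) ≤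
      p * ∫ r, g r ^ (p - 1) * (g1 r - g r) ∂(nu c D) := by
  have hc := P.hc
  have hp := P.hp
  have hq := P.hq
  have hm := P.hm
  obtain ⟨iM, dM⟩ := varn hc (show 1 ≤ m + 1 by linarith) h.fnn h1.fnn h.fm h1.fm h.im h1.im
  obtain ⟨iQ, dQ⟩ := varn hc (show 1 ≤ q + 1 by linarith) h.fnn h1.fnn h.fm h1.fm h.iq h1.iq
  obtain ⟨iP, dP⟩ := varn hc hp.le (fun r _ => h.gnn r) (fun r _ => h1.gnn r) h.gm.aemeasurable
    h1.gm.aemeasurable h.ip h1.ip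
  simp only [add_sub_cancel_right] at iM dM iQ dQ
  refine ⟨iM, iQ, iP, ?_⟩
  have eX : ∀ X Y : ℝ → ℝ, (fun r => (1 - (0:ℝ)) * X r + 0 * Y r) = X := fun X Y => by simp
  have dM' := dM.rpow_const (p := b) (Or.inl (by rw [eX, hM]; norm_num))
  have dQ' := dQ.rpow_const (p := a) (Or.inl (by rw [eX, hQ]; norm_num))
  have dT := (dQ'.mul dP).sub (dM'.const_mul (In c D g p))
  have hev : ∀ᶠ e : ℝ in 𝓝[>] 0, 0 < e ∧ e ≤ 1 :=
    (eventually_mem_nhdsWithin.and ((eventually_le_nhds one_pos).filter_mono nhdsWithin_le_nhds))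
  rw [hasDerivWithinAt_iff_tendsto_slope' (by simp)] at dT
  have hnn := ge_of_tendsto dT (b := 0) (by
    filter_upwards [hev] with e he
    rw [slope_def_field]
    refine div_nonneg ?_ (by linarith [he.1])
    have := hmin _ _ (h.conv h1 hc hp hq hm he.1.le he.2)
    simp only [Pi.sub_apply, Pi.mul_apply, eX, hQ, hM, Real.one_rpow]
    linarith)
  simp only [eX, hQ, hM, Real.one_rpow] at hnn
  linarith

end

section
variable {c D p q m a b : ℝ} {f g : ℝ → ℝ}

noncomputable def wk (c D : ℝ) (k : ℝ → ℝ) : ℝ → ℝ :=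
  (Ioi (0:ℝ)).indicator (fun s => c * s ^ (D - 1) * k s)

noncomputable def psi (c D : ℝ) (k : ℝ → ℝ) (r : ℝ) : ℝ := ∫ s in (0:ℝ)..r, wk c D k s

noncomputable def GG (c D p : ℝ) (k : ℝ → ℝ) (r : ℝ) : ℝ :=
  (max (psi c D k r) 0 / (p * (c * r ^ (D - 1)))) ^ (1 / (p - 1))

lemma wk_int {k : ℝ → ℝ} (hk : ∀ R, IntegrableOn (fun r => c * r ^ (D - 1) * k r) (Ioc 0 R))
    (x y : ℝ) : IntervalIntegrable (wk c D k) volume x y := by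
  have h0 : ∀ R, IntegrableOn (wk c D k) (Iic R) := by
    intro R
    rw [IntegrableOn, wk, integrable_indicator_iff measurableSet_Ioi, IntegrableOn,
      Measure.restrict_restrict measurableSet_Ioi]
    exact hk R
  rw [intervalIntegrable_iff]
  exact (h0 (max x y)).mono_set fun t ht => ht.2

lemma psi_cont {k : ℝ → ℝ} (hk : ∀ R, IntegrableOn (fun r => c * r ^ (D - 1) * k r) (Ioc 0 R)) :
    Continuous (psi c D k) :=
  intervalIntegral.continuous_primitive (wk_int hk) 0

lemma psi_eq {k : ℝ → ℝ} {r : ℝ} (hr : 0 ≤ r) :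
    psi c D k r = ∫ s in Ioc 0 r, c * s ^ (D - 1) * k s := by
  rw [psi, intervalIntegral.integral_of_le hr]
  refine setIntegral_congr_fun measurableSet_Ioc fun s hs => ?_
  simp [wk, hs.1]

lemma psi_neg {k : ℝ → ℝ} {r : ℝ} (hr : r ≤ 0) : psi c D k r = 0 := by
  rw [psi, intervalIntegral.integral_of_ge hr, neg_eq_zero]
  refine setIntegral_eq_zero_of_forall_eq_zero fun s hs => ?_
  have : ¬ (0 < s) := not_lt.2 hs.2
  simp [wk, this]

lemma GG_neg (hp : 1 < p) {k : ℝ → ℝ} {r : ℝ} (hr : r ≤ 0) : GG c D p k r = 0 := by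
  have : 1 / (p - 1) ≠ 0 := by
    have : 0 < p - 1 := by linarith
    positivity
  rw [GG, psi_neg hr, max_self, zero_div, Real.zero_rpow this]

lemma GG_nonneg (hc : 0 < c) (hp : 1 < p) {k : ℝ → ℝ} (r : ℝ) : 0 ≤ GG c D p k r := by
  rcases le_or_gt r 0 with h | h
  · rw [GG_neg hp h]
  · rw [GG]
    have : 0 < p := by linarith
    positivity

lemma GG_meas {k : ℝ → ℝ} (hk : ∀ R, IntegrableOn (fun r => c * r ^ (D - 1) * k r) (Ioc 0 R)) :
    Measurable (GG c D p k) := by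
  have := (psi_cont hk).measurable
  unfold GG
  fun_prop

lemma GG_cont (hc : 0 < c) (hp : 1 < p) {k : ℝ → ℝ}
    (hk : ∀ R, IntegrableOn (fun r => c * r ^ (D - 1) * k r) (Ioc 0 R)) :
    ContinuousOn (GG c D p k) (Ioi 0) := by
  have h1 := (psi_cont hk).continuousOn (s := Ioi 0)
  have : 0 ≤ 1 / (p - 1) := by
    have : 0 < p - 1 := by linarith
    positivity
  have hp0 : 0 < p := by linarith
  refine ContinuousOn.rpow_const ?_ fun _ _ => Or.inr this
  refine ContinuousOn.div (h1.sup continuousOn_const) ?_ fun r hr => ?_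
  · refine continuousOn_const.mul (continuousOn_const.mul ?_)
    exact continuousOn_id.rpow_const fun r hr => Or.inl (ne_of_gt hr)
  · have hr : 0 < r := hr
    positivity

/-- perturbation `h` supported in `(r0, r1]`, with `g + h ≥ 0` and bounded there. -/
lemma perturb (hc : 0 < c) (hD : 1 ≤ D) (hp : 1 < p) (hq : 0 ≤ q) (hm : q < m)
    (h : Adm c D p q m f g) {r0 r1 C : ℝ} (hr0 : 0 < r0) (hr : r0 ≤ r1) {G : ℝ → ℝ}
    (hG0 : ∀ r, 0 ≤ G r) (hGm : Measurable G) (hC : ∀ r ∈ Ioc r0 r1, G r ≤ C) (hC0 : 0 ≤ C) :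
    Integrable ((Ioc r0 r1).indicator (fun s => G s - g s)) ∧
    Adm c D p q m (fun r => f r + ∫ s in Ioi r, (Ioc r0 r1).indicator (fun s => G s - g s) s)
      (fun r => g r + (Ioc r0 r1).indicator (fun s => G s - g s) r) := by
  set hh := (Ioc r0 r1).indicator (fun s => G s - g s) with hhh
  have hr1 : 0 < r1 := hr0.trans_le hr
  have hhi : Integrable hh := by
    rw [hhh, integrable_indicator_iff measurableSet_Ioc]
    refine Integrable.sub ?_ (h.gi r0 r1 hr0 hr)
    refine Integrable.mono' (integrable_const C) hGm.aestronglyMeasurable ?_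
    refine (ae_restrict_iff' measurableSet_Ioc).2 (Eventually.of_forall fun r hr => ?_)
    rw [Real.norm_of_nonneg (hG0 r)]
    exact hC r hr
  refine ⟨hhi, ?_⟩
  set H : ℝ → ℝ := fun r => ∫ s in Ioi r, hh s with hH
  have hHeq : ∀ r s, r ≤ s → H r - H s = ∫ t in Ioc r s, hh t := by
    intro r s hrs
    have h1 := setIntegral_union (μ := volume) (f := hh) (Ioc_disjoint_Ioi_same (a := r) (b := s))
      measurableSet_Ioi hhi.integrableOn hhi.integrableOn
    rw [Ioc_union_Ioi_eq_Ioi hrs] at h1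
    simp only [hH]
    linarith
  have hg1 : ∀ r, 0 ≤ g r + hh r := by
    intro r
    by_cases hr : r ∈ Ioc r0 r1
    · simp only [hhh, hr, indicator_of_mem]; linarith [hG0 r]
    · simp only [hhh, hr, not_false_eq_true, indicator_of_notMem, add_zero]; exact h.gnn r
  have hgm1 : Measurable fun r => g r + hh r :=
    h.gm.add ((hGm.sub h.gm).indicator measurableSet_Ioc)
  have hgi1 : ∀ r s, 0 < r → r ≤ s → IntegrableOn (fun r => g r + hh r) (Ioc r s) :=
    fun r s hr hrs => (h.gi r s hr hrs).add hhi.integrableOn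
  have heq1 : ∀ r s, 0 < r → r ≤ s → (f r + H r) - (f s + H s) = ∫ t in Ioc r s, (g t + hh t) := by
    intro r s hr hrs
    rw [integral_add (h.gi r s hr hrs) hhi.integrableOn, ← h.eq r s hr hrs, ← hHeq r s hrs]
    ring
  have hH1 : ∀ r, r1 ≤ r → H r = 0 := by
    intro r hr
    refine setIntegral_eq_zero_of_forall_eq_zero fun s hs => ?_
    rw [hhh, indicator_of_notMem]
    intro h2
    exact absurd h2.2 (not_le.2 (hr.trans_lt hs))
  have hfnn1 : ∀ r, 0 < r → 0 ≤ f r + H r := by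
    intro r hr
    rcases le_total r1 r with h1 | h1
    · rw [hH1 r h1, add_zero]; exact h.fnn r hr
    · have h2 := heq1 r r1 hr h1
      have h3 : 0 ≤ ∫ t in Ioc r r1, (g t + hh t) := integral_nonneg hg1
      have h4 := h.fnn r1 hr1
      rw [hH1 r1 le_rfl] at h2
      linarith
  have hanti : AntitoneOn (fun r => f r + H r) (Ioi 0) := by
    intro r hr s hs hrs
    have h2 := heq1 r s hr hrs
    have h3 : 0 ≤ ∫ t in Ioc r s, (g t + hh t) := integral_nonneg hg1
    simp only
    linarith
  set K := ∫ s, |hh s| with hK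
  have hK0 : 0 ≤ K := integral_nonneg fun _ => abs_nonneg _
  have hHK : ∀ r, H r ≤ K := by
    intro r
    refine (le_abs_self _).trans (abs_integral_le_integral_abs.trans ?_)
    exact setIntegral_le_integral hhi.abs (Eventually.of_forall fun _ => abs_nonneg _)
  have hpow : ∀ n : ℝ, 1 ≤ n → Integrable (fun r => f r ^ n) (nu c D) →
      Integrable (fun r => (f r + H r) ^ n) (nu c D) := by
    intro n hn hi
    have hY : Integrable (fun r => ((Ioc 0 r1).indicator (fun _ => K) r) ^ n) (nu c D) := by
      refine (nu_const_zero (K := K ^ n) hc hD hr1).congr (Eventually.of_forall fun r => ?_)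
      by_cases hr : r ∈ Ioc 0 r1
      · simp [hr]
      · simp [hr, Real.zero_rpow (show n ≠ 0 by linarith)]
    have h1 := pow_conv_int (X := f) (Y := (Ioc 0 r1).indicator (fun _ => K)) (t := 1/2) hc hn h.fnn
      (fun r _ => indicator_nonneg (fun _ _ => hK0) r) h.fm
      (measurable_const.indicator measurableSet_Ioc).aemeasurable hi hY (by norm_num) (by norm_num)
    refine Integrable.mono' (h1.const_mul (2 ^ n))
      ((meas_of_anti hanti).pow_const n).aestronglyMeasurable (ae_nu_of_pos hc fun r hr => ?_)
    have h3 := h.fnn r hr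
    have h4 : 0 ≤ (Ioc 0 r1).indicator (fun _ => K) r := indicator_nonneg (fun _ _ => hK0) r
    rw [Real.norm_of_nonneg (Real.rpow_nonneg (hfnn1 r hr) _),
      ← Real.mul_rpow (by norm_num) (by positivity)]
    refine Real.rpow_le_rpow (hfnn1 r hr) ?_ (by linarith)
    have h5 : H r ≤ (Ioc 0 r1).indicator (fun _ => K) r := by
      rcases le_or_gt r r1 with h6 | h6
      · have : r ∈ Ioc 0 r1 := ⟨hr, h6⟩
        simp only [this, indicator_of_mem]; exact hHK r
      · rw [hH1 r h6.le]; exact h4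
    linarith
  refine ⟨hfnn1, hg1, hgm1, hgi1, heq1, hpow _ (by linarith) h.iq, hpow _ (by linarith) h.im, ?_⟩
  refine Integrable.mono' (h.ip.add (nu_const_zero (K := C ^ p) hc hD hr1))
    (hgm1.pow_const p).aestronglyMeasurable (Eventually.of_forall fun r => ?_)
  rw [Real.norm_of_nonneg (Real.rpow_nonneg (hg1 r) _)]
  simp only [Pi.add_apply]
  have hgp := Real.rpow_nonneg (h.gnn r) p
  by_cases hr : r ∈ Ioc r0 r1
  · have hr' : r ∈ Ioc 0 r1 := ⟨hr0.trans hr.1, hr.2⟩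
    simp only [hhh, hr, hr', indicator_of_mem, add_sub_cancel]
    have := Real.rpow_le_rpow (hG0 r) (hC r hr) (show 0 ≤ p by linarith)
    linarith
  · simp only [hhh, hr, not_false_eq_true, indicator_of_notMem, add_zero]
    have : 0 ≤ (Ioc 0 r1).indicator (fun _ => C ^ p) r :=
      indicator_nonneg (fun _ _ => Real.rpow_nonneg hC0 _) r
    linarith

end

section
variable {c D p q m a b : ℝ} {f g : ℝ → ℝ}

lemma fub {r0 r1 : ℝ} (hc : 0 < c) (hr0 : 0 < r0) (hr : r0 ≤ r1) {k h : ℝ → ℝ}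
    (hk : ∀ R, IntegrableOn (fun r => c * r ^ (D - 1) * k r) (Ioc 0 R))
    (hi : Integrable h) (hs : ∀ r, r ∉ Ioc r0 r1 → h r = 0) :
    Integrable (fun s => psi c D k s * h s) ∧
    ∫ r, k r * (∫ s in Ioi r, h s) ∂(nu c D) = ∫ s, psi c D k s * h s := by
  set kk : ℝ → ℝ := (Ioc 0 r1).indicator (fun r => c * r ^ (D - 1) * k r) with hkk
  have hkki : Integrable kk := by
    rw [hkk, integrable_indicator_iff measurableSet_Ioc]
    exact hk r1
  set F : ℝ × ℝ → ℝ := {z : ℝ × ℝ | z.1 < z.2}.indicator (fun z => kk z.1 * h z.2) with hF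
  have hFi : Integrable F (volume.prod volume) :=
    (hkki.mul_prod hi).indicator (measurableSet_lt measurable_fst measurable_snd)
  have h1 : ∀ s, ∫ r, F (r, s) = psi c D k s * h s := by
    intro s
    by_cases hs' : s ∈ Ioc r0 r1
    · have e : ∀ r, F (r, s) = (Ioo 0 s).indicator (fun r => c * r ^ (D - 1) * k r) r * h s := by
        intro r
        simp only [hF, hkk, indicator, mem_setOf_eq, mem_Ioc, mem_Ioo]
        by_cases h1 : r < s
        · by_cases h2 : 0 < r
          · simp [h1, h2, h1.le.trans hs'.2]
          · simp [h1, h2]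
        · simp [h1]
      simp only [e]
      rw [integral_mul_const, integral_indicator measurableSet_Ioo, psi_eq (hr0.trans hs'.1).le,
        integral_Ioc_eq_integral_Ioo]
    · simp [hF, indicator, hs s hs']
  have h2 : ∀ r, ∫ s, F (r, s) = kk r * ∫ s in Ioi r, h s := by
    intro r
    have e : ∀ s, F (r, s) = kk r * (Ioi r).indicator h s := by
      intro s
      simp only [hF, indicator, mem_setOf_eq, mem_Ioi]
      by_cases h1 : r < s <;> simp [h1]
    simp only [e]
    rw [integral_const_mul, integral_indicator measurableSet_Ioi]
  constructor
  · have := hFi.integral_prod_right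
    simpa only [h1] using this
  · have h3 := integral_integral_swap (f := fun r s => F (r, s)) (by simpa [Function.uncurry_def] using hFi)
    simp only [h1, h2] at h3
    rw [← h3, integral_nu hc, ← integral_indicator measurableSet_Ioi]
    refine integral_congr_ae (Eventually.of_forall fun r => ?_)
    simp only [hkk, indicator, mem_Ioi, mem_Ioc]
    by_cases h4 : 0 < r
    · by_cases h5 : r ≤ r1
      · simp [h4, h5]; ring
      · have : ∫ s in Ioi r, h s = 0 := by
          refine setIntegral_eq_zero_of_forall_eq_zero fun s hs' => hs s fun h6 => ?_
          exact absurd h6.2 (not_le.2 ((not_le.1 h5).trans hs'))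
        simp [this]
    · simp [h4]

lemma sign_fact {p w x ps : ℝ} (hp : 1 < p) (hw : 0 < w) (hx : 0 ≤ x) :
    (p * w * x ^ (p - 1) - ps) * ((max ps 0 / (p * w)) ^ (1 / (p - 1)) - x) ≤ 0 ∧
    ((p * w * x ^ (p - 1) - ps) * ((max ps 0 / (p * w)) ^ (1 / (p - 1)) - x) = 0 →
      x = (max ps 0 / (p * w)) ^ (1 / (p - 1))) := by
  have hp1 : 0 < p - 1 := by linarith
  have hpw : 0 < p * w := by positivity
  set y := (max ps 0 / (p * w)) ^ (1 / (p - 1)) with hy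
  have hy0 : 0 ≤ y := by positivity
  have hyp : p * w * y ^ (p - 1) = max ps 0 := by
    rw [hy, ← Real.rpow_mul (by positivity), one_div_mul_cancel hp1.ne', Real.rpow_one]
    field_simp
  rcases lt_trichotomy x y with h | h | h
  · have h1 : x ^ (p - 1) < y ^ (p - 1) := Real.rpow_lt_rpow hx h hp1
    have h2 : p * w * x ^ (p - 1) < max ps 0 := by rw [← hyp]; gcongr
    have h3 : 0 < max ps 0 := lt_of_le_of_lt (by positivity) h2
    have h4 : max ps 0 = ps := by
      rcases le_total ps 0 with h5 | h5
      · rw [max_eq_right h5] at h3; exact absurd h3 (lt_irrefl _)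
      · exact max_eq_left h5
    have h5 : (p * w * x ^ (p - 1) - ps) * (y - x) < 0 :=
      mul_neg_of_neg_of_pos (by linarith) (by linarith)
    exact ⟨h5.le, fun h6 => absurd h6 h5.ne⟩
  · exact ⟨by simp [h], fun _ => h⟩
  · have h1 : y ^ (p - 1) < x ^ (p - 1) := Real.rpow_lt_rpow hy0 h hp1
    have h2 : max ps 0 < p * w * x ^ (p - 1) := by rw [← hyp]; gcongr
    have h3 := le_max_left ps 0
    have h5 : (p * w * x ^ (p - 1) - ps) * (y - x) < 0 :=
      mul_neg_of_pos_of_neg (by linarith) (by linarith)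
    exact ⟨h5.le, fun h6 => absurd h6 h5.ne⟩

lemma EL_loc (hc : 0 < c) (hD : 1 ≤ D) (hp : 1 < p) (hq : 0 ≤ q) (hm : q < m)
    (h : Adm c D p q m f g) {k : ℝ → ℝ}
    (hk : ∀ R, IntegrableOn (fun r => c * r ^ (D - 1) * k r) (Ioc 0 R))
    (hvar : ∀ f1 g1, Adm c D p q m f1 g1 →
      Integrable (fun r => g r ^ (p - 1) * (g1 r - g r)) (nu c D) ∧
      ∫ r, k r * (f1 r - f r) ∂(nu c D) ≤ p * ∫ r, g r ^ (p - 1) * (g1 r - g r) ∂(nu c D))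
    {r0 r1 : ℝ} (hr0 : 0 < r0) (hr : r0 ≤ r1) :
    ∀ᵐ r ∂(volume.restrict (Ioc r0 r1)), g r = GG c D p k r := by
  obtain ⟨C, hC⟩ : ∃ C, ∀ r ∈ Icc r0 r1, GG c D p k r ≤ C := by
    have h1 : ContinuousOn (GG c D p k) (Icc r0 r1) :=
      (GG_cont hc hp hk).mono fun r hr => hr0.trans_le hr.1
    obtain ⟨C, hC⟩ := (isCompact_Icc.image_of_continuousOn h1).bddAbove
    exact ⟨C, fun r hr => hC ⟨r, hr, rfl⟩⟩
  have hC0 : 0 ≤ C := (GG_nonneg hc hp r0).trans (hC r0 ⟨le_rfl, hr⟩)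
  obtain ⟨hhi, hadm⟩ := perturb hc hD hp hq hm h hr0 hr (G := GG c D p k) (GG_nonneg hc hp)
    (GG_meas hk) (fun r hr => hC r ⟨hr.1.le, hr.2⟩) hC0
  obtain ⟨hi1, hle⟩ := hvar _ _ hadm
  set hh := (Ioc r0 r1).indicator (fun s => GG c D p k s - g s) with hhh
  simp only [add_sub_cancel_left] at hi1 hle
  obtain ⟨hi2, hfub⟩ := fub hc hr0 hr hk hhi (fun r hr => by simp [hhh, hr])
  rw [hfub, integral_nu hc, ← integral_indicator measurableSet_Ioi, ← integral_const_mul] at hle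
  rw [integrable_nu hc, ← integrable_indicator_iff measurableSet_Ioi] at hi1
  have hi3 := hi1.const_mul p
  have e : ∀ r, p * (Ioi (0:ℝ)).indicator (fun r => c * r ^ (D - 1) * (g r ^ (p - 1) * hh r)) r -
      psi c D k r * hh r = (Ioc r0 r1).indicator (fun r =>
        (p * (c * r ^ (D - 1)) * g r ^ (p - 1) - psi c D k r) * (GG c D p k r - g r)) r := by
    intro r
    by_cases h1 : r ∈ Ioc r0 r1
    · have h2 : r ∈ Ioi (0:ℝ) := hr0.trans h1.1
      simp only [hhh, h1, h2, indicator_of_mem]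
      ring
    · by_cases h2 : r ∈ Ioi (0:ℝ)
      · simp [hhh, h1]
      · simp [hhh, h1]
  have h0 : 0 ≤ ∫ r, (Ioc r0 r1).indicator (fun r =>
        (p * (c * r ^ (D - 1)) * g r ^ (p - 1) - psi c D k r) * (GG c D p k r - g r)) r := by
    simp only [← e]
    rw [integral_sub hi3 hi2]
    linarith
  have hi4 : Integrable ((Ioc r0 r1).indicator (fun r =>
        (p * (c * r ^ (D - 1)) * g r ^ (p - 1) - psi c D k r) * (GG c D p k r - g r))) := by
    have := hi3.sub hi2
    refine this.congr (Eventually.of_forall fun r => ?_)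
    exact e r
  rw [integral_indicator measurableSet_Ioc] at h0
  rw [integrable_indicator_iff measurableSet_Ioc] at hi4
  have hnp : ∀ r ∈ Ioc r0 r1, 0 ≤ -((p * (c * r ^ (D - 1)) * g r ^ (p - 1) - psi c D k r) *
      (GG c D p k r - g r)) := by
    intro r hr'
    have hr2 : 0 < r := hr0.trans hr'.1
    have := (sign_fact (ps := psi c D k r) hp (show 0 < c * r ^ (D - 1) by positivity) (h.gnn r)).1
    rw [GG]
    linarith
  have hz : ∫ r in Ioc r0 r1, -((p * (c * r ^ (D - 1)) * g r ^ (p - 1) - psi c D k r) *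
      (GG c D p k r - g r)) = 0 := by
    refine le_antisymm ?_ (setIntegral_nonneg measurableSet_Ioc hnp)
    rw [integral_neg]
    linarith
  rw [setIntegral_eq_zero_iff_of_nonneg_ae
    ((ae_restrict_iff' measurableSet_Ioc).2 (Eventually.of_forall hnp)) hi4.neg] at hz
  rw [EventuallyEq, ae_restrict_iff' measurableSet_Ioc] at hz
  rw [ae_restrict_iff' measurableSet_Ioc]
  filter_upwards [hz] with r hz hr'
  have hr2 : 0 < r := hr0.trans hr'.1
  have h1 := hz hr'
  simp only [Pi.zero_apply, neg_eq_zero] at h1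
  exact (sign_fact (ps := psi c D k r) hp (show 0 < c * r ^ (D - 1) by positivity) (h.gnn r)).2 h1

lemma EL (hc : 0 < c) (hD : 1 ≤ D) (hp : 1 < p) (hq : 0 ≤ q) (hm : q < m)
    (h : Adm c D p q m f g) {k : ℝ → ℝ}
    (hk : ∀ R, IntegrableOn (fun r => c * r ^ (D - 1) * k r) (Ioc 0 R))
    (hvar : ∀ f1 g1, Adm c D p q m f1 g1 →
      Integrable (fun r => g r ^ (p - 1) * (g1 r - g r)) (nu c D) ∧
      ∫ r, k r * (f1 r - f r) ∂(nu c D) ≤ p * ∫ r, g r ^ (p - 1) * (g1 r - g r) ∂(nu c D)) :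
    Adm c D p q m f (GG c D p k) ∧ In c D (GG c D p k) p = In c D g p := by
  have hloc := fun (r s : ℝ) (hr : 0 < r) (hrs : r ≤ s) =>
    EL_loc hc hD hp hq hm h hk hvar hr hrs
  have hae : ∀ᵐ r ∂(nu c D), g r = GG c D p k r := by
    rw [ae_nu hc]
    have hU : Ioi (0:ℝ) ⊆ ⋃ n : ℕ, Ioc (1 / ((n:ℝ) + 1)) ((n:ℝ) + 1) := by
      intro r hr
      have hr : 0 < r := hr
      obtain ⟨n1, h1⟩ := exists_nat_one_div_lt hr
      obtain ⟨n2, h2⟩ := exists_nat_ge r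
      refine mem_iUnion.2 ⟨max n1 n2, ?_, ?_⟩
      · refine lt_of_le_of_lt ?_ h1
        refine one_div_le_one_div_of_le (by positivity) ?_
        have : (n1 : ℝ) ≤ (max n1 n2 : ℕ) := by exact_mod_cast le_max_left _ _
        linarith
      · have : (n2 : ℝ) ≤ (max n1 n2 : ℕ) := by exact_mod_cast le_max_right _ _
        linarith
    refine ae_restrict_of_ae_restrict_of_subset hU ?_
    rw [ae_restrict_iUnion_iff]
    intro n
    have hn : (0:ℝ) ≤ n := n.cast_nonneg
    refine hloc _ _ (by positivity) ?_
    rw [div_le_iff₀ (by positivity)]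
    nlinarith
  have hip : (fun r => g r ^ p) =ᵐ[nu c D] (fun r => GG c D p k r ^ p) := by
    filter_upwards [hae] with r hr
    rw [hr]
  refine ⟨⟨h.fnn, GG_nonneg hc hp, GG_meas hk, fun r s hr hrs => ?_, fun r s hr hrs => ?_,
    h.iq, h.im, h.ip.congr hip⟩, ?_⟩
  · exact Integrable.congr (h.gi r s hr hrs) (hloc r s hr hrs)
  · rw [h.eq r s hr hrs]
    exact integral_congr_ae (hloc r s hr hrs)
  · exact (integral_congr_ae hip).symm

end

section
variable {c D p q m a b : ℝ} {f g : ℝ → ℝ}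

lemma pow_int0 {e r : ℝ} (he : -1 < e) (hr : 0 ≤ r) (K : ℝ) :
    IntegrableOn (fun t : ℝ => K * t ^ e) (Ioc 0 r) ∧
    ∫ t in Ioc 0 r, K * t ^ e = K * (r ^ (e + 1) / (e + 1)) := by
  have hi := (intervalIntegral.intervalIntegrable_rpow' (a := 0) (b := r) he).const_mul K
  refine ⟨(intervalIntegrable_iff_integrableOn_Ioc_of_le hr).1 hi, ?_⟩
  rw [← intervalIntegral.integral_of_le hr, intervalIntegral.integral_const_mul,
    integral_rpow (Or.inl he), Real.zero_rpow (by linarith), sub_zero]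

lemma G_bound (hc : 0 < c) (hp : 1 < p) (hm0 : 0 ≤ m) {k : ℝ → ℝ} {K α B : ℝ} (hB : 0 ≤ B)
    (hk : ∀ R, IntegrableOn (fun r => c * r ^ (D - 1) * k r) (Ioc 0 R))
    (hkf : ∀ r, 0 < r → k r ≤ B * f r ^ m) (hf0 : ∀ r, 0 < r → 0 ≤ f r)
    (hK : 0 ≤ K) (hmα : m * α < D) (hf : ∀ s, 0 < s → s ≤ 1 → f s ≤ K * s ^ (-α)) :
    ∃ C, 0 ≤ C ∧ ∀ r, 0 < r → r ≤ 1 → GG c D p k r ≤ C * r ^ ((1 - m * α) / (p - 1)) := by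
  have hp1 : 0 < p - 1 := by linarith
  have hp0 : 0 < p := by linarith
  have hDm : 0 < D - m * α := by linarith
  refine ⟨(B * K ^ m / (D - m * α) / p) ^ (1 / (p - 1)), by positivity, fun r hr hr1 => ?_⟩
  obtain ⟨i1, i2⟩ := pow_int0 (e := D - 1 - m * α) (r := r) (by linarith) hr.le (c * B * K ^ m)
  have h1 : psi c D k r ≤ c * B * K ^ m * (r ^ (D - m * α) / (D - m * α)) := by
    rw [psi_eq hr.le]
    have e : D - 1 - m * α + 1 = D - m * α := by ring
    rw [e] at i2
    rw [← i2]
    refine setIntegral_mono_on (hk r) i1 measurableSet_Ioc fun s hs => ?_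
    have hs0 : 0 < s := hs.1
    have h2 := hkf s hs0
    have h3 : f s ^ m ≤ (K * s ^ (-α)) ^ m :=
      Real.rpow_le_rpow (hf0 s hs0) (hf s hs0 (hs.2.trans hr1)) hm0
    rw [Real.mul_rpow hK (by positivity), ← Real.rpow_mul hs0.le] at h3
    calc c * s ^ (D - 1) * k s ≤ c * s ^ (D - 1) * (B * (K ^ m * s ^ (-α * m))) := by
          gcongr
          exact h2.trans (by gcongr)
      _ = c * B * K ^ m * (s ^ (D - 1) * s ^ (-α * m)) := by ring
      _ = _ := by rw [← Real.rpow_add hs0]; ring_nf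
  have h2 : max (psi c D k r) 0 / (p * (c * r ^ (D - 1))) ≤
      B * K ^ m / (D - m * α) / p * r ^ (1 - m * α) := by
    rw [div_le_iff₀ (by positivity)]
    refine max_le (h1.trans (le_of_eq ?_)) (by positivity)
    have e : r ^ (D - m * α) = r ^ (1 - m * α) * r ^ (D - 1) := by
      rw [← Real.rpow_add hr]; ring_nf
    rw [e]
    field_simp
  have h3 := Real.rpow_le_rpow (by positivity) h2 (show 0 ≤ 1 / (p - 1) by positivity)
  rw [Real.mul_rpow (by positivity) (by positivity), ← Real.rpow_mul hr.le] at h3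
  rw [GG]
  refine h3.trans (le_of_eq ?_)
  congr 2
  ring

lemma boot (P : Par c D p q m a b) {al : ℝ} (hal : Alp D p m al) {k : ℝ → ℝ} {B : ℝ} (hB : 0 ≤ B)
    (hk : ∀ R, IntegrableOn (fun r => c * r ^ (D - 1) * k r) (Ioc 0 R))
    (hkf : ∀ r, 0 < r → k r ≤ B * f r ^ m) (h : Adm c D p q m f (GG c D p k)) :
    ∃ K, 0 ≤ K ∧ ∀ s, 0 < s → s ≤ 1 → f s ≤ K := by
  have hc := P.hc
  have hp := P.hp
  have hp1 : 0 < p - 1 := by linarith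
  have hq := P.hq
  have hm := P.hm
  have hm0 : 0 ≤ m := by linarith
  have hf1 := h.fnn 1 one_pos
  obtain ⟨η, hη, hη1⟩ : ∃ η, 0 < η ∧ ∀ α, 0 ≤ α → α ≤ al → η * (p - 1) < p - (m - p + 1) * α := by
    have hmin : 0 < min p (p - (m - p + 1) * al) := lt_min (by linarith) (by linarith [hal.h3])
    refine ⟨min p (p - (m - p + 1) * al) / (2 * (p - 1)), by positivity, fun α h0 h1 => ?_⟩
    have e : min p (p - (m - p + 1) * al) / (2 * (p - 1)) * (p - 1) =
      min p (p - (m - p + 1) * al) / 2 := by field_simp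
    rw [e]
    have h2 := min_le_left p (p - (m - p + 1) * al)
    have h3 := min_le_right p (p - (m - p + 1) * al)
    rcases le_total (m - p + 1) 0 with h4 | h4
    · nlinarith
    · nlinarith
  have hmal : ∀ α, α ≤ al → m * α < D := by
    intro α h1
    have := hal.h2
    have := hal.pos
    nlinarith
  have base : ∀ α K, 0 < α → α ≤ al → α ≤ η → 0 ≤ K →
      (∀ s, 0 < s → s ≤ 1 → f s ≤ K * s ^ (-α)) → ∃ K, 0 ≤ K ∧ ∀ s, 0 < s → s ≤ 1 → f s ≤ K := by
    intro α K h0 h1 h2 hK hf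
    obtain ⟨C, hC, hG⟩ := G_bound hc hp hm0 hB hk hkf h.fnn hK (hmal α h1) hf
    set e := (1 - m * α) / (p - 1) with he
    have he1 : -1 < e := by
      rw [he, lt_div_iff₀ hp1]
      have := hη1 α h0.le h1
      nlinarith
    have he2 : 0 < e + 1 := by linarith
    refine ⟨f 1 + C / (e + 1), by positivity, fun r hr hr1 => ?_⟩
    have h3 := h.eq r 1 hr hr1
    obtain ⟨i1, i2⟩ := pow_int0 he1 zero_le_one C
    have hsub : Ioc r 1 ⊆ Ioc 0 1 := Ioc_subset_Ioc_left hr.le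
    have h4 : ∫ t in Ioc r 1, GG c D p k t ≤ ∫ t in Ioc r 1, C * t ^ e :=
      setIntegral_mono_on (h.gi r 1 hr hr1) (i1.mono_set hsub) measurableSet_Ioc
        fun t ht => hG t (hr.trans ht.1) ht.2
    have h5 : ∫ t in Ioc r 1, C * t ^ e ≤ ∫ t in Ioc 0 1, C * t ^ e := by
      refine setIntegral_mono_set i1 ?_ hsub.eventuallyLE
      refine (ae_restrict_iff' measurableSet_Ioc).2 (Eventually.of_forall fun t ht => ?_)
      have : 0 < t := ht.1
      simp only [Pi.zero_apply]
      positivity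
    rw [i2, Real.one_rpow] at h5
    have e3 : C * (1 / (e + 1)) = C / (e + 1) := by ring
    linarith
  have step : ∀ n : ℕ, ∀ α K, 0 < α → α ≤ al → α ≤ (n + 1) * η → 0 ≤ K →
      (∀ s, 0 < s → s ≤ 1 → f s ≤ K * s ^ (-α)) → ∃ K, 0 ≤ K ∧ ∀ s, 0 < s → s ≤ 1 → f s ≤ K := by
    intro n
    induction n with
    | zero =>
      intro α K h0 h1 h2 hK hf
      exact base α K h0 h1 (by simpa using h2) hK hf
    | succ n ih =>
      intro α K h0 h1 h2 hK hf
      rcases le_or_gt α η with h3 | h3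
      · exact base α K h0 h1 h3 hK hf
      obtain ⟨C, hC, hG⟩ := G_bound hc hp hm0 hB hk hkf h.fnn hK (hmal α h1) hf
      push_cast at h2
      have h4 : 0 < α - η := by linarith
      refine ih (α - η) (f 1 + C / (α - η)) h4 (by linarith) (by linarith) (by positivity) ?_
      intro s hs hs1
      refine h.bound_zero' h4 hC (fun t ht ht1 => ?_) hs hs1
      refine (hG t ht ht1).trans ?_
      refine mul_le_mul_of_nonneg_left ?_ hC
      refine Real.rpow_le_rpow_of_exponent_ge ht ht1 ?_
      rw [le_div_iff₀ hp1]
      have := hη1 α h0.le h1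
      nlinarith
  obtain ⟨n, hn⟩ := exists_nat_ge (al / η)
  have hP0 := In_nonneg hc (fun r _ => h.gnn r) p (D := D)
  have hal0 := hal.pos
  refine step n al (f 1 + 1 / al + In c D (GG c D p k) p / c) hal.pos le_rfl ?_ (by positivity)
    fun s hs hs1 => h.bound_zero hc P.hD hp hal hs hs1
  rw [div_le_iff₀ hη] at hn
  linarith

lemma GG_continuous (P : Par c D p q m a b) {al : ℝ} (hal : Alp D p m al) {k : ℝ → ℝ} {B : ℝ}
    (hB : 0 ≤ B)
    (hk : ∀ R, IntegrableOn (fun r => c * r ^ (D - 1) * k r) (Ioc 0 R))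
    (hkf : ∀ r, 0 < r → k r ≤ B * f r ^ m) (h : Adm c D p q m f (GG c D p k)) :
    Continuous (GG c D p k) := by
  have hc := P.hc
  have hp := P.hp
  have hp1 : 0 < p - 1 := by linarith
  have hq := P.hq
  have hm := P.hm
  have hD := P.hD
  obtain ⟨K, hK, hfK⟩ := boot P hal hB hk hkf h
  obtain ⟨C, hC, hG⟩ := G_bound (α := 0) hc hp (show 0 ≤ m by linarith) hB hk hkf h.fnn hK
    (by linarith) (by simpa using hfK)
  rw [continuous_iff_continuousAt]
  intro r
  rcases lt_trichotomy r 0 with h1 | h1 | h1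
  · refine (continuousAt_const (y := (0:ℝ))).congr ?_
    filter_upwards [Iio_mem_nhds h1] with s hs
    exact (GG_neg hp (le_of_lt hs)).symm
  · subst h1
    rw [ContinuousAt, GG_neg hp le_rfl]
    have h2 : Tendsto (fun r : ℝ => C * |r| ^ (1 / (p - 1))) (𝓝 0) (𝓝 0) := by
      have : Continuous (fun r : ℝ => C * |r| ^ (1 / (p - 1))) :=
        continuous_const.mul (continuous_abs.rpow_const fun _ => Or.inr (by positivity))
      have h3 := this.tendsto 0
      rwa [abs_zero, Real.zero_rpow (by positivity), mul_zero] at h3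
    refine squeeze_zero' (Eventually.of_forall fun r => GG_nonneg hc hp r) ?_ h2
    filter_upwards [Iio_mem_nhds one_pos] with s hs
    rcases le_or_gt s 0 with h3 | h3
    · rw [GG_neg hp h3]; positivity
    · have := hG s h3 (le_of_lt hs)
      rw [mul_zero, sub_zero] at this
      rwa [abs_of_pos h3]
  · exact (GG_cont hc hp hk).continuousAt (Ioi_mem_nhds h1)

/-- Minimizer with continuous derivative. -/
lemma exists_reg_min (P : Par c D p q m a b) {al : ℝ} (hal : Alp D p m al) :
    ∃ f g : ℝ → ℝ, Adm c D p q m f g ∧ In c D f (q + 1) = 1 ∧ In c D f (m + 1) = 1 ∧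
    Continuous g ∧ (∀ r, r ≤ 0 → g r = 0) ∧
    ∀ f1 g1, Adm c D p q m f1 g1 →
      In c D g p * In c D f1 (m + 1) ^ b ≤ In c D f1 (q + 1) ^ a * In c D g1 p := by
  have hc := P.hc
  have hp := P.hp
  have hq := P.hq
  have hm := P.hm
  have hD := P.hD
  have ha := P.ha
  have hb := P.hb
  obtain ⟨f, g, h, hQ, hM, hβ, hmin⟩ := exists_min P hal
  set β := In c D g p with hβ'
  set k : ℝ → ℝ := fun r => β * b * (m + 1) * f r ^ m - β * a * (q + 1) * f r ^ q with hkdef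
  have hpow : ∀ n : ℝ, 0 ≤ n → Integrable (fun r => f r ^ (n + 1)) (nu c D) → ∀ R,
      IntegrableOn (fun r => c * r ^ (D - 1) * f r ^ n) (Ioc 0 R) := by
    intro n hn hi R
    rcases le_or_gt R 0 with hR | hR
    · rw [Ioc_eq_empty (not_lt.2 hR)]; exact integrableOn_empty
    have h1 : Integrable (fun r => (Ioc 0 R).indicator (fun r => f r ^ n) r) (nu c D) := by
      refine Integrable.mono' ((nu_const_zero (K := 1) hc hD hR).add hi) ?_
        (ae_nu_of_pos hc fun r hr => ?_)
      · exact ((h.fm.pow_const n).indicator measurableSet_Ioc).aestronglyMeasurable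
      · have hf := h.fnn r hr
        simp only [Pi.add_apply]
        by_cases h2 : r ∈ Ioc 0 R
        · simp only [h2, indicator_of_mem]
          rw [Real.norm_of_nonneg (by positivity)]
          rcases le_total (f r) 1 with h3 | h3
          · have := Real.rpow_le_one hf h3 hn
            have : 0 ≤ f r ^ (n + 1) := by positivity
            linarith
          · have := Real.rpow_le_rpow_of_exponent_le h3 (show n ≤ n + 1 by linarith)
            linarith
        · simp only [h2, not_false_eq_true, indicator_of_notMem, norm_zero, zero_add]
          positivity
    rw [integrable_nu hc] at h1
    refine (h1.mono_set (fun r hr => hr.1 : Ioc 0 R ⊆ Ioi 0)).congr_fun (fun r hr => ?_) measurableSet_Ioc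
    simp [hr.1, hr.2]
  have hk : ∀ R, IntegrableOn (fun r => c * r ^ (D - 1) * k r) (Ioc 0 R) := by
    intro R
    refine (((hpow m (by linarith) h.im R).const_mul (β * b * (m + 1))).sub
      ((hpow q hq h.iq R).const_mul (β * a * (q + 1)))).congr (Eventually.of_forall fun r => ?_)
    simp only [hkdef, Pi.sub_apply]
    ring
  have hvar : ∀ f1 g1, Adm c D p q m f1 g1 →
      Integrable (fun r => g r ^ (p - 1) * (g1 r - g r)) (nu c D) ∧
      ∫ r, k r * (f1 r - f r) ∂(nu c D) ≤ p * ∫ r, g r ^ (p - 1) * (g1 r - g r) ∂(nu c D) := by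
    intro f1 g1 h1
    obtain ⟨i1, i2, i3, hle⟩ := first_var P h hQ hM hmin h1
    refine ⟨i3, le_trans (le_of_eq ?_) hle⟩
    rw [← integral_const_mul, ← integral_const_mul,
      ← integral_sub (i1.const_mul _) (i2.const_mul _)]
    refine integral_congr_ae (Eventually.of_forall fun r => ?_)
    simp only [hkdef]
    ring
  obtain ⟨hE, hEP⟩ := EL hc hD hp hq hm h hk hvar
  have hB : 0 ≤ β * b * (m + 1) := by
    have : 0 ≤ m + 1 := by linarith
    positivity
  have hkf : ∀ r, 0 < r → k r ≤ β * b * (m + 1) * f r ^ m := by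
    intro r hr
    have := h.fnn r hr
    have : 0 ≤ β * a * (q + 1) * f r ^ q := by positivity
    simp only [hkdef]
    linarith
  refine ⟨f, GG c D p k, hE, hQ, hM, GG_continuous P hal hB hk hkf hE,
    fun r hr => GG_neg hp hr, ?_⟩
  rw [hEP]
  exact hmin

end

section

lemma params {d : ℕ} (hd : 1 ≤ d) {p q m γ c : ℝ} (hc : 0 < c) (hp : 1 < p)
    (hq0 : 0 ≤ q) (hqm : q < m)
    (hsub : p < d → m < ((p - 1) * (d : ℝ) + p) / ((d : ℝ) - p))
    (hγ : γ = (p * (m + 1) * (q + 1) + (p / 2 - 1) * (d : ℝ) * (m + q) -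
      (d : ℝ) * q * m + (p - 1) * (d : ℝ)) / ((d : ℝ) * (m - q))) :
    Par c d p q m ((γ - p / 2) / (q + 1)) ((γ + p / 2) / (m + 1)) ∧ ∃ al, Alp d p m al := by
  have hD : (1:ℝ) ≤ d := by exact_mod_cast hd
  have hD0 : (0:ℝ) < d := by linarith
  have hmq : 0 < m - q := by linarith
  have hq1 : 0 < q + 1 := by linarith
  have hm1 : 0 < m + 1 := by linarith
  have key : p < d → (m + 1) * (d - p) < p * d := by
    intro h
    have h1 := hsub h
    rw [lt_div_iff₀ (by linarith)] at h1
    linarith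
  have ea : (γ - p / 2) / (q + 1) = (d * p + (p - d) * (m + 1)) / (d * (m - q)) := by
    rw [hγ]
    field_simp
    ring
  have eb : (γ + p / 2) / (m + 1) = (d * p + (p - d) * (q + 1)) / (d * (m - q)) := by
    rw [hγ]
    field_simp
    ring
  constructor
  · refine ⟨hc, hD, hp, hq0, hqm, ?_, ?_, ?_, ?_⟩
    · rw [ea]
      refine div_pos ?_ (by positivity)
      rcases lt_or_ge p d with h | h
      · linarith [key h]
      · have : 0 ≤ (p - d) * (m + 1) := mul_nonneg (by linarith) hm1.le
        nlinarith
    · rw [eb]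
      refine div_pos ?_ (by positivity)
      rcases lt_or_ge p d with h | h
      · have := key h
        nlinarith
      · have : 0 ≤ (p - d) * (q + 1) := mul_nonneg (by linarith) hq1.le
        nlinarith
    · field_simp
      ring
    · rw [ea, eb]
      field_simp
      ring
  · rcases lt_or_ge p d with h | h
    · have hk := key h
      have hp0 : 0 < p := by linarith
      refine ⟨(d - p) / p, div_pos (by linarith) hp0, ?_, ?_, ?_⟩
      · apply le_of_eq; field_simp; ring
      · rw [← mul_div_assoc, div_lt_iff₀ hp0]; linarith
      · rw [← mul_div_assoc, div_lt_iff₀ hp0]; nlinarith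
    · have hp0 : 0 < p := by linarith
      refine ⟨min (d / (2 * (m + 1))) (p / (2 * (m + 1))), by positivity, ?_, ?_, ?_⟩
      · have : 0 < min (d / (2 * (m + 1))) (p / (2 * (m + 1))) := by positivity
        nlinarith
      · have := min_le_left (d / (2 * (m + 1))) (p / (2 * (m + 1)))
        rw [le_div_iff₀ (by positivity)] at this
        linarith
      · have := min_le_right (d / (2 * (m + 1))) (p / (2 * (m + 1)))
        rw [le_div_iff₀ (by positivity)] at this
        have h2 : 0 < min (d / (2 * (m + 1))) (p / (2 * (m + 1))) := by positivity
        nlinarith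

variable {d : ℕ}

noncomputable def cd (d : ℕ) : ℝ :=
  d * (volume : Measure (EuclideanSpace ℝ (Fin d))).real (Metric.ball 0 1)

lemma cd_pos (hd : 1 ≤ d) : 0 < cd d := by
  have : (0:ℝ) < d := by exact_mod_cast hd
  refine mul_pos this ?_
  rw [Measure.real]
  exact ENNReal.toReal_pos (Metric.measure_ball_pos _ _ one_pos).ne' measure_ball_lt_top.ne

lemma radial_w (hd : 1 ≤ d) (r : ℝ) : r ^ ((d:ℝ) - 1) = r ^ (d - 1) := by
  rw [← Real.rpow_natCast, Nat.cast_sub hd, Nat.cast_one]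

lemma radial_integral (hd : 1 ≤ d) (F : ℝ → ℝ) :
    ∫ x : EuclideanSpace ℝ (Fin d), F ‖x‖ = ∫ r, F r ∂(nu (cd d) d) := by
  have : Nonempty (Fin d) := ⟨⟨0, hd⟩⟩
  rw [integral_fun_norm_addHaar, integral_nu (cd_pos hd)]
  simp only [finrank_euclideanSpace, Fintype.card_fin, radial_w hd, smul_eq_mul, nsmul_eq_mul]
  rw [← integral_const_mul, ← integral_const_mul]
  simp only [cd, mul_assoc]

lemma radial_integrable (hd : 1 ≤ d) {F : ℝ → ℝ} :
    Integrable (fun x : EuclideanSpace ℝ (Fin d) => F ‖x‖) ↔ Integrable F (nu (cd d) d) := by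
  have : Nonempty (Fin d) := ⟨⟨0, hd⟩⟩
  rw [integrable_fun_norm_addHaar, integrable_nu (cd_pos hd)]
  simp only [finrank_euclideanSpace, Fintype.card_fin, radial_w hd, smul_eq_mul, mul_assoc]
  constructor
  · intro h; exact h.const_mul _
  · intro h
    have h1 := h.const_mul (cd d)⁻¹
    refine Integrable.congr h1 (Eventually.of_forall fun r => ?_)
    simp only
    rw [← mul_assoc, inv_mul_cancel₀ (cd_pos hd).ne', one_mul]

lemma radial_fderiv {E : Type*} [NormedAddCommGroup E] [InnerProductSpace ℝ E] {f G : ℝ → ℝ}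
    (hf : ∀ t, HasDerivAt f (-G t) t) (hG : Continuous G) (hG0 : G 0 = 0) (hGn : ∀ t, 0 ≤ G t) :
    ContDiff ℝ 1 (fun x : E => f ‖x‖) ∧ ∀ x : E, ‖fderiv ℝ (fun x : E => f ‖x‖) x‖ = G ‖x‖ := by
  set L : E → (E →L[ℝ] ℝ) := fun x => (-G ‖x‖ * ‖x‖⁻¹) • innerSL ℝ x with hL
  have hLn : ∀ x, ‖L x‖ = G ‖x‖ := by
    intro x
    rcases eq_or_ne x 0 with h | h
    · simp [hL, h, hG0]
    · have : ‖x‖ ≠ 0 := norm_ne_zero_iff.2 h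
      rw [hL]
      simp only
      rw [norm_smul, innerSL_apply_norm, norm_mul, norm_neg, Real.norm_of_nonneg (hGn _), norm_inv,
        norm_norm, mul_assoc, inv_mul_cancel₀ this, mul_one]
  have hd : ∀ x, HasFDerivAt (fun x : E => f ‖x‖) (L x) x := by
    intro x
    rcases eq_or_ne x 0 with h | h
    · subst h
      have h1 := hf 0
      rw [hG0, neg_zero, hasDerivAt_iff_isLittleO_nhds_zero] at h1
      have e : L 0 = 0 := by simp [hL]
      rw [e, hasFDerivAt_iff_isLittleO_nhds_zero]
      have h2 := h1.comp_tendsto (show Tendsto (fun x : E => ‖x‖) (𝓝 0) (𝓝 0) by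
        simpa using (continuous_norm (E := E)).tendsto 0)
      have h3 := h2.trans_isBigO (Asymptotics.isBigO_norm_left.2 (Asymptotics.isBigO_refl (fun x : E => x) (𝓝 0)))
      simpa [Function.comp_def] using h3
    · have h1 : HasFDerivAt (fun x : E => ‖x‖) (‖x‖⁻¹ • innerSL ℝ x) x := by
        have h2 := ((hasStrictFDerivAt_norm_sq x).hasFDerivAt).sqrt (by positivity)
        have e : (fun y : E => √(‖y‖ ^ 2)) = fun y => ‖y‖ := by
          funext y; exact Real.sqrt_sq (norm_nonneg y)
        rw [e, Real.sqrt_sq (norm_nonneg x)] at h2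
        refine h2.congr_fderiv ?_
        ext y
        simp
        field_simp
      have h3 := (hf ‖x‖).comp_hasFDerivAt x h1
      refine h3.congr_fderiv ?_
      simp only [hL, smul_smul]
  have hfd : fderiv ℝ (fun x : E => f ‖x‖) = L := funext fun x => (hd x).fderiv
  refine ⟨?_, fun x => by rw [hfd, hLn]⟩
  rw [contDiff_one_iff_fderiv, hfd]
  refine ⟨fun x => (hd x).differentiableAt, ?_⟩
  rw [continuous_iff_continuousAt]
  intro x
  rcases eq_or_ne x 0 with h | h
  · subst h
    rw [ContinuousAt, show L 0 = 0 by simp [hL], tendsto_zero_iff_norm_tendsto_zero]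
    simp only [hLn]
    have := (hG.comp (continuous_norm (E := E))).tendsto 0
    simpa [hG0, Function.comp_def] using this
  · have h0 : ‖x‖ ≠ 0 := norm_ne_zero_iff.2 h
    have h1 : ContinuousAt (fun x : E => -G ‖x‖ * ‖x‖⁻¹) x := ((hG.comp continuous_norm).continuousAt.neg).mul (continuous_norm.continuousAt.inv₀ h0)
    exact h1.smul (innerSL ℝ (E := E)).continuous.continuousAt

lemma class_to_adm (hd : 1 ≤ d) {p q m : ℝ} (hp : 1 < p) {u : EuclideanSpace ℝ (Fin d) → ℝ}
    (hu : ContDiff ℝ 1 u) {F : ℝ → ℝ} (hF0 : ∀ r, 0 ≤ r → 0 ≤ F r) (hF : AntitoneOn F (Set.Ici 0))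
    (huF : ∀ x, u x = F ‖x‖) (iq : Integrable (fun x => |u x| ^ (q + 1)))
    (im : Integrable (fun x => |u x| ^ (m + 1))) (ip : Integrable (fun x => ‖fderiv ℝ u x‖ ^ p)) :
    ∃ f g, Adm (cd d) d p q m f g ∧ In (cd d) d f (q + 1) = ∫ x, |u x| ^ (q + 1) ∧
      In (cd d) d f (m + 1) = ∫ x, |u x| ^ (m + 1) ∧ In (cd d) d g p ≤ ∫ x, ‖fderiv ℝ u x‖ ^ p := by
  have hc := cd_pos hd
  set e : EuclideanSpace ℝ (Fin d) := EuclideanSpace.single ⟨0, hd⟩ 1 with he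
  have he1 : ‖e‖ = 1 := by simp [he]
  set φ : ℝ → ℝ := fun t => F |t| with hφ
  have hφv : ∀ v : EuclideanSpace ℝ (Fin d), ‖v‖ = 1 → φ = fun t => u (t • v) := by
    intro v hv
    funext t
    simp [hφ, huF, norm_smul, hv]
  have hφ1 : ContDiff ℝ 1 φ := by
    rw [hφv e he1]
    exact hu.comp (contDiff_id.smul contDiff_const)
  have hdv : ∀ v : EuclideanSpace ℝ (Fin d), ‖v‖ = 1 → ∀ t, deriv φ t = fderiv ℝ u (t • v) v := by
    intro v hv t
    rw [hφv v hv]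
    have h1 : HasDerivAt (fun t : ℝ => t • v) v t := by
      simpa using (hasDerivAt_id t).smul_const v
    exact ((hu.differentiable (by norm_num) (t • v)).hasFDerivAt.comp_hasDerivAt t h1).deriv
  have hdc : Continuous (deriv φ) := hφ1.continuous_deriv (by norm_num)
  set g : ℝ → ℝ := fun t => max (-deriv φ t) 0 with hg
  have hgc : Continuous g := hdc.neg.max continuous_const
  have hgn : ∀ t, 0 ≤ g t := fun t => le_max_right _ _
  have hgb : ∀ x, g ‖x‖ ≤ ‖fderiv ℝ u x‖ := by
    intro x
    obtain ⟨v, hv, hxv⟩ : ∃ v : EuclideanSpace ℝ (Fin d), ‖v‖ = 1 ∧ ‖x‖ • v = x := by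
      rcases eq_or_ne x 0 with h | h
      · exact ⟨e, he1, by simp [h]⟩
      · refine ⟨‖x‖⁻¹ • x, norm_smul_inv_norm h, ?_⟩
        rw [smul_smul, mul_inv_cancel₀ (norm_ne_zero_iff.2 h), one_smul]
    have h1 := hdv v hv ‖x‖
    rw [hxv] at h1
    have h2 := (fderiv ℝ u x).le_opNorm v
    rw [← h1, hv, mul_one, Real.norm_eq_abs] at h2
    exact max_le ((neg_le_abs _).trans h2) (norm_nonneg _)
  have hanti : AntitoneOn φ (Ioi 0) := by
    intro r hr s hs hrs
    have hr : 0 < r := hr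
    have hs : 0 < s := hs
    simp only [hφ, abs_of_pos hr, abs_of_pos hs]
    exact hF hr.le hs.le hrs
  have hdn : ∀ t, 0 < t → g t = -deriv φ t := by
    intro t ht
    refine max_eq_left ?_
    have h1 : derivWithin φ (Ioi 0) t ≤ 0 := hanti.derivWithin_nonpos
    rw [derivWithin_of_isOpen isOpen_Ioi ht] at h1
    linarith
  have hgi : Integrable (fun x : EuclideanSpace ℝ (Fin d) => g ‖x‖ ^ p) := by
    refine Integrable.mono' ip ?_ (Eventually.of_forall fun x => ?_)
    · exact ((hgc.comp continuous_norm).rpow_const fun _ => Or.inr (by linarith)).aestronglyMeasurable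
    · rw [Real.norm_of_nonneg (Real.rpow_nonneg (hgn _) _)]
      exact Real.rpow_le_rpow (hgn _) (hgb x) (by linarith)
  have hun : ∀ x, |u x| = φ ‖x‖ := by
    intro x
    rw [huF, abs_of_nonneg (hF0 _ (norm_nonneg x))]
    simp [hφ]
  simp only [hun] at iq im ⊢
  refine ⟨φ, g, ⟨fun r hr => hF0 _ (abs_nonneg r), hgn, hgc.measurable, fun r s _ _ =>
    hgc.integrableOn_Ioc, fun r s hr hrs => ?_, ?_, ?_, ?_⟩, ?_, ?_, ?_⟩
  · rw [← intervalIntegral.integral_of_le hrs]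
    have h1 : ∫ t in r..s, g t = ∫ t in r..s, -deriv φ t := by
      refine intervalIntegral.integral_congr fun t ht => ?_
      rw [uIcc_of_le hrs] at ht
      exact hdn t (hr.trans_le ht.1)
    rw [h1, intervalIntegral.integral_neg, intervalIntegral.integral_deriv_eq_sub
      (fun t _ => hφ1.differentiable (by norm_num) t) (hdc.intervalIntegrable _ _)]
    ring
  · exact (radial_integrable hd (F := fun r => φ r ^ (q + 1))).1 iq
  · exact (radial_integrable hd (F := fun r => φ r ^ (m + 1))).1 im
  · exact (radial_integrable hd (F := fun r => g r ^ p)).1 hgi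
  · exact (radial_integral hd (fun r => φ r ^ (q + 1))).symm
  · exact (radial_integral hd (fun r => φ r ^ (m + 1))).symm
  · rw [In, ← radial_integral hd (fun r => g r ^ p)]
    refine integral_mono hgi ip fun x => ?_
    exact Real.rpow_le_rpow (hgn _) (hgb x) (by linarith)

end

/-- Existence of a normalized minimizer of the Gagliardo-Nirenberg
quotient `J` over the class of radially nonincreasing functions. -/
theorem stmt11 (d : ℕ) (hd : 1 ≤ d) (p q m γ : ℝ)
    (hp : max 1 (2 * (d : ℝ) / ((d : ℝ) + 2)) < p)
    (hq0 : 0 ≤ q) (hqm : q < m)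
    (hsub : p < d → q < ((p - 1) * (d : ℝ) + p) / ((d : ℝ) - p) - 1 ∧
      m < ((p - 1) * (d : ℝ) + p) / ((d : ℝ) - p))
    (hγ : γ = (p * (m + 1) * (q + 1) + (p / 2 - 1) * (d : ℝ) * (m + q) -
      (d : ℝ) * q * m + (p - 1) * (d : ℝ)) / ((d : ℝ) * (m - q))) :
    ∃ u₀ : EuclideanSpace ℝ (Fin d) → ℝ, RadialClass d p q m u₀ ∧
      (∫ x, |u₀ x| ^ (q + 1)) = 1 ∧ (∫ x, |u₀ x| ^ (m + 1)) = 1 ∧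
      GNquot d p q m γ u₀ = (∫ x, ‖fderiv ℝ u₀ x‖ ^ p) ∧
      ∀ u : EuclideanSpace ℝ (Fin d) → ℝ, RadialClass d p q m u →
        GNquot d p q m γ u₀ ≤ GNquot d p q m γ u := by
  have hp1 : 1 < p := lt_of_le_of_lt (le_max_left _ _) hp
  have hp0 : 0 < p := by linarith
  have hc := cd_pos hd
  obtain ⟨P, al, hal⟩ := params hd hc hp1 hq0 hqm (fun h => (hsub h).2) hγ
  obtain ⟨f, g, h, hQ, hM, hgc, hg0, hmin⟩ := exists_reg_min P hal
  set ft : ℝ → ℝ := fun t => f 1 - ∫ s in (1:ℝ)..t, g s with hft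
  have hftd : ∀ t, HasDerivAt ft (-g t) t := fun t =>
    ((hgc.integral_hasStrictDerivAt 1 t).hasDerivAt).const_sub (f 1)
  have hfe : ∀ r, 0 < r → ft r = f r := by
    intro r hr
    simp only [hft]
    rcases le_total r 1 with h1 | h1
    · rw [intervalIntegral.integral_symm, intervalIntegral.integral_of_le h1, ← h.eq r 1 hr h1]
      ring
    · rw [intervalIntegral.integral_of_le h1, ← h.eq 1 r one_pos h1]
      ring
  have hanti : Antitone ft := by
    refine antitone_of_deriv_nonpos (fun t => (hftd t).differentiableAt) fun t => ?_
    rw [(hftd t).deriv]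
    linarith [h.gnn t]
  have hftn : ∀ r, 0 ≤ r → 0 ≤ ft r := by
    intro r hr
    have h1 : ft (r + 1) ≤ ft r := hanti (by linarith)
    rw [hfe (r + 1) (by linarith)] at h1
    exact (h.fnn (r + 1) (by linarith)).trans h1
  obtain ⟨hC1, hfd⟩ := radial_fderiv (E := EuclideanSpace ℝ (Fin d)) hftd hgc (hg0 0 le_rfl) h.gnn
  have habs : ∀ x : EuclideanSpace ℝ (Fin d), |ft ‖x‖| = ft ‖x‖ := fun x =>
    abs_of_nonneg (hftn _ (norm_nonneg x))
  have hcongr : ∀ n : ℝ, (fun r => f r ^ n) =ᵐ[nu (cd d) d] (fun r => ft r ^ n) := fun n =>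
    ae_nu_of_pos hc fun r hr => by show f r ^ n = ft r ^ n; rw [hfe r hr]
  have hIn : ∀ n : ℝ, ∫ x : EuclideanSpace ℝ (Fin d), |ft ‖x‖| ^ n = In (cd d) d f n := by
    intro n
    simp only [habs]
    rw [radial_integral hd (fun r => ft r ^ n), In]
    exact (integral_congr_ae (hcongr n)).symm
  have hIi : ∀ n : ℝ, Integrable (fun r => f r ^ n) (nu (cd d) d) →
      Integrable (fun x : EuclideanSpace ℝ (Fin d) => |ft ‖x‖| ^ n) := by
    intro n hi
    simp only [habs]
    exact (radial_integrable hd (F := fun r => ft r ^ n)).2 (hi.congr (hcongr n))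
  have hPI : ∫ x : EuclideanSpace ℝ (Fin d), ‖fderiv ℝ (fun x => ft ‖x‖) x‖ ^ p =
      In (cd d) d g p := by
    simp only [hfd]
    exact radial_integral hd (fun r => g r ^ p)
  have hJ : GNquot d p q m γ (fun x => ft ‖x‖) = In (cd d) d g p := by
    rw [GNquot, hIn, hIn, hPI, hQ, hM]
    simp
  refine ⟨fun x => ft ‖x‖, ⟨hC1, ⟨ft, hftn, hanti.antitoneOn _, fun _ => rfl⟩, ?_, hIi _ h.iq, ?_,
    hIi _ h.im, ?_⟩, ?_, ?_, ?_, ?_⟩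
  · rw [hIn, hQ]; exact one_pos
  · rw [hIn, hM]; exact one_pos
  · simp only [hfd]
    exact (radial_integrable hd (F := fun r => g r ^ p)).2 h.ip
  · rw [hIn, hQ]
  · rw [hIn, hM]
  · rw [hJ, hPI]
  · rintro u ⟨hu, ⟨F, hF0, hF, huF⟩, hq1, iq, hm1, im, ip⟩
    rw [hJ]
    obtain ⟨f1, g1, h1, e1, e2, e3⟩ := class_to_adm hd hp1 hu hF0 hF huF iq im ip
    have h2 := hmin f1 g1 h1
    rw [e1, e2] at h2
    rw [GNquot, le_div_iff₀ (Real.rpow_pos_of_pos hm1 _)]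
    refine h2.trans ?_
    exact mul_le_mul_of_nonneg_left e3 (Real.rpow_nonneg hq1.le _)
end

section
/- Let p > 1 and 0 < q < m be real numbers. Set η₁ = (p−1)(m+1)+p, η₂ = (p−1)(q+1)+p, θ = p(m−q)/((m+1)η₂), ℓ = (m−q)/((m+1)η₂), 𝓑(a,b) = ∫_0^1 t^{a−1}(1−t)^{b−1} dt, and C = [ 2^p (p−1)^{1−p} η₁^{η₁/(m−q)} (m−q)^{1−2p} η₂^{−η₂/(m−q)} 𝓑(η₂/(p(m−q)), (2p−1)/p)^p ]^{−ℓ}. Then for every continuously differentiable function u : ℝ → ℝ with ∫_ℝ |u|^{q+1} dx < ∞ and ∫_ℝ |u'|^p dx < ∞, one has (∫_ℝ |u|^{m+1} dx)^{1/(m+1)} ≤ C · (∫_ℝ |u|^{q+1} dx)^{(1−θ)/(q+1)} · (∫_ℝ |u'|^p dx)^{θ/p}; moreover C is the smallest constant for which this inequality holds for all such u. -/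
open Filter Set Topology MeasureTheory

noncomputable def gnW (q m t : ℝ) : ℝ := max (|t| ^ (q + 1) - |t| ^ (m + 1)) 0

lemma gnW_nonneg (q m t : ℝ) : 0 ≤ gnW q m t := le_max_right _ _

lemma gnW_cont (q m : ℝ) (hq : 0 < q) (hqm : q < m) : Continuous (gnW q m) := by
  unfold gnW
  refine Continuous.max (Continuous.sub ?_ ?_) continuous_const
  · exact continuous_abs.rpow_const fun x => Or.inr (by linarith)
  · exact continuous_abs.rpow_const fun x => Or.inr (by linarith)

lemma gnW_eq (q m : ℝ) (hqm : q < m) (hq : 0 < q) {t : ℝ} (ht : |t| ≤ 1) :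
    gnW q m t = |t| ^ (q + 1) - |t| ^ (m + 1) := by
  unfold gnW
  apply max_eq_left
  rcases (abs_nonneg t).eq_or_lt with h | h
  · rw [← h, Real.zero_rpow (by linarith), Real.zero_rpow (by linarith)]; simp
  · exact sub_nonneg.2 (Real.rpow_le_rpow_of_exponent_ge h ht (by linarith))

lemma gn_tendsto (p q : ℝ) (hp : 1 < p) (hq : 0 < q) (u : ℝ → ℝ) (hu : ContDiff ℝ 1 u)
    (h1 : Integrable (fun x => |u x| ^ (q + 1)))
    (h2 : Integrable (fun x => |deriv u x| ^ p)) :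
    Tendsto u atTop (𝓝 0) ∧ Tendsto u atBot (𝓝 0) := by
  set r : ℝ := 1 + (q + 1) * (p - 1) / p with hr
  have hr1 : 1 < r := by
    have : 0 < (q + 1) * (p - 1) / p := by
      apply div_pos (mul_pos _ _) <;> linarith
    linarith
  have hd : ∀ x, HasDerivAt u (deriv u x) x := fun x =>
    (hu.differentiable one_ne_zero x).hasDerivAt
  have hcd : Continuous (deriv u) := hu.continuous_deriv le_rfl
  have hcu : Continuous u := hu.continuous
  set f : ℝ → ℝ := fun x => |u x| ^ r with hf
  set f' : ℝ → ℝ := fun x => (r * |u x| ^ (r - 2) * u x) * deriv u x with hf'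
  have hfd : ∀ x, HasDerivAt f (f' x) x := fun x =>
    (hasDerivAt_abs_rpow (u x) hr1).comp x (hd x)
  have hconj : (p / (p - 1)).HolderConjugate p := by
    exact (Real.HolderConjugate.conjExponent hp).symm
  have hbound : ∀ x, ‖f' x‖ ≤ r * (|u x| ^ (q + 1) / (p / (p - 1)) + |deriv u x| ^ p / p) := by
    intro x
    have e : ‖f' x‖ = r * (|u x| ^ (r - 1) * |deriv u x|) := by
      simp only [hf', Real.norm_eq_abs, abs_mul, abs_of_pos (by linarith : 0 < r)]
      rw [abs_of_nonneg (Real.rpow_nonneg (abs_nonneg _) _)]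
      rcases (abs_nonneg (u x)).eq_or_lt with h | h
      · rw [← h, Real.zero_rpow (by linarith : r - 1 ≠ 0)]; simp
      · rw [show r - 1 = (r - 2) + 1 by ring, Real.rpow_add_one h.ne']; ring
    rw [e]
    have := Real.young_inequality_of_nonneg (Real.rpow_nonneg (abs_nonneg (u x)) (r - 1))
      (abs_nonneg (deriv u x)) hconj
    rw [← Real.rpow_mul (abs_nonneg _)] at this
    rw [show (r - 1) * (p / (p - 1)) = q + 1 by
      rw [hr]; have : p - 1 ≠ 0 := by linarith
      field_simp; ring] at this
    gcongr
  have hf'i : Integrable f' := by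
    have hm : AEStronglyMeasurable f' volume := by
      have : f' = deriv f := by ext x; exact (hfd x).deriv.symm
      rw [this]; exact (stronglyMeasurable_deriv f).aestronglyMeasurable
    refine Integrable.mono' (((h1.div_const (p / (p - 1))).add (h2.div_const p)).const_mul r) hm ?_
    exact Eventually.of_forall hbound
  have key : ∀ (l : Filter ℝ) [l.NeBot], (∀ s ∈ l, volume s = ⊤) →
      (∃ a, Tendsto f l (𝓝 a)) → Tendsto u l (𝓝 0) := by
    rintro l _ hl ⟨a, ha⟩
    have ha0 : a = 0 := by
      have t1 : Tendsto (fun x => f x ^ ((q + 1) / r)) l (𝓝 (a ^ ((q + 1) / r))) :=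
        ha.rpow_const (Or.inr (by positivity))
      have e : (fun x => f x ^ ((q + 1) / r)) = fun x => |u x| ^ (q + 1) := by
        ext x
        simp only [hf]
        rw [← Real.rpow_mul (abs_nonneg _)]
        congr 1; field_simp
      rw [e] at t1
      have := (h1.integrableAtFilter l).eq_zero_of_tendsto hl t1
      have ha' : 0 ≤ a := ge_of_tendsto' ha fun x => by positivity
      rcases ha'.eq_or_lt with h | h
      · exact h.symm
      · exact absurd this (Real.rpow_pos_of_pos h _).ne'
    subst ha0
    have t2 : Tendsto (fun x => f x ^ (1 / r)) l (𝓝 ((0:ℝ) ^ (1 / r))) :=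
      ha.rpow_const (Or.inr (by positivity))
    rw [Real.zero_rpow (by positivity)] at t2
    have e : (fun x => f x ^ (1 / r)) = fun x => |u x| := by
      ext x
      simp only [hf]
      rw [← Real.rpow_mul (abs_nonneg _)]
      rw [mul_one_div_cancel (by linarith), Real.rpow_one]
    rw [e] at t2
    exact (tendsto_zero_iff_abs_tendsto_zero _).2 t2
  constructor
  · refine key atTop ?_ ⟨_, tendsto_limUnder_of_hasDerivAt_of_integrableOn_Ioi (a := 0)
      (fun x _ => hfd x) hf'i.integrableOn⟩
    intro s hs
    obtain ⟨b, hb⟩ := mem_atTop_sets.1 hs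
    exact top_le_iff.1 (by rw [← Real.volume_Ici (a := b)]; exact measure_mono hb)
  · refine key atBot ?_ ⟨_, tendsto_limUnder_of_hasDerivAt_of_integrableOn_Iic (a := 0)
      (fun x _ => hfd x) hf'i.integrableOn⟩
    intro s hs
    obtain ⟨b, hb⟩ := mem_atBot_sets.1 hs
    exact top_le_iff.1 (by rw [← Real.volume_Iic (a := b)]; exact measure_mono hb)

noncomputable def gnK (p q m : ℝ) : ℝ := ∫ t in (0:ℝ)..1, (gnW q m t) ^ ((p - 1) / p)

lemma gn_key (p q m : ℝ) (hp : 1 < p) (hq : 0 < q) (hqm : q < m) (u : ℝ → ℝ) (hu : ContDiff ℝ 1 u)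
    (h1 : Integrable (fun x => |u x| ^ (q + 1)))
    (h2 : Integrable (fun x => |deriv u x| ^ p))
    (hle : ∀ x, |u x| ≤ 1) (x0 : ℝ) (hx0 : |u x0| = 1) :
    Integrable (fun x => |u x| ^ (m + 1)) ∧
    2 * gnK p q m ≤ (∫ x, |deriv u x| ^ p) ^ (1 / p) *
      ((∫ x, |u x| ^ (q + 1)) - ∫ x, |u x| ^ (m + 1)) ^ ((p - 1) / p) := by
  obtain ⟨ht, hb⟩ := gn_tendsto p q hp hq u hu h1 h2
  have hd : ∀ x, HasDerivAt u (deriv u x) x := fun x =>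
    (hu.differentiable one_ne_zero x).hasDerivAt
  have hcd : Continuous (deriv u) := hu.continuous_deriv le_rfl
  have hcu : Continuous u := hu.continuous
  have hσ : 0 < (p - 1) / p := div_pos (by linarith) (by linarith)
  have h3 : Integrable (fun x => |u x| ^ (m + 1)) := by
    refine h1.mono' (hcu.abs.rpow_const fun x => Or.inr (by linarith)).aestronglyMeasurable ?_
    refine Eventually.of_forall fun x => ?_
    rw [Real.norm_of_nonneg (by positivity)]
    have := gnW_nonneg q m (u x)
    rw [gnW_eq q m hqm hq (hle x)] at this
    linarith
  refine ⟨h3, ?_⟩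
  set g : ℝ → ℝ := fun t => (gnW q m t) ^ ((p - 1) / p) with hg
  have hgc : Continuous g := (gnW_cont q m hq hqm).rpow_const fun x => Or.inr hσ.le
  have hg0 : ∀ t, 0 ≤ g t := fun t => Real.rpow_nonneg (gnW_nonneg _ _ _) _
  set Φ : ℝ → ℝ := fun s => ∫ t in (0:ℝ)..s, g t with hΦ
  have hΦd : ∀ s, HasDerivAt Φ (g s) s := fun s => hgc.integral_hasStrictDerivAt 0 s |>.hasDerivAt
  have hΦc : Continuous Φ := continuous_iff_continuousAt.2 fun s => (hΦd s).continuousAt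
  have hΦ0 : Φ 0 = 0 := by simp [hΦ]
  have hΦx0 : |Φ (u x0)| = gnK p q m := by
    have hK : 0 ≤ gnK p q m := intervalIntegral.integral_nonneg zero_le_one fun t _ => hg0 t
    have hK1 : Φ 1 = gnK p q m := rfl
    have hKm : Φ (-1) = -Φ 1 := by
      have := intervalIntegral.integral_comp_neg (a := 0) (b := 1) g
      simp only [hΦ]
      rw [intervalIntegral.integral_symm]
      congr 1
      rw [neg_zero] at this
      rw [← this]
      congr 1; ext t; simp [hg, gnW]
    rcases eq_or_eq_neg_of_abs_eq hx0 with h | h <;> rw [h]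
    · rw [hK1, abs_of_nonneg hK]
    · rw [hKm, abs_neg, hK1, abs_of_nonneg hK]
  have hWi : Integrable (fun x => gnW q m (u x)) := by
    refine (h1.sub h3).congr (Eventually.of_forall fun x => ?_)
    simp [gnW_eq q m hqm hq (hle x)]
  have hWint : ∫ x, gnW q m (u x) = (∫ x, |u x| ^ (q + 1)) - ∫ x, |u x| ^ (m + 1) := by
    rw [← integral_sub h1 h3]
    congr 1; ext x; exact gnW_eq q m hqm hq (hle x)
  have hconj : p.HolderConjugate (p / (p - 1)) := Real.HolderConjugate.conjExponent hp
  have hp' : 0 < p / (p - 1) := div_pos (by linarith) (by linarith)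
  have hgp : ∀ x, g x ^ (p / (p - 1)) = gnW q m x := fun x => by
    simp only [hg]
    rw [← Real.rpow_mul (gnW_nonneg _ _ _)]
    rw [show (p - 1) / p * (p / (p - 1)) = 1 by
      have : p - 1 ≠ 0 := by linarith
      field_simp, Real.rpow_one]
  have m1 : MemLp (fun x => |deriv u x|) (ENNReal.ofReal p) := by
    rw [← integrable_norm_rpow_iff hcd.abs.aestronglyMeasurable (by simp; linarith) (by simp)]
    rw [ENNReal.toReal_ofReal (by linarith)]
    simpa using h2
  have m2 : MemLp (fun x => g (u x)) (ENNReal.ofReal (p / (p - 1))) := by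
    have hgu : Continuous fun x => g (u x) := hgc.comp hcu
    rw [← integrable_norm_rpow_iff hgu.aestronglyMeasurable (by simpa using hp') (by simp)]
    rw [ENNReal.toReal_ofReal hp'.le]
    refine hWi.congr (Eventually.of_forall fun x => ?_)
    simp only
    rw [Real.norm_of_nonneg (hg0 _), hgp]
  have hH := integral_mul_le_Lp_mul_Lq_of_nonneg hconj
    (Eventually.of_forall fun x => abs_nonneg (deriv u x))
    (Eventually.of_forall fun x => hg0 (u x)) m1 m2
  simp only [hgp, hWint, one_div_div] at hH
  refine le_trans ?_ hH
  have hint : Integrable (fun x => g (u x) * deriv u x) := by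
    have hbd : Integrable (fun x => |deriv u x| ^ p / p + gnW q m (u x) / (p / (p - 1))) :=
      (h2.div_const _).add (hWi.div_const _)
    refine hbd.mono' ((hgc.comp hcu).mul hcd).aestronglyMeasurable
      (Eventually.of_forall fun x => ?_)
    have := Real.young_inequality_of_nonneg (abs_nonneg (deriv u x)) (hg0 (u x)) hconj
    rw [hgp] at this
    rw [norm_mul, Real.norm_of_nonneg (hg0 _), Real.norm_eq_abs, mul_comm]
    exact this
  have hF : ∀ x, HasDerivAt (fun x => Φ (u x)) (g (u x) * deriv u x) x := fun x =>
    (hΦd (u x)).comp x (hd x)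
  have hFc : Continuous fun x => Φ (u x) := hΦc.comp hcu
  have i1 := integral_Ioi_of_hasDerivAt_of_tendsto (a := x0) (m := Φ 0) hFc.continuousWithinAt
    (fun x _ => hF x) hint.integrableOn ((hΦc.tendsto 0).comp ht)
  have i2 := integral_Iic_of_hasDerivAt_of_tendsto (a := x0) (m := Φ 0) hFc.continuousWithinAt
    (fun x _ => hF x) hint.integrableOn ((hΦc.tendsto 0).comp hb)
  rw [hΦ0] at i1 i2
  have hn : ∀ x, ‖g (u x) * deriv u x‖ = |deriv u x| * g (u x) := fun x => by
    rw [norm_mul, Real.norm_of_nonneg (hg0 _), Real.norm_eq_abs, mul_comm]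
  have n1 := norm_integral_le_integral_norm (μ := volume.restrict (Ioi x0))
    (fun x => g (u x) * deriv u x)
  have n2 := norm_integral_le_integral_norm (μ := volume.restrict (Iic x0))
    (fun x => g (u x) * deriv u x)
  rw [i1, Real.norm_eq_abs, zero_sub, abs_neg, hΦx0] at n1
  rw [i2, Real.norm_eq_abs, sub_zero, hΦx0] at n2
  have hsum := intervalIntegral.integral_Iic_add_Ioi (b := x0) (μ := volume)
    (f := fun x => ‖g (u x) * deriv u x‖) hint.norm.integrableOn hint.norm.integrableOn
  simp only [hn] at hsum n1 n2
  rw [← hsum]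
  linarith

lemma gnK_pos (p q m : ℝ) (hp : 1 < p) (hq : 0 < q) (hqm : q < m) : 0 < gnK p q m := by
  have hσ : 0 < (p - 1) / p := div_pos (by linarith) (by linarith)
  have hgc : Continuous fun t => (gnW q m t) ^ ((p - 1) / p) :=
    (gnW_cont q m hq hqm).rpow_const fun x => Or.inr hσ.le
  refine intervalIntegral.intervalIntegral_pos_of_pos_on (hgc.intervalIntegrable _ _) ?_ zero_lt_one
  intro t ht
  apply Real.rpow_pos_of_pos
  have h1 : |t| = t := abs_of_pos ht.1
  rw [gnW_eq q m hqm hq (by rw [h1]; exact ht.2.le), h1]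
  exact sub_pos.2 (Real.rpow_lt_rpow_of_exponent_gt ht.1 ht.2 (by linarith))

lemma gnK_beta (p q m η₂ : ℝ) (hp : 1 < p) (hq : 0 < q) (hqm : q < m)
    (hη₂ : η₂ = (p - 1) * (q + 1) + p) :
    (∫ t in Ioo (0:ℝ) 1,
          t ^ (η₂ / (p * (m - q)) - 1) * (1 - t) ^ ((2 * p - 1) / p - 1)) = (m - q) * gnK p q m := by
  have hn : 0 < m - q := by linarith
  have himg : (fun s : ℝ => s ^ (m - q)) '' Ioo 0 1 = Ioo 0 1 := by
    ext t; constructor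
    · rintro ⟨s, hs, rfl⟩
      exact ⟨Real.rpow_pos_of_pos hs.1 _, Real.rpow_lt_one hs.1.le hs.2 hn⟩
    · intro ht
      refine ⟨t ^ (1 / (m - q)), ⟨Real.rpow_pos_of_pos ht.1 _,
        Real.rpow_lt_one ht.1.le ht.2 (by positivity)⟩, ?_⟩
      simp only
      rw [← Real.rpow_mul ht.1.le, one_div_mul_cancel hn.ne', Real.rpow_one]
  have hder : ∀ x ∈ Ioo (0:ℝ) 1, HasDerivWithinAt (fun s : ℝ => s ^ (m - q))
      ((m - q) * x ^ (m - q - 1)) (Ioo 0 1) x := fun x hx =>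
    (Real.hasDerivAt_rpow_const (Or.inl hx.1.ne')).hasDerivWithinAt
  have hinj : InjOn (fun s : ℝ => s ^ (m - q)) (Ioo 0 1) := by
    intro a ha b hb h
    exact (Real.rpow_left_inj ha.1.le hb.1.le hn.ne').1 h
  have := integral_image_eq_integral_abs_deriv_smul measurableSet_Ioo hder hinj
    (fun t => t ^ (η₂ / (p * (m - q)) - 1) * (1 - t) ^ ((2 * p - 1) / p - 1))
  rw [himg] at this
  rw [this, gnK, intervalIntegral.integral_of_le zero_le_one, integral_Ioc_eq_integral_Ioo,
    ← integral_const_mul]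
  refine setIntegral_congr_fun measurableSet_Ioo fun s hs => ?_
  have hs0 := hs.1
  have h1 : |s| = s := abs_of_pos hs.1
  have hlt : s ^ (m - q) < 1 := Real.rpow_lt_one hs.1.le hs.2 hn
  rw [gnW_eq q m hqm hq (by rw [h1]; exact hs.2.le), h1]
  rw [abs_of_pos (by positivity), smul_eq_mul]
  rw [show s ^ (q + 1) - s ^ (m + 1) = s ^ (q + 1) * (1 - s ^ (m - q)) by
    rw [mul_sub, ← Real.rpow_add hs0]; ring_nf]
  rw [Real.mul_rpow (by positivity) (by linarith), ← Real.rpow_mul hs0.le, ← Real.rpow_mul hs0.le]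
  rw [show (2 * p - 1) / p - 1 = (p - 1) / p by field_simp; ring]
  rw [← mul_assoc, mul_assoc (m - q), ← Real.rpow_add hs0, mul_assoc (m - q)]
  congr 3
  rw [hη₂]
  field_simp
  ring

lemma gn_logC (p q m : ℝ) (hp : 1 < p) (hq : 0 < q) (hqm : q < m)
    (η₁ η₂ θ l C K A B D X Bt : ℝ)
    (hη₁ : η₁ = (p - 1) * (m + 1) + p)
    (hη₂ : η₂ = (p - 1) * (q + 1) + p)
    (hθ : θ = p * (m - q) / ((m + 1) * η₂))
    (hl : l = (m - q) / ((m + 1) * η₂))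
    (hK : 0 < K) (hBt : Bt = (m - q) * K)
    (hC : C = ((2:ℝ) ^ p * (p - 1) ^ (1 - p) * η₁ ^ (η₁ / (m - q)) *
        (m - q) ^ (1 - 2 * p) * η₂ ^ (-(η₂ / (m - q))) * Bt ^ p) ^ (-l))
    (hA : 0 < A) (hB : 0 < B) (hD : 0 < D) (hX : 0 < X) (hABX : X = B - A) :
    0 < C ∧ (2 * K ≤ D ^ (1 / p) * X ^ ((p - 1) / p) →
      A ^ (1 / (m + 1)) ≤ C * B ^ ((1 - θ) / (q + 1)) * D ^ (θ / p)) ∧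
    (2 * K = X → D = X → η₁ * X = (p - 1) * (m - q) * B →
      A ^ (1 / (m + 1)) = C * B ^ ((1 - θ) / (q + 1)) * D ^ (θ / p)) := by
  have hn : 0 < m - q := by linarith
  have hp1 : 0 < p - 1 := by linarith
  have h1 : 0 < η₁ := by
    rw [hη₁]; have : 0 < (p - 1) * (m + 1) := mul_pos hp1 (by linarith)
    linarith
  have h2 : 0 < η₂ := by
    rw [hη₂]; have : 0 < (p - 1) * (q + 1) := mul_pos hp1 (by linarith)
    linarith
  have hm1 : 0 < m + 1 := by linarith
  have hBtp : 0 < Bt := by rw [hBt]; positivity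
  have hCp : 0 < C := by rw [hC]; positivity
  have hηη : η₁ = η₂ + (p - 1) * (m - q) := by rw [hη₁, hη₂]; ring
  have hβ : (1 - θ) / (q + 1) = η₁ / ((m + 1) * η₂) := by
    have : (q + 1) ≠ 0 := by linarith
    rw [hθ]; field_simp; rw [hη₁, hη₂]; ring
  have hγ : θ / p = (m - q) / ((m + 1) * η₂) := by rw [hθ]; field_simp
  have hlogR : Real.log (C * B ^ ((1 - θ) / (q + 1)) * D ^ (θ / p)) = 
      ((m - q) * Real.log D - (m - q) * p * (Real.log 2 + Real.log K)
        + (p - 1) * (m - q) * (Real.log (p - 1) + Real.log (m - q))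
        + η₂ * Real.log η₂ - η₁ * Real.log η₁ + η₁ * Real.log B) / ((m + 1) * η₂) := by
    rw [Real.log_mul (by positivity) (by positivity), Real.log_mul (by positivity) (by positivity),
      Real.log_rpow hB, Real.log_rpow hD, hC, Real.log_rpow (by positivity),
      Real.log_mul (by positivity) (by positivity), Real.log_mul (by positivity) (by positivity),
      Real.log_mul (by positivity) (by positivity), Real.log_mul (by positivity) (by positivity),
      Real.log_mul (by positivity) (by positivity), Real.log_rpow (by positivity),
      Real.log_rpow (by positivity), Real.log_rpow (by positivity), Real.log_rpow (by positivity),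
      Real.log_rpow (by positivity), Real.log_rpow (by positivity), hβ, hγ, hl, hBt,
      Real.log_mul (by positivity) (by positivity)]
    field_simp
    ring
  have hRpos : 0 < C * B ^ ((1 - θ) / (q + 1)) * D ^ (θ / p) := by positivity
  have hw1 : 0 < (p - 1) * (m - q) / η₁ := by positivity
  have hw2 : 0 < η₂ / η₁ := by positivity
  have hww : (p - 1) * (m - q) / η₁ + η₂ / η₁ = 1 := by
    rw [← add_div, div_eq_one_iff_eq h1.ne']; linarith
  refine ⟨hCp, ?_, ?_⟩
  · intro h
    rw [← Real.log_le_log_iff (by positivity) hRpos, hlogR, Real.log_rpow hA]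
    rw [le_div_iff₀ (by positivity)]
    have e1 := Real.log_le_log (by positivity) h
    rw [Real.log_mul (by positivity) (by positivity), Real.log_mul (by positivity) (by positivity),
      Real.log_rpow hD, Real.log_rpow hX] at e1
    have e1' : p * (Real.log 2 + Real.log K) ≤ Real.log D + (p - 1) * Real.log X := by
      have := mul_le_mul_of_nonneg_left e1 (by linarith : 0 ≤ p)
      have e : p * (1 / p * Real.log D + (p - 1) / p * Real.log X) =
        Real.log D + (p - 1) * Real.log X := by field_simp
      linarith
    have am := Real.geom_mean_le_arith_mean2_weighted hw1.le hw2.le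
      (p₁ := X / ((p - 1) * (m - q) / η₁)) (p₂ := A / (η₂ / η₁)) (by positivity) (by positivity) hww
    rw [mul_div_cancel₀ _ hw1.ne', mul_div_cancel₀ _ hw2.ne'] at am
    have e2 := Real.log_le_log (by positivity) am
    rw [Real.log_mul (by positivity) (by positivity), Real.log_rpow (by positivity),
      Real.log_rpow (by positivity), Real.log_div (by positivity) (by positivity),
      Real.log_div (by positivity) (by positivity), Real.log_div (by positivity) (by positivity),
      Real.log_div (by positivity) (by positivity), Real.log_mul (by positivity) (by positivity),
      show X + A = B by linarith] at e2
    have e3 := mul_le_mul_of_nonneg_left e2 h1.le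
    have e4 : η₁ * ((p - 1) * (m - q) / η₁ * (Real.log X - (Real.log (p - 1) + Real.log (m - q) - Real.log η₁)) +
        η₂ / η₁ * (Real.log A - (Real.log η₂ - Real.log η₁))) = 
        (p - 1) * (m - q) * (Real.log X - (Real.log (p - 1) + Real.log (m - q) - Real.log η₁)) +
        η₂ * (Real.log A - (Real.log η₂ - Real.log η₁)) := by field_simp
    rw [e4] at e3
    have e5 := mul_le_mul_of_nonneg_left e1' hn.le
    have e6 : 1 / (m + 1) * Real.log A * ((m + 1) * η₂) = η₂ * Real.log A := by field_simp
    rw [e6]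
    have e7 : η₁ * Real.log η₁ = η₂ * Real.log η₁ + (p - 1) * (m - q) * Real.log η₁ := by
      rw [← add_mul, ← hηη]
    linarith
  · intro hKX hDX hXB
    apply Real.log_injOn_pos (mem_Ioi.2 (by positivity)) (mem_Ioi.2 hRpos)
    rw [hlogR, Real.log_rpow hA, eq_div_iff (by positivity)]
    have e6 : 1 / (m + 1) * Real.log A * ((m + 1) * η₂) = η₂ * Real.log A := by field_simp
    rw [e6]
    have e1 : Real.log X = Real.log 2 + Real.log K := by
      rw [← hKX, Real.log_mul (by positivity) (by positivity)]
    have hX' : X = (p - 1) * (m - q) * B / η₁ := by rw [eq_div_iff h1.ne']; linarith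
    have hA' : A = η₂ * B / η₁ := by
      rw [eq_div_iff h1.ne', show A = B - X by linarith]
      have : (B - X) * η₁ = B * η₁ - η₁ * X := by ring
      rw [this, hXB, hηη]; ring
    have e2 : Real.log X = Real.log (p - 1) + Real.log (m - q) + Real.log B - Real.log η₁ := by
      rw [hX', Real.log_div (by positivity) (by positivity), Real.log_mul (by positivity) (by positivity),
        Real.log_mul (by positivity) (by positivity)]
    have e3 : Real.log A = Real.log η₂ + Real.log B - Real.log η₁ := by
      rw [hA', Real.log_div (by positivity) (by positivity), Real.log_mul (by positivity) (by positivity)]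
    rw [hDX, ← e1, e3]
    rw [show (m - q) * Real.log X - (m - q) * p * Real.log X = - ((p - 1) * (m - q) * Real.log X) by ring, e2]
    have e7 : (η₁ - η₂ - (p - 1) * (m - q)) = 0 := by linarith
    linear_combination (Real.log η₁ - Real.log B) * e7

lemma gn_main (p q m : ℝ) (hp : 1 < p) (hq : 0 < q) (hqm : q < m)
    (η₁ η₂ θ l C Bt : ℝ)
    (hη₁ : η₁ = (p - 1) * (m + 1) + p)
    (hη₂ : η₂ = (p - 1) * (q + 1) + p)
    (hθ : θ = p * (m - q) / ((m + 1) * η₂))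
    (hl : l = (m - q) / ((m + 1) * η₂))
    (hBt : Bt = (m - q) * gnK p q m)
    (hC : C = ((2:ℝ) ^ p * (p - 1) ^ (1 - p) * η₁ ^ (η₁ / (m - q)) *
        (m - q) ^ (1 - 2 * p) * η₂ ^ (-(η₂ / (m - q))) * Bt ^ p) ^ (-l))
    (u : ℝ → ℝ) (hu : ContDiff ℝ 1 u)
    (hu1 : Integrable (fun x => |u x| ^ (q + 1)))
    (hu2 : Integrable (fun x => |deriv u x| ^ p)) :
      (∫ x : ℝ, |u x| ^ (m + 1)) ^ (1 / (m + 1)) ≤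
        C * (∫ x : ℝ, |u x| ^ (q + 1)) ^ ((1 - θ) / (q + 1)) *
          (∫ x : ℝ, |deriv u x| ^ p) ^ (θ / p) := by
  have hKp := gnK_pos p q m hp hq hqm
  have hm1 : 0 < m + 1 := by linarith
  have hp1 : 0 < p - 1 := by linarith
  have hn : 0 < m - q := by linarith
  have h1 : 0 < η₁ := by
    rw [hη₁]; have : 0 < (p - 1) * (m + 1) := mul_pos hp1 (by linarith)
    linarith
  have h2 : 0 < η₂ := by
    rw [hη₂]; have : 0 < (p - 1) * (q + 1) := mul_pos hp1 (by linarith)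
    linarith
  have hC0 : 0 < C := (gn_logC p q m hp hq hqm η₁ η₂ θ l C (gnK p q m) 1 2 1 1 Bt hη₁ hη₂ hθ hl hKp
    hBt hC one_pos two_pos one_pos one_pos (by norm_num)).1
  have hA0 : 0 ≤ ∫ x : ℝ, |u x| ^ (m + 1) := integral_nonneg fun x => by positivity
  have hB0 : 0 ≤ ∫ x : ℝ, |u x| ^ (q + 1) := integral_nonneg fun x => by positivity
  have hD0 : 0 ≤ ∫ x : ℝ, |deriv u x| ^ p := integral_nonneg fun x => by positivity
  rcases hA0.eq_or_lt with hA | hA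
  · rw [← hA, Real.zero_rpow (by positivity)]; positivity
  obtain ⟨ht, hb⟩ := gn_tendsto p q hp hq u hu hu1 hu2
  have hne : ∃ y, u y ≠ 0 := by
    by_contra! h
    simp [h, Real.zero_rpow hm1.ne'] at hA
  obtain ⟨y, hy⟩ := hne
  obtain ⟨x0, hx0⟩ : ∃ x0, ∀ x, |u x| ≤ |u x0| := by
    have hc : Tendsto (fun x => |u x|) (cocompact ℝ) (𝓝 0) := by
      rw [cocompact_eq_atBot_atTop]
      exact (tendsto_zero_iff_abs_tendsto_zero _).1 (hb.sup ht)
    exact hu.continuous.abs.exists_forall_ge' y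
      (hc.eventually_le_const (abs_pos.2 hy))
  set M := |u x0| with hM
  have hMp : 0 < M := (abs_pos.2 hy).trans_le (hx0 y)
  set v : ℝ → ℝ := fun x => M⁻¹ * u x with hv
  have hvc : ContDiff ℝ 1 v := contDiff_const.mul hu
  have hvd : ∀ x, deriv v x = M⁻¹ * deriv u x := fun x =>
    deriv_const_mul _ (hu.differentiable one_ne_zero x)
  have habs : ∀ s a : ℝ, |M⁻¹ * a| ^ s = (M⁻¹) ^ s * |a| ^ s := fun s a => by
    rw [abs_mul, abs_of_pos (inv_pos.2 hMp), Real.mul_rpow (by positivity) (abs_nonneg _)]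
  have i1 : Integrable (fun x => |v x| ^ (q + 1)) := by
    simp only [hv, habs]; exact hu1.const_mul _
  have i2 : Integrable (fun x => |deriv v x| ^ p) := by
    simp only [hvd, habs]; exact hu2.const_mul _
  obtain ⟨i3, hkey⟩ := gn_key p q m hp hq hqm v hvc i1 i2 (fun x => by
    simp only [hv, abs_mul, abs_of_pos (inv_pos.2 hMp)]
    rw [inv_mul_le_iff₀ hMp, mul_one]; exact hx0 x) x0 (by
    simp only [hv, abs_mul, abs_of_pos (inv_pos.2 hMp)]
    exact inv_mul_cancel₀ hMp.ne')
  simp only [hvd] at hkey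
  simp only [hv, habs, integral_const_mul] at hkey
  set A := ∫ x : ℝ, |u x| ^ (m + 1)
  set B := ∫ x : ℝ, |u x| ^ (q + 1)
  set D := ∫ x : ℝ, |deriv u x| ^ p
  have hX : 0 ≤ M⁻¹ ^ (q + 1) * B - M⁻¹ ^ (m + 1) * A := by
    have : M⁻¹ ^ (q + 1) * B - M⁻¹ ^ (m + 1) * A = ∫ x, gnW q m (v x) := by
      simp only [A, B, ← integral_const_mul]
      simp only [← habs]
      rw [← integral_sub i1 i3]
      congr 1; ext x
      refine (gnW_eq q m hqm hq ?_).symm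
      simp only [hv, abs_mul, abs_of_pos (inv_pos.2 hMp)]
      rw [inv_mul_le_iff₀ hMp, mul_one]; exact hx0 x
    rw [this]; exact integral_nonneg fun x => gnW_nonneg _ _ _
  have hX' : 0 < M⁻¹ ^ (q + 1) * B - M⁻¹ ^ (m + 1) * A := by
    rcases hX.eq_or_lt with h | h
    · rw [← h, Real.zero_rpow (by positivity)] at hkey; linarith
    · exact h
  have hD : 0 < D := by
    rcases hD0.eq_or_lt with h | h
    · rw [← h, mul_zero, Real.zero_rpow (by positivity)] at hkey; linarith
    · exact h
  have hA' : 0 < M⁻¹ ^ (m + 1) * A := by positivity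
  have hB' : 0 < M⁻¹ ^ (q + 1) * B := by linarith
  have hD' : 0 < M⁻¹ ^ p * D := by positivity
  have hf := (gn_logC p q m hp hq hqm η₁ η₂ θ l C (gnK p q m) _ _ _ _ Bt hη₁ hη₂ hθ hl hKp
    hBt hC hA' hB' hD' hX' rfl).2.1 hkey
  have hMi : 0 < M⁻¹ := inv_pos.2 hMp
  rw [Real.mul_rpow (by positivity) hA0, Real.mul_rpow (by positivity) hB0,
    Real.mul_rpow (by positivity) hD0, ← Real.rpow_mul hMi.le, ← Real.rpow_mul hMi.le,
    ← Real.rpow_mul hMi.le, mul_one_div_cancel hm1.ne', Real.rpow_one,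
    mul_div_cancel₀ _ (by linarith), mul_div_cancel₀ _ (by linarith)] at hf
  have hs : M⁻¹ = M⁻¹ ^ (1 - θ) * M⁻¹ ^ θ := by
    rw [← Real.rpow_add hMi, sub_add_cancel, Real.rpow_one]
  refine le_of_mul_le_mul_left ?_ hMi
  refine hf.trans (le_of_eq ?_)
  conv_rhs => rw [hs]
  ring

lemma gn_T (G : ℝ → ℝ) (hG : Continuous G)
    (hpos : ∀ s ∈ Ioo (0:ℝ) 1, 0 < G s)
    (hint : IntervalIntegrable (fun s => 1 / G s) volume (1/2) 1) :
    ∃ T : ℝ → ℝ, (∀ s ∈ Ioo (0:ℝ) 1, HasDerivAt T (-(1 / G s)) s) ∧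
      StrictAntiOn T (Ioo 0 1) ∧ (∀ s ∈ Ioo (0:ℝ) 1, 0 < T s) ∧
      (∀ ε > 0, ∃ s ∈ Ioo (0:ℝ) 1, T s < ε) := by
  set F : ℝ → ℝ := fun s => ∫ t in (1/2:ℝ)..s, 1 / G t with hF
  have hcont : ContinuousOn (fun s => 1 / G s) (Ioo 0 1) := fun s hs =>
    (continuousAt_const.div hG.continuousAt (hpos s hs).ne').continuousWithinAt
  have hFd : ∀ s ∈ Ioo (0:ℝ) 1, HasDerivAt F (1 / G s) s := by
    intro s hs
    apply intervalIntegral.integral_hasDerivAt_right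
    · refine (hcont.mono ?_).intervalIntegrable
      intro y hy
      rw [mem_uIcc] at hy
      constructor
      · rcases hy with h | h <;> linarith [hs.1, h.1]
      · rcases hy with h | h <;> linarith [hs.2, h.2]
    · exact hcont.stronglyMeasurableAtFilter isOpen_Ioo s hs
    · exact continuousAt_const.div hG.continuousAt (hpos s hs).ne'
  have hF1 : ContinuousWithinAt F (Icc (1/2) 1) 1 := by
    have := intervalIntegral.continuousOn_primitive_interval (μ := volume)
      (f := fun s => 1 / G s) (a := 1/2) (b := 1) (by
        rw [uIcc_of_le (by norm_num)]
        exact (intervalIntegrable_iff_integrableOn_Icc_of_le (by norm_num)).1 hint)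
    rw [uIcc_of_le (by norm_num)] at this
    exact this 1 ⟨by norm_num, le_rfl⟩
  set T : ℝ → ℝ := fun s => F 1 - F s with hT
  have hTd : ∀ s ∈ Ioo (0:ℝ) 1, HasDerivAt T (-(1 / G s)) s := fun s hs =>
    (hFd s hs).const_sub (F 1)
  have hT1 : ContinuousWithinAt T (Icc (1/2) 1) 1 := continuousWithinAt_const.sub hF1
  have hT10 : T 1 = 0 := by simp [hT]
  have hTc : ContinuousOn T (Ioc 0 1) := by
    intro s hs
    rcases hs.2.eq_or_lt with h | h
    · rw [h]
      refine hT1.mono_of_mem_nhdsWithin ?_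
      have : Ioi (1/2:ℝ) ∈ 𝓝 (1:ℝ) := Ioi_mem_nhds (by norm_num)
      filter_upwards [mem_nhdsWithin_of_mem_nhds this, self_mem_nhdsWithin] with y h1 h2
      exact ⟨le_of_lt h1, h2.2⟩
    · exact (hTd s ⟨hs.1, h⟩).continuousAt.continuousWithinAt
  have hanti : StrictAntiOn T (Ioc 0 1) := by
    apply strictAntiOn_of_deriv_neg (convex_Ioc 0 1) hTc
    intro s hs
    rw [interior_Ioc] at hs
    rw [(hTd s hs).deriv]
    have := hpos s hs
    simp only [neg_neg_iff_pos] 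
    positivity
  refine ⟨T, hTd, hanti.mono Ioo_subset_Ioc_self, ?_, ?_⟩
  · intro s hs
    rw [← hT10]
    exact hanti ⟨hs.1, hs.2.le⟩ ⟨one_pos, le_rfl⟩ hs.2
  · intro ε hε
    have h1 : ∀ᶠ s in 𝓝[Ioo (1/2:ℝ) 1] 1, T s < ε := by
      have := (hT1.mono (Ioo_subset_Icc_self)).eventually_lt_const (u := ε) (by rwa [hT10])
      exact this
    have hne : (𝓝[Ioo (1/2:ℝ) 1] 1).NeBot := by
      rw [← mem_closure_iff_nhdsWithin_neBot, closure_Ioo (by norm_num)]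
      exact ⟨by norm_num, le_rfl⟩
    obtain ⟨s, hs, hs'⟩ := (h1.and self_mem_nhdsWithin).exists
    exact ⟨s, ⟨by linarith [hs'.1], hs'.2⟩, hs⟩

lemma gn_ode (G : ℝ → ℝ) (hG : Continuous G) (hG0 : G 0 = 0) (hG1 : G 1 = 0)
    (hpos : ∀ s ∈ Ioo (0:ℝ) 1, 0 < G s)
    (hint : IntervalIntegrable (fun s => 1 / G s) volume (1/2) 1) :
    ∃ h T : ℝ → ℝ, (∀ x, HasDerivAt h (-G (h x)) x) ∧ (∀ x ≤ 0, h x = 1) ∧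
      (∀ x, 0 < x → h x < 1) ∧ (∀ x, 0 ≤ h x) ∧
      (∀ s ∈ Ioo (0:ℝ) 1, HasDerivAt T (-(1 / G s)) s) ∧ InjOn T (Ioo 0 1) ∧
      (∀ s ∈ Ioo (0:ℝ) 1, 0 < T s) ∧ (∀ s ∈ Ioo (0:ℝ) 1, h (T s) = s) ∧
      (∀ x, 0 < x → 0 < h x → T (h x) = x) := by
  obtain ⟨T, hTd, hTa, hTp, hT0⟩ := gn_T G hG hpos hint
  set S : ℝ → Set ℝ := fun x => {s | s = 0 ∨ (s ∈ Ioo (0:ℝ) 1 ∧ x ≤ T s)} with hS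
  set h : ℝ → ℝ := fun x => sSup (S x) with hh
  have hbdd : ∀ x, BddAbove (S x) := fun x => ⟨1, by
    rintro s (rfl | hs)
    · exact zero_le_one
    · exact hs.1.2.le⟩
  have hzero : ∀ x, (0:ℝ) ∈ S x := fun x => Or.inl rfl
  have h0 : ∀ x, 0 ≤ h x := fun x => le_csSup (hbdd x) (hzero x)
  have hanti : Antitone h := by
    intro x y hxy
    refine csSup_le_csSup (hbdd x) ⟨0, hzero y⟩ ?_
    rintro s (rfl | hs)
    · exact Or.inl rfl
    · exact Or.inr ⟨hs.1, hxy.trans hs.2⟩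
  have hhT : ∀ s ∈ Ioo (0:ℝ) 1, h (T s) = s := by
    intro s hs
    apply IsGreatest.csSup_eq
    refine ⟨Or.inr ⟨hs, le_rfl⟩, ?_⟩
    rintro s' (rfl | hs')
    · exact hs.1.le
    · exact (hTa.le_iff_ge hs hs'.1).1 hs'.2
  have hle1 : ∀ x, h x ≤ 1 := fun x => csSup_le ⟨0, hzero x⟩ (by
    rintro s (rfl | hs)
    · exact zero_le_one
    · exact hs.1.2.le)
  have hneg : ∀ x ≤ 0, h x = 1 := by
    intro x hx
    refine le_antisymm (hle1 x) (le_of_forall_lt fun a ha => ?_)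
    obtain ⟨s, hs1, hs2⟩ := exists_between (max_lt ha zero_lt_one)
    have hs : s ∈ Ioo (0:ℝ) 1 := ⟨(le_max_right _ _).trans_lt hs1, hs2⟩
    exact ((le_max_left _ _).trans_lt hs1).trans_le
      (le_csSup (hbdd x) (Or.inr ⟨hs, hx.trans (hTp s hs).le⟩))
  have hlt1 : ∀ x, 0 < x → h x < 1 := by
    intro x hx
    obtain ⟨s, hs, hs'⟩ := hT0 x hx
    exact (hanti hs'.le).trans_lt (by rw [hhT s hs]; exact hs.2)
  have hbelow : ∀ x, ∀ s ∈ Ioo (0:ℝ) 1, s < h x → x < T s := by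
    intro x s hs hsx
    obtain ⟨s', hs', hlt⟩ := exists_lt_of_lt_csSup ⟨0, hzero x⟩ hsx
    rcases hs' with rfl | hs'
    · exact absurd hlt (not_lt.2 hs.1.le)
    · exact hs'.2.trans_lt (hTa hs hs'.1 hlt)
  have habove : ∀ x, ∀ s ∈ Ioo (0:ℝ) 1, h x < s → T s < x := by
    intro x s hs hsx
    by_contra! hc
    exact absurd (le_csSup (hbdd x) (Or.inr ⟨hs, hc⟩)) (not_le.2 hsx)
  have hcont : Continuous h := by
    refine continuous_iff_continuousAt.2 fun x => tendsto_order.2 ⟨fun a ha => ?_, fun b hb => ?_⟩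
    · rcases lt_or_ge a 0 with ha0 | ha0
      · exact Eventually.of_forall fun y => ha0.trans_le (h0 y)
      · obtain ⟨s, hs1, hs2⟩ := exists_between ha
        have hs : s ∈ Ioo (0:ℝ) 1 := ⟨ha0.trans_lt hs1, hs2.trans_le (hle1 x)⟩
        filter_upwards [Iio_mem_nhds (hbelow x s hs hs2)] with y hy
        have := hanti (le_of_lt hy)
        rw [hhT s hs] at this
        exact hs1.trans_le this
    · rcases lt_or_ge 1 b with hb1 | hb1
      · exact Eventually.of_forall fun y => (hle1 y).trans_lt hb1
      · obtain ⟨s, hs1, hs2⟩ := exists_between hb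
        have hs : s ∈ Ioo (0:ℝ) 1 := ⟨(h0 x).trans_lt hs1, hs2.trans_le hb1⟩
        filter_upwards [Ioi_mem_nhds (habove x s hs hs1)] with y hy
        have := hanti (le_of_lt hy)
        rw [hhT s hs] at this
        exact this.trans_lt hs2
  have hTh : ∀ x, h x ∈ Ioo (0:ℝ) 1 → T (h x) = x := by
    intro x hx
    have hTc : ContinuousAt T (h x) := (hTd _ hx).continuousAt
    rcases lt_trichotomy (T (h x)) x with hc | hc | hc
    · exfalso
      have ev := (hTc.eventually_lt_const hc).and (isOpen_Ioo.mem_nhds hx)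
      obtain ⟨s, ⟨hs1, hs2⟩, hs3⟩ :=
        ((ev.filter_mono nhdsWithin_le_nhds).and (self_mem_nhdsWithin (s := Iio (h x)))).exists
      exact lt_asymm hs1 (hbelow x s hs2 hs3)
    · exact hc
    · exfalso
      have ev := (hTc.eventually_const_lt hc).and (isOpen_Ioo.mem_nhds hx)
      obtain ⟨s, ⟨hs1, hs2⟩, hs3⟩ :=
        ((ev.filter_mono nhdsWithin_le_nhds).and (self_mem_nhdsWithin (s := Ioi (h x)))).exists
      exact lt_asymm hs1 (habove x s hs2 hs3)
  have hd1 : ∀ x, h x ∈ Ioo (0:ℝ) 1 → HasDerivAt h (-G (h x)) x := by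
    intro x hx
    have := HasDerivAt.of_local_left_inverse hcont.continuousAt (hTd _ hx)
      (by have := hpos _ hx; simp [this.ne']) (by
        filter_upwards [hcont.continuousAt.preimage_mem_nhds (isOpen_Ioo.mem_nhds hx)] with y hy
        exact hTh y hy)
    have e : (-(1 / G (h x)))⁻¹ = -G (h x) := by rw [inv_neg, one_div, inv_inv]
    rwa [e] at this
  set E : Set ℝ := {0} ∪ {x | h x = 0 ∧ ∀ y < x, h y ≠ 0} with hE
  have hEc : E.Countable := by
    refine (countable_singleton 0).union (Set.Subsingleton.countable ?_)
    rintro x ⟨hx, hx'⟩ y ⟨hy, hy'⟩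
    rcases lt_trichotomy x y with hc | hc | hc
    · exact absurd hx (hy' x hc)
    · exact hc
    · exact absurd hy (hx' y hc)
  have hd2 : ∀ x, x ∉ E → HasDerivAt h (-G (h x)) x := by
    intro x hx
    rcases (h0 x).eq_or_lt with hx0 | hx0
    · have : ∃ y < x, h y = 0 := by
        by_contra! hc
        exact hx (Or.inr ⟨hx0.symm, hc⟩)
      obtain ⟨y, hyx, hy⟩ := this
      rw [← hx0, hG0, neg_zero]
      refine (hasDerivAt_const x (0:ℝ)).congr_of_eventuallyEq ?_
      filter_upwards [Ioi_mem_nhds hyx] with z hz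
      exact le_antisymm (hy ▸ hanti (le_of_lt hz)) (h0 z)
    rcases (hle1 x).eq_or_lt with hx1 | hx1
    · have hxn : x < 0 := by
        rcases lt_trichotomy x 0 with hc | hc | hc
        · exact hc
        · exact absurd (Or.inl hc) hx
        · exact absurd hx1 (hlt1 x hc).ne
      rw [hx1, hG1, neg_zero]
      refine (hasDerivAt_const x (1:ℝ)).congr_of_eventuallyEq ?_
      filter_upwards [Iio_mem_nhds hxn] with z hz
      exact hneg z (le_of_lt hz)
    · exact hd1 x ⟨hx0, hx1⟩
  have hGh : Continuous fun x => -G (h x) := (hG.comp hcont).neg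
  have hFTC : h = fun x => h 0 + ∫ t in (0:ℝ)..x, -G (h t) := by
    ext x
    rw [integral_eq_of_hasDerivAt_off_countable h (fun t => -G (h t)) hEc hcont.continuousOn
      (fun y hy => hd2 y hy.2) (hGh.intervalIntegrable _ _)]
    ring
  have hd : ∀ x, HasDerivAt h (-G (h x)) x := by
    intro x
    have := (hGh.integral_hasStrictDerivAt 0 x).hasDerivAt.const_add (h 0)
    rw [← hFTC] at this
    exact this
  exact ⟨h, T, hd, hneg, hlt1, h0, hTd, hTa.injOn, hTp, hhT, fun x hx hx' => hTh x ⟨hx', hlt1 x hx⟩⟩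

lemma gn_cov (G h T F : ℝ → ℝ) 
    (hpos : ∀ s ∈ Ioo (0:ℝ) 1, 0 < G s)
    (hlt1 : ∀ x, 0 < x → h x < 1) (h0 : ∀ x, 0 ≤ h x)
    (hTd : ∀ s ∈ Ioo (0:ℝ) 1, HasDerivAt T (-(1 / G s)) s) (hTi : InjOn T (Ioo 0 1))
    (hTp : ∀ s ∈ Ioo (0:ℝ) 1, 0 < T s) (hhT : ∀ s ∈ Ioo (0:ℝ) 1, h (T s) = s)
    (hTh : ∀ x, 0 < x → 0 < h x → T (h x) = x) (hF : F 0 = 0)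
    (hi : IntegrableOn (fun s => F s / G s) (Ioo 0 1)) :
    Integrable (fun x => F (h |x|)) ∧ ∫ x, F (h |x|) = 2 * ∫ s in Ioo (0:ℝ) 1, F s / G s := by
  have himg : T '' Ioo 0 1 ⊆ Ioi 0 := by
    rintro _ ⟨s, hs, rfl⟩; exact hTp s hs
  have hdiff : ∀ x ∈ Ioi (0:ℝ) \ T '' Ioo 0 1, F (h x) = 0 := by
    rintro x ⟨hx, hx'⟩
    have : h x = 0 := by
      rcases (h0 x).eq_or_lt with h' | h'
      · exact h'.symm
      · exact absurd ⟨h x, ⟨h', hlt1 x hx⟩, hTh x hx h'⟩ hx'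
    rw [this, hF]
  have hTw : ∀ s ∈ Ioo (0:ℝ) 1, HasDerivWithinAt T (-(1 / G s)) (Ioo 0 1) s := fun s hs =>
    (hTd s hs).hasDerivWithinAt
  have hcongr : ∀ s ∈ Ioo (0:ℝ) 1, |(-(1 / G s))| • F (h (T s)) = F s / G s := by
    intro s hs
    have := hpos s hs
    rw [abs_neg, abs_of_pos (by positivity), hhT s hs, smul_eq_mul]; ring
  have i1 : IntegrableOn (fun x => F (h x)) (T '' Ioo 0 1) := by
    rw [integrableOn_image_iff_integrableOn_abs_deriv_smul measurableSet_Ioo hTw hTi]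
    exact hi.congr_fun (fun s hs => (hcongr s hs).symm) measurableSet_Ioo
  have e1 : ∫ x in T '' Ioo 0 1, F (h x) = ∫ s in Ioo (0:ℝ) 1, F s / G s := by
    rw [integral_image_eq_integral_abs_deriv_smul measurableSet_Ioo hTw hTi]
    exact setIntegral_congr_fun measurableSet_Ioo hcongr
  have i2 : IntegrableOn (fun x => F (h x)) (Ioi 0) :=
    i1.of_forall_sdiff_eq_zero measurableSet_Ioi hdiff
  have hme : MeasurableSet (T '' Ioo 0 1) := by
    exact measurableSet_Ioo.image_of_continuousOn_injOn
      (fun s hs => (hTd s hs).continuousAt.continuousWithinAt) hTi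
  have e2 : ∫ x in Ioi (0:ℝ), F (h x) = ∫ s in Ioo (0:ℝ) 1, F s / G s := by
    rw [← e1]
    exact setIntegral_eq_of_subset_of_forall_sdiff_eq_zero measurableSet_Ioi himg hdiff
  refine ⟨?_, ?_⟩
  · rw [← integrableOn_univ, ← Iic_union_Ioi (a := (0:ℝ))]
    refine IntegrableOn.union ?_ ?_
    · have := (integrableOn_Ici_iff_integrableOn_Ioi).2 i2
      rw [show Iic (0:ℝ) = Neg.neg ⁻¹' (Ici 0) by ext; simp]
      have h2 := ((Measure.measurePreserving_neg (volume : Measure ℝ)).integrableOn_comp_preimage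
        (MeasurableEquiv.neg ℝ).measurableEmbedding).2 this
      refine h2.congr_fun (fun x hx => ?_) (by simp)
      have hx' : x ≤ 0 := by simpa using hx
      simp [abs_of_nonpos hx']
    · exact i2.congr_fun (fun x hx => by simp [abs_of_pos (mem_Ioi.1 hx)]) measurableSet_Ioi
  · rw [integral_comp_abs (f := fun x => F (h x)), e2]

lemma gn_bern (n s : ℝ) (hn : 0 < n) (hs : s ∈ Ioo (0:ℝ) 1) : min 1 n * (1 - s) ≤ 1 - s ^ n := by
  rcases le_total 1 n with h | h
  · rw [min_eq_left h]
    have := Real.rpow_le_rpow_of_exponent_ge hs.1 hs.2.le h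
    rw [Real.rpow_one] at this
    linarith
  · rw [min_eq_right h]
    have := rpow_one_add_le_one_add_mul_self (s := s - 1) (by linarith [hs.1]) hn.le h
    rw [add_sub_cancel] at this
    linarith

lemma gn_extremal (p q m η₁ : ℝ) (hp : 1 < p) (hq : 0 < q) (hqm : q < m)
    (hη₁ : η₁ = (p - 1) * (m + 1) + p) :
    ∃ u : ℝ → ℝ, ContDiff ℝ 1 u ∧ Integrable (fun x => |u x| ^ (q + 1)) ∧
      Integrable (fun x => |deriv u x| ^ p) ∧
      (∫ x, |deriv u x| ^ p) = 2 * gnK p q m ∧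
      (∫ x, |u x| ^ (q + 1)) - (∫ x, |u x| ^ (m + 1)) = 2 * gnK p q m ∧
      η₁ * (2 * gnK p q m) = (p - 1) * (m - q) * ∫ x, |u x| ^ (q + 1) := by
  have hp0 : 0 < p := by linarith
  have hn : 0 < m - q := by linarith
  have hq1 : 0 < q + 1 := by linarith
  have hm1 : 0 < m + 1 := by linarith
  have hσ : 0 < (p - 1) / p := div_pos (by linarith) (by linarith)
  have hWc := gnW_cont q m hq hqm
  set G : ℝ → ℝ := fun s => gnW q m s ^ (1 / p) with hG
  have hGc : Continuous G := hWc.rpow_const fun x => Or.inr (by positivity)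
  set g : ℝ → ℝ := fun t => (gnW q m t) ^ ((p - 1) / p) with hg
  have hgc : Continuous g := hWc.rpow_const fun x => Or.inr hσ.le
  have hW0 : gnW q m 0 = 0 := by
    rw [gnW_eq q m hqm hq (by simp), abs_zero, Real.zero_rpow hq1.ne', Real.zero_rpow hm1.ne', sub_zero]
  have hW1 : gnW q m 1 = 0 := by
    rw [gnW_eq q m hqm hq (by simp)]; simp
  have hG0 : G 0 = 0 := by simp only [hG]; rw [hW0, Real.zero_rpow (by positivity)]
  have hG1 : G 1 = 0 := by simp only [hG]; rw [hW1, Real.zero_rpow (by positivity)]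
  have hWs : ∀ s ∈ Ioo (0:ℝ) 1, gnW q m s = s ^ (q + 1) - s ^ (m + 1) := by
    intro s hs
    have h1 : |s| = s := abs_of_pos hs.1
    rw [gnW_eq q m hqm hq (by rw [h1]; exact hs.2.le), h1]
  have hWpos : ∀ s ∈ Ioo (0:ℝ) 1, 0 < gnW q m s := by
    intro s hs
    rw [hWs s hs]
    exact sub_pos.2 (Real.rpow_lt_rpow_of_exponent_gt hs.1 hs.2 (by linarith))
  have hGpos : ∀ s ∈ Ioo (0:ℝ) 1, 0 < G s := fun s hs => Real.rpow_pos_of_pos (hWpos s hs) _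
  have hGn : ∀ s, 0 ≤ G s := fun s => Real.rpow_nonneg (gnW_nonneg _ _ _) _
  have hGp : ∀ s, G s ^ p = gnW q m s := fun s => by
    simp only [hG]
    rw [← Real.rpow_mul (gnW_nonneg _ _ _), one_div_mul_cancel hp0.ne', Real.rpow_one]
  have hWG : ∀ s ∈ Ioo (0:ℝ) 1, gnW q m s / G s = g s := by
    intro s hs
    simp only [hG, hg]
    nth_rewrite 1 [← Real.rpow_one (gnW q m s)]
    rw [← Real.rpow_sub (hWpos s hs)]
    congr 1; field_simp
  set c := min 1 (m - q) with hc
  have hcp : 0 < c := lt_min one_pos hn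
  have hbd : ∀ s ∈ Ioo (0:ℝ) 1, |s| ^ (q + 1) / G s ≤ c ^ (-(1 / p)) * (1 - s) ^ (-(1 / p)) := by
    intro s hs
    have hs0 := hs.1
    have h1s : 0 < 1 - s := by linarith [hs.2]
    rw [abs_of_pos hs.1]
    have e1 : s ^ (q + 1) * (c * (1 - s)) ≤ gnW q m s := by
      rw [hWs s hs, show s ^ (q + 1) - s ^ (m + 1) = s ^ (q + 1) * (1 - s ^ (m - q)) by
        rw [mul_sub, ← Real.rpow_add hs0]; ring_nf]
      exact mul_le_mul_of_nonneg_left (gn_bern _ s hn hs) (by positivity)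
    have e2 : (s ^ (q + 1)) ^ (1 / p) * (c * (1 - s)) ^ (1 / p) ≤ G s := by
      rw [← Real.mul_rpow (by positivity) (by positivity)]
      exact Real.rpow_le_rpow (by positivity) e1 (by positivity)
    have e3 : s ^ (q + 1) ≤ (s ^ (q + 1)) ^ (1 / p) := by
      have := Real.rpow_le_rpow_of_exponent_ge (x := s ^ (q + 1)) (by positivity)
        (Real.rpow_le_one hs0.le hs.2.le hq1.le) (y := 1) (z := 1 / p)
        (by rw [div_le_one hp0]; exact hp.le)
      rwa [Real.rpow_one] at this
    rw [← Real.mul_rpow hcp.le h1s.le, Real.rpow_neg (by positivity), div_le_iff₀ (hGpos s hs),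
      inv_mul_eq_div, le_div_iff₀ (by positivity)]
    exact (mul_le_mul_of_nonneg_right e3 (by positivity)).trans e2
  have hb1 : IntegrableOn (fun s : ℝ => (1 - s) ^ (-(1 / p))) (Ioo 0 1) := by
    have h1 : IntervalIntegrable (fun x : ℝ => x ^ (-(1 / p))) volume 1 0 := by
      apply intervalIntegral.intervalIntegrable_rpow'
      rw [neg_lt_neg_iff, div_lt_one hp0]; exact hp
    have := h1.comp_sub_left 1
    simp only [sub_self, sub_zero] at this
    exact (intervalIntegrable_iff_integrableOn_Ioo_of_le zero_le_one).1 this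
  have hcontB : ContinuousOn (fun s => |s| ^ (q + 1) / G s) (Ioo 0 1) := by
    refine ContinuousOn.div ?_ hGc.continuousOn fun s hs => (hGpos s hs).ne'
    exact (continuous_abs.rpow_const fun x => Or.inr hq1.le).continuousOn
  have hBi : IntegrableOn (fun s => |s| ^ (q + 1) / G s) (Ioo 0 1) := by
    refine (hb1.const_mul (c ^ (-(1 / p)))).mono' (hcontB.aestronglyMeasurable measurableSet_Ioo) ?_
    refine (ae_restrict_iff' measurableSet_Ioo).2 (Eventually.of_forall fun s hs => ?_)
    rw [Real.norm_of_nonneg (div_nonneg (by positivity) (hGn s))]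
    exact hbd s hs
  have hgi : IntegrableOn g (Ioo 0 1) :=
    (hgc.continuousOn.integrableOn_Icc).mono_set Ioo_subset_Icc_self
  have hDi : IntegrableOn (fun s => gnW q m s / G s) (Ioo 0 1) :=
    hgi.congr_fun (fun s hs => (hWG s hs).symm) measurableSet_Ioo
  have hsub : ∀ s ∈ Ioo (0:ℝ) 1, |s| ^ (m + 1) / G s = |s| ^ (q + 1) / G s - gnW q m s / G s := by
    intro s hs
    rw [← sub_div, hWs s hs, abs_of_pos hs.1]; ring
  have hAi : IntegrableOn (fun s => |s| ^ (m + 1) / G s) (Ioo 0 1) :=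
    (hBi.sub hDi).congr_fun (fun s hs => (hsub s hs).symm) measurableSet_Ioo
  have hint : IntervalIntegrable (fun s => 1 / G s) volume (1/2) 1 := by
    have h1 : IntervalIntegrable (fun s => |s| ^ (q + 1) / G s) volume (1/2) 1 :=
      (intervalIntegrable_iff_integrableOn_Ioo_of_le (by norm_num)).2
        (hBi.mono_set (Ioo_subset_Ioo_left (by norm_num)))
    have h2 : ContinuousOn (fun s : ℝ => (|s| ^ (q + 1))⁻¹) (uIcc (1/2) 1) := by
      refine ContinuousOn.inv₀ (continuous_abs.rpow_const fun x => Or.inr hq1.le).continuousOn ?_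
      intro s hs
      rw [uIcc_of_le (by norm_num)] at hs
      have : 0 < |s| := abs_pos.2 (by linarith [hs.1])
      positivity
    have h3 := h1.mul_continuousOn h2
    refine h3.congr_ae ?_
    refine (ae_restrict_iff' measurableSet_uIoc).2 (Eventually.of_forall fun s hs => ?_)
    rw [uIoc_of_le (by norm_num)] at hs
    have : 0 < |s| := abs_pos.2 (by linarith [hs.1])
    have h4 : |s| ^ (q + 1) ≠ 0 := by positivity
    simp only
    field_simp
  obtain ⟨h, T, hd, hneg, hlt1, h0, hTd, hTi, hTp, hhT, hTh⟩ := gn_ode G hGc hG0 hG1 hGpos hint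
  have cov := fun F => gn_cov G h T F hGpos hlt1 h0 hTd hTi hTp hhT hTh
  have hhc : Continuous h := continuous_iff_continuousAt.2 fun x => (hd x).continuousAt
  set u : ℝ → ℝ := fun x => h x + h (-x) - 1 with hu
  have hua : ∀ x, u x = h |x| := by
    intro x
    simp only [hu]
    rcases le_total 0 x with hx | hx
    · rw [abs_of_nonneg hx, hneg (-x) (by linarith)]; ring
    · rw [abs_of_nonpos hx, hneg x hx]; ring
  have hud : ∀ x, HasDerivAt u (-G (h x) + G (h (-x))) x := by
    intro x
    have h1 := (hd (-x)).comp x (hasDerivAt_neg x)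
    have h2 := ((hd x).add h1).sub_const 1
    convert! h2 using 1
    ring
  have hde : deriv u = fun x => -G (h x) + G (h (-x)) := by ext x; exact (hud x).deriv
  have hdabs : ∀ x, |deriv u x| ^ p = gnW q m (h |x|) := by
    intro x
    rw [hde, ← hGp]
    congr 1
    simp only
    rcases le_total 0 x with hx | hx
    · rw [abs_of_nonneg hx, hneg (-x) (by linarith), hG1, add_zero, abs_neg, abs_of_nonneg (hGn _)]
    · rw [abs_of_nonpos hx, hneg x hx, hG1, neg_zero, zero_add, abs_of_nonneg (hGn _)]
  have hcd : ContDiff ℝ 1 u := by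
    rw [contDiff_one_iff_deriv]
    refine ⟨fun x => (hud x).differentiableAt, ?_⟩
    rw [hde]
    exact (hGc.comp hhc).neg.add (hGc.comp (hhc.comp continuous_neg))
  obtain ⟨iB, eB⟩ := cov (fun s => |s| ^ (q + 1)) (by simp [Real.zero_rpow hq1.ne']) hBi
  obtain ⟨iA, eA⟩ := cov (fun s => |s| ^ (m + 1)) (by simp [Real.zero_rpow hm1.ne']) hAi
  obtain ⟨iD, eD⟩ := cov (fun s => gnW q m s) hW0 hDi
  have eK : ∫ s in Ioo (0:ℝ) 1, gnW q m s / G s = gnK p q m := by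
    rw [setIntegral_congr_fun measurableSet_Ioo hWG, gnK,
      intervalIntegral.integral_of_le zero_le_one, integral_Ioc_eq_integral_Ioo]
  have eA' : ∫ s in Ioo (0:ℝ) 1, |s| ^ (m + 1) / G s =
      (∫ s in Ioo (0:ℝ) 1, |s| ^ (q + 1) / G s) - gnK p q m := by
    rw [setIntegral_congr_fun measurableSet_Ioo hsub, integral_sub hBi hDi, eK]
  have hpoh : (1 + (p - 1) / p * (m + 1)) * gnK p q m -
      (p - 1) / p * (m - q) * ∫ s in Ioo (0:ℝ) 1, |s| ^ (q + 1) / G s = 0 := by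
    set φ : ℝ → ℝ := fun s => s * (s ^ (q + 1) - s ^ (m + 1)) ^ ((p - 1) / p) with hφ
    set φ' : ℝ → ℝ := fun s => (1 + (p - 1) / p * (m + 1)) * g s -
      (p - 1) / p * (m - q) * (|s| ^ (q + 1) / G s) with hφ'
    have hφc : Continuous φ := by
      refine continuous_id.mul (Continuous.rpow_const ?_ fun x => Or.inr hσ.le)
      exact (continuous_id.rpow_const fun x => Or.inr hq1.le).sub
        (continuous_id.rpow_const fun x => Or.inr hm1.le)
    have hφd : ∀ s ∈ Ioo (0:ℝ) 1, HasDerivAt φ (φ' s) s := by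
      intro s hs
      have hs0 := hs.1
      have hw := hWpos s hs
      have hGs := hGpos s hs
      rw [hWs s hs] at hw
      have d1 := ((Real.hasDerivAt_rpow_const (x := s) (p := q + 1) (Or.inl hs0.ne')).sub
        (Real.hasDerivAt_rpow_const (x := s) (p := m + 1) (Or.inl hs0.ne')))
      have d2 := (hasDerivAt_id s).mul (d1.rpow_const (p := (p - 1) / p) (Or.inl hw.ne'))
      have e1 : (s ^ (q + 1) - s ^ (m + 1)) ^ ((p - 1) / p - 1) = 1 / G s := by
        simp only [hG]
        rw [hWs s hs, one_div, ← Real.rpow_neg hw.le]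
        congr 1; field_simp; ring
      have e2 : (s ^ (q + 1) - s ^ (m + 1)) ^ ((p - 1) / p) = g s := by
        simp only [hg]; rw [hWs s hs]
      have e3 : s ^ (m + 1) / G s = s ^ (q + 1) / G s - g s := by
        have := hsub s hs
        rwa [hWG s hs, abs_of_pos hs0] at this
      have e4 : s * s ^ (q + 1 - 1) = s ^ (q + 1) := by
        rw [Real.rpow_sub_one hs0.ne']; field_simp
      have e5 : s * s ^ (m + 1 - 1) = s ^ (m + 1) := by
        rw [Real.rpow_sub_one hs0.ne']; field_simp
      refine HasDerivAt.congr_deriv d2 ?_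
      simp only [hφ', id, Pi.sub_apply, one_mul]
      rw [e1, e2, abs_of_pos hs0]
      have e6 : s * (((q + 1) * s ^ (q + 1 - 1) - (m + 1) * s ^ (m + 1 - 1)) * ((p - 1) / p) * (1 / G s))
        = (p - 1) / p * ((q + 1) * ((s * s ^ (q + 1 - 1)) / G s)
          - (m + 1) * ((s * s ^ (m + 1 - 1)) / G s)) := by ring
      rw [e6, e4, e5, e3]
      ring
    have hφ'i : IntegrableOn φ' (Ioo 0 1) := (hgi.const_mul _).sub (hBi.const_mul _)
    have := intervalIntegral.integral_eq_sub_of_hasDerivAt_of_le zero_le_one hφc.continuousOn hφd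
      ((intervalIntegrable_iff_integrableOn_Ioo_of_le zero_le_one).2 hφ'i)
    rw [intervalIntegral.integral_of_le zero_le_one, integral_Ioc_eq_integral_Ioo] at this
    simp only [hφ'] at this
    rw [integral_sub (hgi.const_mul _) (hBi.const_mul _), integral_const_mul,
      integral_const_mul, ← setIntegral_congr_fun measurableSet_Ioo hWG, eK] at this
    rw [this]
    simp only [hφ]
    rw [Real.one_rpow, Real.one_rpow, sub_self, Real.zero_rpow hσ.ne']
    ring
  refine ⟨u, hcd, ?_, ?_, ?_, ?_, ?_⟩
  · simp only [hua]; exact iB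
  · simp only [hdabs]; exact iD
  · simp only [hdabs]; rw [eD, eK]
  · simp only [hua]; rw [eB, eA, eA']; ring
  · simp only [hua]; rw [eB, hη₁]
    have : p * ((1 + (p - 1) / p * (m + 1)) * gnK p q m -
      (p - 1) / p * (m - q) * ∫ s in Ioo (0:ℝ) 1, |s| ^ (q + 1) / G s) = 0 := by rw [hpoh, mul_zero]
    have e : p * ((1 + (p - 1) / p * (m + 1)) * gnK p q m -
      (p - 1) / p * (m - q) * ∫ s in Ioo (0:ℝ) 1, |s| ^ (q + 1) / G s) = 
      (p + (p - 1) * (m + 1)) * gnK p q m -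
      (p - 1) * (m - q) * ∫ s in Ioo (0:ℝ) 1, |s| ^ (q + 1) / G s := by field_simp
    linarith



/-- The sharp one-dimensional L^m-type Gagliardo-Nirenberg (Nagy)
inequality `‖u‖_{m+1} ≤ C ‖u‖_{q+1}^{1-θ} ‖u'‖_p^θ`, whose optimal constant is
given explicitly through the complete Beta function. -/
theorem stmt15 (p q m : ℝ) (hp : 1 < p) (hq : 0 < q) (hqm : q < m)
    (η₁ η₂ θ l C : ℝ)
    (hη₁ : η₁ = (p - 1) * (m + 1) + p)
    (hη₂ : η₂ = (p - 1) * (q + 1) + p)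
    (hθ : θ = p * (m - q) / ((m + 1) * η₂))
    (hl : l = (m - q) / ((m + 1) * η₂))
    (hC : C = ((2:ℝ) ^ p * (p - 1) ^ (1 - p) * η₁ ^ (η₁ / (m - q)) *
        (m - q) ^ (1 - 2 * p) * η₂ ^ (-(η₂ / (m - q))) *
        (∫ t in Ioo (0:ℝ) 1,
          t ^ (η₂ / (p * (m - q)) - 1) * (1 - t) ^ ((2 * p - 1) / p - 1)) ^ p) ^ (-l)) :
    (∀ u : ℝ → ℝ, ContDiff ℝ 1 u →
      Integrable (fun x => |u x| ^ (q + 1)) →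
      Integrable (fun x => |deriv u x| ^ p) →
      (∫ x : ℝ, |u x| ^ (m + 1)) ^ (1 / (m + 1)) ≤
        C * (∫ x : ℝ, |u x| ^ (q + 1)) ^ ((1 - θ) / (q + 1)) *
          (∫ x : ℝ, |deriv u x| ^ p) ^ (θ / p)) ∧
    (∀ C' : ℝ, (∀ u : ℝ → ℝ, ContDiff ℝ 1 u →
      Integrable (fun x => |u x| ^ (q + 1)) →
      Integrable (fun x => |deriv u x| ^ p) →
      (∫ x : ℝ, |u x| ^ (m + 1)) ^ (1 / (m + 1)) ≤
        C' * (∫ x : ℝ, |u x| ^ (q + 1)) ^ ((1 - θ) / (q + 1)) *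
          (∫ x : ℝ, |deriv u x| ^ p) ^ (θ / p)) → C ≤ C') := by
  have hBt := gnK_beta p q m η₂ hp hq hqm hη₂
  refine ⟨fun u hu h1 h2 => gn_main p q m hp hq hqm η₁ η₂ θ l C _ hη₁ hη₂ hθ hl hBt hC u hu h1 h2, ?_⟩
  intro C' hC'
  have hKp := gnK_pos p q m hp hq hqm
  obtain ⟨u, hu, h1, h2, eD, eX, eP⟩ := gn_extremal p q m η₁ hp hq hqm hη₁
  have hineq := hC' u hu h1 h2
  have hp1 : 0 < p - 1 := by linarith
  have hn : 0 < m - q := by linarith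
  have hη₂p : 0 < η₂ := by
    rw [hη₂]; have : 0 < (p - 1) * (q + 1) := mul_pos hp1 (by linarith)
    linarith
  have hηη : η₁ = η₂ + (p - 1) * (m - q) := by rw [hη₁, hη₂]; ring
  have hw : 0 < (p - 1) * (m - q) := by positivity
  have hη₁p : 0 < η₁ := by linarith
  have hB : 0 < ∫ x : ℝ, |u x| ^ (q + 1) := by
    have : 0 < (p - 1) * (m - q) * ∫ x, |u x| ^ (q + 1) := by rw [← eP]; positivity
    exact (pos_iff_pos_of_mul_pos this).1 hw
  have hA : 0 < ∫ x : ℝ, |u x| ^ (m + 1) := by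
    have e : η₁ * ∫ x : ℝ, |u x| ^ (m + 1) = η₂ * ∫ x : ℝ, |u x| ^ (q + 1) := by
      have : (∫ x : ℝ, |u x| ^ (m + 1)) = (∫ x : ℝ, |u x| ^ (q + 1)) - 2 * gnK p q m := by linarith
      rw [this, mul_sub, eP, hηη]; ring
    have : 0 < η₁ * ∫ x : ℝ, |u x| ^ (m + 1) := by rw [e]; positivity
    exact (pos_iff_pos_of_mul_pos this).1 hη₁p
  have hD : 0 < ∫ x : ℝ, |deriv u x| ^ p := by rw [eD]; positivity
  have heq := (gn_logC p q m hp hq hqm η₁ η₂ θ l C (gnK p q m) _ _ _ (2 * gnK p q m) _ hη₁ hη₂ hθ hl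
    hKp hBt hC hA hB hD (by positivity) eX.symm).2.2 rfl eD eP
  rw [heq] at hineq
  have hBp : 0 < (∫ x : ℝ, |u x| ^ (q + 1)) ^ ((1 - θ) / (q + 1)) := Real.rpow_pos_of_pos hB _
  have hDp : 0 < (∫ x : ℝ, |deriv u x| ^ p) ^ (θ / p) := Real.rpow_pos_of_pos hD _
  exact le_of_mul_le_mul_right (le_of_mul_le_mul_right hineq hDp) hBp
end
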